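/- arXiv:1712.00469 — 4 statements merged into one kernel-verified Lean document; each statement's English description precedes it below -/
import Mathlib

section
/- The L-structure 𝒜 is finitely generated (there is a finite subset of A whose closure under the interpretations in 𝒜 of all function symbols of L is all of A) if and only if the group G(𝒜) is finitely generated. -/
/-!
Common setup: an `L`-structure `𝒜` for a language whose symbols are enumerated
(`m`-th symbol, `m ≥ 1`, each a function or relation symbol of arity ≥ 1), and the
presented group `G(𝒜)` of Harrison-Trainor and Ho.
-/

/-- A first-order language with symbols enumerated by `ℕ` (the `m`-th symbol, for `m ≥ 1`,
is a function symbol if `isFunc m`, and a relation symbol otherwise, of arity `arity m ≥ 1`),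
together with an interpretation on a domain `A`: `funcInterp m` interprets the `m`-th symbol
when it is a function symbol, and `relInterp m` when it is a relation symbol. -/
structure IndexedStructure where
  A : Type
  arity : ℕ → ℕ
  arity_pos : ∀ m, 1 ≤ m → 1 ≤ arity m
  isFunc : ℕ → Prop
  funcInterp : ∀ m, (Fin (arity m) → A) → A
  relInterp : ∀ m, (Fin (arity m) → A) → Prop

/-- The generating set of `G(𝒜)`: one generator for each element of the domain `A`,
plus five further generators `b`, `c`, `d`, `f₁`, `f₂`. -/
inductive GenSym (A : Type) : Type
  | elt : A → GenSym A
  | b : GenSym A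
  | c : GenSym A
  | d : GenSym A
  | f1 : GenSym A
  | f2 : GenSym A

/-- `chainProd lo x y = x y^{(lo+1)²} x y^{(lo+2)²} ⋯ x y^{(lo+1000)²}`.
So `u_A = chainProd 0`, `u_b = chainProd 1000`, `u_c = chainProd 2000`,
`u_d = chainProd 3000`, and `v = chainProd 4000`. -/
def chainProd {G : Type*} [Group G] (lo : ℕ) (x y : G) : G :=
  ((List.range 1000).map fun k => x * y ^ ((lo + k + 1) ^ 2)).prod

/-- `wProd m xs y = x₁⋯xₙ y^{100m+1} x₁⋯xₙ y^{100m+2} ⋯ x₁⋯xₙ y^{100m+100}`,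
i.e. the word `w_m(x₁,…,xₙ,y)`. -/
def wProd {G : Type*} [Group G] (m : ℕ) {n : ℕ} (xs : Fin n → G) (y : G) : G :=
  ((List.range 100).map fun k => (List.ofFn xs).prod * y ^ (100 * m + k + 1)).prod

/-- The set of relators of the presentation of `G(𝒜)`. -/
def grpRels (S : IndexedStructure) (p₁ p₂ : ℕ) : Set (FreeGroup (GenSym S.A)) :=
  {FreeGroup.of GenSym.f1 ^ p₁, FreeGroup.of GenSym.f2 ^ p₂,
    chainProd 4000 (FreeGroup.of GenSym.f1) (FreeGroup.of GenSym.f2),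
    chainProd 4000 (FreeGroup.of GenSym.f2) (FreeGroup.of GenSym.f1),
    chainProd 1000 (FreeGroup.of GenSym.b) (FreeGroup.of GenSym.f1),
    chainProd 1000 (FreeGroup.of GenSym.b) (FreeGroup.of GenSym.f2),
    chainProd 2000 (FreeGroup.of GenSym.c) (FreeGroup.of GenSym.f1),
    chainProd 2000 (FreeGroup.of GenSym.c) (FreeGroup.of GenSym.f2),
    chainProd 3000 (FreeGroup.of GenSym.d) (FreeGroup.of GenSym.f1),
    chainProd 3000 (FreeGroup.of GenSym.d) (FreeGroup.of GenSym.f2)}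
  ∪ {r | ∃ a : S.A,
      r = chainProd 0 (FreeGroup.of (GenSym.elt a)) (FreeGroup.of GenSym.c) ∨
      r = chainProd 0 (FreeGroup.of (GenSym.elt a)) (FreeGroup.of GenSym.d)}
  ∪ {r | ∃ m, 1 ≤ m ∧ S.isFunc m ∧ ∃ as : Fin (S.arity m) → S.A,
      r = wProd m (fun i => FreeGroup.of (GenSym.elt (as i))) (FreeGroup.of GenSym.b) *
        (FreeGroup.of (GenSym.elt (S.funcInterp m as)))⁻¹}
  ∪ {r | ∃ m, 1 ≤ m ∧ ¬ S.isFunc m ∧ ∃ as : Fin (S.arity m) → S.A,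
      S.relInterp m as ∧
      r = wProd m (fun i => FreeGroup.of (GenSym.elt (as i))) (FreeGroup.of GenSym.b)}

/-- The group `G(𝒜)`, presented on the generators `GenSym A` with relators `grpRels`. -/
abbrev GA (S : IndexedStructure) (p₁ p₂ : ℕ) : Type :=
  PresentedGroup (grpRels S p₁ p₂)

/-- The image in `G(𝒜)` of a generator. -/
def gen (S : IndexedStructure) (p₁ p₂ : ℕ) (g : GenSym S.A) : GA S p₁ p₂ :=
  PresentedGroup.of g

/-!
If `𝒜` is generated by a finite set `s`, then the relators `w_m` write every value of a function
as a word in its arguments and `b`, so the elements of `A` lying in the subgroup generated by `s`,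
`b`, `c`, `d`, `f₁`, `f₂` form a closed set containing `s`, and `G(𝒜)` is finitely generated.

Conversely, suppose that `G(𝒜)` is finitely generated. Then finitely many of its defining generators
generate it; let `B` be a closed set containing the elements of `A` among them. The two embeddings
of `𝒜` into its double along `B` induce homomorphisms from `G(𝒜)` to the group of the double which
agree on these finitely many generators and hence everywhere. As distinct generators stay distinct
in the group of the double, the two embeddings coincide, which means `B = A`.

That distinct generators stay distinct is small cancellation: a common subword of two relators is
shorter than a sixth of either. Build a graph with edges labelled by letters as an increasing union,
where each stage adds, at every vertex, an edge for each missing letter, and an arc closing up each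
relator that starts with a missing letter. Small cancellation keeps the labelling deterministic, and
preserves the invariant that a relator closes up wherever a part of it as long as two maximal pieces
can be read. In the union every relator closes up at every vertex, so the group acts on the
vertices, and distinct generators move the first vertex to distinct vertices.
-/

namespace SmallCancellation

universe u

variable {X : Type u}

/-- A letter of the free group on `X`: a generator together with a sign, as in `FreeGroup.mk`. -/
abbrev Letter (X : Type u) := X × Bool

/-- The formal inverse of a letter. -/
def Letter.inv (a : Letter X) : Letter X := (a.1, !a.2)

@[simp] theorem Letter.inv_inv (a : Letter X) : a.inv.inv = a := by
  simp [Letter.inv]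

theorem Letter.inv_ne_self (a : Letter X) : a.inv ≠ a := fun h => by
  simpa [Letter.inv] using congrArg Prod.snd h

/-- A biinfinite word. A cyclic word of length `L` is encoded by an `L`-periodic line, so that its
cyclic conjugates are the shifts of the line. -/
abbrev Line (X : Type u) := ℤ → Letter X

namespace Line

/-- The line with its origin moved to position `t`. -/
def shift (ρ : Line X) (t : ℤ) : Line X := fun i => ρ (i + t)

/-- The line read backwards from the origin, which encodes the inverse word. -/
def reverse (ρ : Line X) : Line X := fun i => (ρ (-1 - i)).inv

/-- The line read backwards from position `-K`. -/
def flip (ρ : Line X) (K : ℕ) : Line X := ρ.reverse.shift K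

/-- The first `k` letters of the line. -/
def word (ρ : Line X) (k : ℕ) : List (Letter X) := (List.range k).map fun i : ℕ => ρ i

/-- The first `k` letters of the line, latest letter first. -/
def stem (ρ : Line X) : ℕ → List (Letter X)
  | 0 => []
  | k + 1 => ρ k :: stem ρ k

/-- A line without adjacent inverse letters. -/
def IsReduced (ρ : Line X) : Prop := ∀ i, ρ (i + 1) ≠ (ρ i).inv

@[simp] theorem shift_zero (ρ : Line X) : ρ.shift 0 = ρ := by
  funext i
  simp [shift]

theorem shift_shift (ρ : Line X) (s t : ℤ) : (ρ.shift s).shift t = ρ.shift (s + t) := by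
  funext i
  simp only [shift]
  congr 1
  ring

@[simp] theorem reverse_reverse (ρ : Line X) : ρ.reverse.reverse = ρ := by
  funext i
  simp only [reverse, Letter.inv_inv]
  congr 1
  ring

theorem reverse_shift (ρ : Line X) (t : ℤ) : (ρ.shift t).reverse = ρ.reverse.shift (-t) := by
  funext i
  simp only [shift, reverse]
  congr 2
  ring

theorem periodic_reverse {ρ : Line X} {L : ℤ} (hρ : Function.Periodic ρ L) :
    Function.Periodic ρ.reverse L := fun i => by
  rw [reverse, reverse, ← sub_sub, hρ.sub_eq]

theorem IsReduced.reverse {ρ : Line X} (hρ : ρ.IsReduced) : ρ.reverse.IsReduced := fun i h => by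
  refine hρ (-1 - (i + 1)) ?_
  simp only [Line.reverse, Letter.inv_inv] at h
  rw [h]
  congr 1
  ring

theorem flip_apply (ρ : Line X) (K : ℕ) (i : ℤ) : ρ.flip K i = (ρ (-K - 1 - i)).inv := by
  simp only [flip, shift, reverse]
  congr 2
  ring

@[simp] theorem flip_flip (ρ : Line X) (K : ℕ) : (ρ.flip K).flip K = ρ := by
  funext i
  rw [flip_apply, flip_apply, Letter.inv_inv]
  congr 1
  ring

theorem IsReduced.ne_flip {ρ : Line X} (hρ : ρ.IsReduced) (K : ℕ) : ρ ≠ ρ.flip K := by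
  intro h
  obtain ⟨m, hm | hm⟩ := Nat.even_or_odd' K
  · have hcentre := congrFun h (-m)
    rw [flip_apply, show -(K : ℤ) - 1 - -m = -m - 1 by omega] at hcentre
    exact hρ (-m - 1) (by rwa [sub_add_cancel])
  · have hcentre := congrFun h (-m - 1)
    rw [flip_apply, show -(K : ℤ) - 1 - (-m - 1) = -m - 1 by omega] at hcentre
    exact Letter.inv_ne_self _ hcentre.symm

@[simp] theorem length_stem (ρ : Line X) (k : ℕ) : (ρ.stem k).length = k := by
  induction k with
  | zero => rfl
  | succ k ih => simp [stem, ih]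

theorem stem_inj {ρ σ : Line X} {j k : ℕ} (h : ρ.stem j = σ.stem k) :
    j = k ∧ ∀ i : ℕ, i < j → ρ i = σ i := by
  obtain rfl : j = k := by simpa using congrArg List.length h
  refine ⟨rfl, ?_⟩
  induction j with
  | zero => simp
  | succ j ih =>
    obtain ⟨hhead, htail⟩ := List.cons.inj h
    intro i hi
    obtain hij | rfl := Nat.lt_succ_iff_lt_or_eq.mp hi
    · exact ih htail i hij
    · exact hhead

end Line

/-- Two relator lines of length `L` agreeing on this many letters must coincide: this is the
metric condition `C'(1/6)`. -/
def pieceBound (L : ℕ) : ℕ := (L - 1) / 6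

/-- A symmetrized family of cyclically reduced relators satisfying `C'(1/6)`; a cyclic relator of
length `L` is given as an `L`-periodic line. -/
structure RelatorSystem (X : Type u) where
  /-- `IsRelator ρ L`: reading `L` letters of `ρ` is a relator. -/
  IsRelator : Line X → ℕ → Prop
  shift : ∀ {ρ L}, IsRelator ρ L → ∀ t, IsRelator (ρ.shift t) L
  reverse : ∀ {ρ L}, IsRelator ρ L → IsRelator ρ.reverse L
  periodic : ∀ {ρ L}, IsRelator ρ L → Function.Periodic ρ (L : ℤ)
  reduced : ∀ {ρ L}, IsRelator ρ L → ρ.IsReduced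
  large : ∀ {ρ L}, IsRelator ρ L → 13 ≤ L
  piece : ∀ {ρ L σ M}, IsRelator ρ L → IsRelator σ M →
    (∀ i : ℕ, i < pieceBound L → ρ i = σ i) → ρ = σ ∧ L = M

theorem RelatorSystem.two_le_pieceBound (S : RelatorSystem X) {ρ : Line X} {L : ℕ}
    (hρ : S.IsRelator ρ L) : 2 ≤ pieceBound L := by
  have := S.large hρ
  unfold pieceBound
  omega

/-- A graph with edges labelled by letters, closed under reversal of edges, in which distinct edges
leaving a vertex have distinct labels: a partial action of the free group. -/
structure FoldedGraph (X : Type u) where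
  Vertex : Type u
  Edge : Vertex → Letter X → Vertex → Prop
  symm : ∀ {v a w}, Edge v a w → Edge w a.inv v
  det : ∀ {v a w w'}, Edge v a w → Edge v a w' → w = w'

namespace FoldedGraph

variable {Γ : FoldedGraph X} {ρ τ : Line X} {L k l : ℕ} {u v w : Γ.Vertex} {a : Letter X}

theorem det_left (h : Γ.Edge v a u) (h' : Γ.Edge w a u) : v = w :=
  Γ.det (Γ.symm h) (Γ.symm h')

variable (Γ) in
/-- The line `ρ`, read in both directions from `v`, runs around a closed loop of length `L`. -/
def ClosesAt (ρ : Line X) (L : ℕ) (v : Γ.Vertex) : Prop :=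
  ∃ q : ℤ → Γ.Vertex, q 0 = v ∧ (∀ t, Γ.Edge (q t) (ρ t) (q (t + 1))) ∧
    Function.Periodic q (L : ℤ)

variable (Γ) in
/-- The sequence `q` traces out the first `k` letters of `ρ`. -/
def Reads (ρ : Line X) (k : ℕ) (q : ℕ → Γ.Vertex) : Prop :=
  ∀ i : ℕ, i < k → Γ.Edge (q i) (ρ i) (q (i + 1))

variable (Γ) in
/-- The first `k` letters of `ρ` lead from `v` to `w`. -/
def Path (ρ : Line X) (k : ℕ) (v w : Γ.Vertex) : Prop :=
  ∃ q : ℕ → Γ.Vertex, q 0 = v ∧ q k = w ∧ Γ.Reads ρ k q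

variable (Γ) in
/-- No edge labelled `a` leaves `v`. -/
def Missing (v : Γ.Vertex) (a : Letter X) : Prop := ∀ w, ¬ Γ.Edge v a w

theorem ClosesAt.exists_edge (h : Γ.ClosesAt ρ L v) : ∃ w, Γ.Edge v (ρ 0) w := by
  obtain ⟨q, rfl, hq, -⟩ := h
  exact ⟨q (0 + 1), hq 0⟩

theorem ClosesAt.reverse (h : Γ.ClosesAt ρ L v) : Γ.ClosesAt ρ.reverse L v := by
  obtain ⟨q, hq0, hq, hper⟩ := h
  refine ⟨fun t => q (-t), by simpa using hq0, fun t => ?_, fun t => ?_⟩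
  · have hedge := Γ.symm (hq (-1 - t))
    rw [show (-1 - t + 1 : ℤ) = -t by ring] at hedge
    simpa only [Line.reverse, neg_add', sub_eq_add_neg, add_comm] using hedge
  · simpa only [neg_add, neg_neg, ← sub_eq_add_neg] using hper.sub_eq (-t)

theorem closesAt_shift_one_iff (h : Γ.Edge v (ρ 0) w) :
    Γ.ClosesAt (ρ.shift 1) L w ↔ Γ.ClosesAt ρ L v := by
  constructor
  · rintro ⟨q, rfl, hq, hper⟩
    refine ⟨fun t => q (t - 1), ?_, fun t => ?_, fun t => ?_⟩
    · have hprev := hq (-1)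
      simp only [Line.shift, neg_add_cancel] at hprev
      exact Γ.det_left hprev h
    · simpa [Line.shift] using hq (t - 1)
    · simpa only [sub_add_eq_add_sub] using hper (t - 1)
  · rintro ⟨q, rfl, hq, hper⟩
    refine ⟨fun t => q (t + 1), Γ.det (hq 0) h, fun t => hq (t + 1), fun t => ?_⟩
    simpa only [add_right_comm] using hper (t + 1)

theorem Reads.mono {q : ℕ → Γ.Vertex} (hq : Γ.Reads ρ k q) (hlk : l ≤ k) : Γ.Reads ρ l q :=
  fun i hi => hq i (hi.trans_le hlk)

theorem Reads.closesAt_shift_iff {q : ℕ → Γ.Vertex} (hq : Γ.Reads ρ k q) :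
    Γ.ClosesAt (ρ.shift k) L (q k) ↔ Γ.ClosesAt ρ L (q 0) := by
  induction k with
  | zero => simp
  | succ k ih =>
    have hstep : Γ.Edge (q k) (ρ.shift k 0) (q (k + 1)) := by
      simpa [Line.shift] using hq k k.lt_succ_self
    rw [← ih (hq.mono k.le_succ), ← closesAt_shift_one_iff hstep, Line.shift_shift]
    push_cast
    rfl

theorem Reads.eq_of_zero_eq {q q' : ℕ → Γ.Vertex} (h : Γ.Reads ρ k q) (h' : Γ.Reads ρ k q')
    (h0 : q 0 = q' 0) : q k = q' k := by
  induction k with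
  | zero => exact h0
  | succ k ih =>
    have hprev := ih (h.mono k.le_succ) (h'.mono k.le_succ)
    exact Γ.det (h k k.lt_succ_self) (hprev ▸ h' k k.lt_succ_self)

theorem Path.single (h : Γ.Edge v (ρ 0) w) : Γ.Path ρ 1 v w := by
  refine ⟨fun i => if i = 0 then v else w, rfl, rfl, fun i hi => ?_⟩
  obtain rfl : i = 0 := by omega
  simpa using h

theorem Path.append (h : Γ.Path ρ k u v) (h' : Γ.Path (ρ.shift k) l v w) :
    Γ.Path ρ (k + l) u w := by
  obtain ⟨q, rfl, rfl, hq⟩ := h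
  obtain ⟨r, hr0, rfl, hr⟩ := h'
  refine ⟨fun i => if i ≤ k then q i else r (i - k), by simp, ?_, fun i hi => ?_⟩
  · obtain rfl | hl := Nat.eq_zero_or_pos l
    · simpa using hr0.symm
    · simp [hl.ne']
  · obtain hik | rfl | hik := lt_trichotomy i k
    · simpa [hik.le, Nat.succ_le_iff.mpr hik] using hq i hik
    · simpa [Line.shift, hr0] using hr 0 (by omega)
    · have hedge := hr (i - k) (by omega)
      rw [Line.shift, show ((i - k : ℕ) : ℤ) + k = i by omega, ← Nat.sub_add_comm hik.le] at hedge
      simpa [hik.not_ge, show ¬ i + 1 ≤ k by omega] using hedge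

theorem Path.reverse (h : Γ.Path τ k v w) (hρ : ∀ i : ℕ, i < k → ρ i = (τ (k - 1 - i)).inv) :
    Γ.Path ρ k w v := by
  obtain ⟨q, hq0, hqk, hq⟩ := h
  refine ⟨fun i => q (k - i), by simpa using hqk, by simpa using hq0, fun i hi => ?_⟩
  have hedge := Γ.symm (hq (k - (i + 1)) (by omega))
  rwa [show k - (i + 1) + 1 = k - i by omega,
    show ((k - (i + 1) : ℕ) : ℤ) = k - 1 - i by omega, ← hρ i hi] at hedge

theorem Path.closesAt (h : Γ.Path ρ L v v) (hL : 0 < L) (hρ : Function.Periodic ρ (L : ℤ)) :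
    Γ.ClosesAt ρ L v := by
  obtain ⟨q, hq0, hqL, hq⟩ := h
  have hL' : (0 : ℤ) < L := by exact_mod_cast hL
  refine ⟨fun t => q (t % L).toNat, by simpa using hq0, fun t => ?_, fun t => ?_⟩
  · have hr0 := Int.emod_nonneg t hL'.ne'
    have hrL := Int.emod_lt_of_pos t hL'
    have hedge := hq (t % L).toNat (by omega)
    have hletter : ρ ((t % L).toNat : ℤ) = ρ t := by
      rw [Int.toNat_of_nonneg hr0, Int.emod_def, mul_comm]
      exact hρ.sub_int_mul_eq _
    suffices hsucc : q ((t + 1) % L).toNat = q ((t % L).toNat + 1) by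
      simpa only [hsucc, ← hletter] using hedge
    rw [← Int.emod_add_emod]
    obtain hlast | hlast := eq_or_ne (t % L + 1) L
    · rw [hlast, Int.emod_self, show (t % L).toNat + 1 = L by omega, hqL]
      exact hq0
    · rw [Int.emod_eq_of_lt (by omega) (by omega)]
      congr 1
      omega
  · simp only [Int.add_emod_right]

theorem exists_reads_or_missing (ρ : Line X) (w : Γ.Vertex) (k : ℕ) :
    (∃ q, q 0 = w ∧ Γ.Reads ρ k q) ∨ ∃ j < k, ∃ v, Γ.Path ρ j w v ∧ Γ.Missing v (ρ j) := by
  induction k with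
  | zero => exact .inl ⟨fun _ => w, rfl, fun i hi => absurd hi i.not_lt_zero⟩
  | succ k ih =>
    obtain ⟨q, hq0, hq⟩ | ⟨j, hj, hmissing⟩ := ih
    · by_cases hmissing : Γ.Missing (q k) (ρ k)
      · exact .inr ⟨k, k.lt_succ_self, q k, ⟨q, hq0, rfl, hq⟩, hmissing⟩
      · obtain ⟨v, hv⟩ : ∃ v, Γ.Edge (q k) (ρ k) v := by simpa [Missing] using hmissing
        obtain ⟨r, hr0, -, hr⟩ := Path.append ⟨q, hq0, rfl, hq⟩
          (Path.single (ρ := ρ.shift k) (by simpa [Line.shift] using hv))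
        exact .inl ⟨r, hr0, hr⟩
    · exact .inr ⟨j, by omega, hmissing⟩

end FoldedGraph

/-! ### Attaching arcs -/

section Extension

open FoldedGraph

variable {S : RelatorSystem X} {Γ : FoldedGraph X} {ρ τ : Line X} {L M K j k : ℕ}
  {v w : Γ.Vertex} {a b : Letter X}

open Classical in
/-- The part of a missing arc of length `L - K` which is attached at its initial vertex. The arc is
cut in the middle, leaving out one edge; the well-order decides which end gets the longer half, so
that `ρ` and `ρ.flip K`, which describe the same arc, are cut at the same place. -/
noncomputable def armLength (ρ : Line X) (L K : ℕ) : ℕ :=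
  if WellOrderingRel ρ (ρ.flip K) then (L - K - 1) / 2 else (L - K - 1) - (L - K - 1) / 2

theorem armLength_add_armLength_flip (hρ : ρ.IsReduced) (L K : ℕ) :
    armLength ρ L K + armLength (ρ.flip K) L K = L - K - 1 := by
  unfold armLength
  rw [Line.flip_flip]
  obtain h | h | h := trichotomous_of (WellOrderingRel (α := Line X)) ρ (ρ.flip K)
  · rw [if_pos h, if_neg (asymm h)]
    omega
  · exact absurd h (hρ.ne_flip K)
  · rw [if_neg (asymm h), if_pos h]
    omega

theorem half_le_armLength (ρ : Line X) (L K : ℕ) : (L - K - 1) / 2 ≤ armLength ρ L K := by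
  unfold armLength
  split_ifs <;> omega

/-- The relator `ρ` cannot be read at `w`; read backwards from `w` it can be followed for exactly
`K` letters, up to `v`. Closing the relator requires a new arc of length `L - K` from `w` to `v`. -/
structure Attachment (S : RelatorSystem X) (Γ : FoldedGraph X) (w : Γ.Vertex) (ρ : Line X)
    (L K : ℕ) (v : Γ.Vertex) : Prop where
  isRelator : S.IsRelator ρ L
  missing : Γ.Missing w (ρ 0)
  path : Γ.Path ρ.reverse K w v
  missing_end : Γ.Missing v (ρ.reverse K)
  lt : K < 2 * pieceBound L

namespace Attachment

theorem flip (h : Attachment S Γ w ρ L K v) : Attachment S Γ v (ρ.flip K) L K w where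
  isRelator := S.shift (S.reverse h.isRelator) _
  missing := by simpa [Line.flip, Line.shift] using h.missing_end
  path := h.path.reverse fun i _ => by
    rw [Line.reverse, Line.flip_apply, Line.reverse]
    congr 3
    ring
  missing_end := by
    have hend : (ρ.flip K).reverse K = ρ 0 := by
      rw [Line.reverse, Line.flip_apply, Letter.inv_inv]
      congr 1
      ring
    exact hend ▸ h.missing
  lt := h.lt

theorem le_of_attachment {ρ : Line X} {L L' K K' : ℕ} {v v' : Γ.Vertex}
    (h : Attachment S Γ w ρ L K v) (h' : Attachment S Γ w ρ L' K' v') : K' ≤ K := by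
  by_contra! hlt
  obtain ⟨q, hq0, rfl, hq⟩ := h.path
  obtain ⟨r, hr0, -, hr⟩ := h'.path
  have hqr := hq.eq_of_zero_eq (hr.mono hlt.le) (hq0.trans hr0.symm)
  exact h.missing_end _ (hqr ▸ hr K hlt)

theorem unique {ρ : Line X} {L L' K K' : ℕ} {v v' : Γ.Vertex} (h : Attachment S Γ w ρ L K v)
    (h' : Attachment S Γ w ρ L' K' v') : K = K' ∧ v = v' := by
  obtain rfl := le_antisymm (h'.le_of_attachment h) (h.le_of_attachment h')
  obtain ⟨q, hq0, rfl, hq⟩ := h.path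
  obtain ⟨r, hr0, rfl, hr⟩ := h'.path
  exact ⟨rfl, hq.eq_of_zero_eq hr (hq0.trans hr0.symm)⟩

theorem armLength_add (h : Attachment S Γ w ρ L K v) :
    armLength ρ L K + 1 + armLength (ρ.flip K) L K + K = L := by
  have hlarge := S.large h.isRelator
  have hlt := h.lt
  have hadd := armLength_add_armLength_flip (S.reduced h.isRelator) L K
  unfold pieceBound at hlt
  omega

theorem two_mul_pieceBound_le_armLength (h : Attachment S Γ w ρ L K v) :
    2 * pieceBound L ≤ armLength ρ L K := by
  have hlarge := S.large h.isRelator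
  have hlt := h.lt
  have hhalf := half_le_armLength ρ L K
  unfold pieceBound at *
  omega

theorem armLength_pos (h : Attachment S Γ w ρ L K v) : 0 < armLength ρ L K := by
  have := S.two_le_pieceBound h.isRelator
  have := h.two_mul_pieceBound_le_armLength
  omega

theorem flip_eq_inv (h : Attachment S Γ w ρ L K v) {s t : ℤ} (hst : s + t + K + 1 = L) :
    ρ.flip K s = (ρ t).inv := by
  rw [Line.flip_apply, ← S.periodic h.isRelator]
  congr 2
  omega

end Attachment

variable (S Γ) in
/-- The words labelling the new vertices attached at `w`: a missing letter, or an initial part of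
an arm. -/
def IsStem (w : Γ.Vertex) (u : List (Letter X)) : Prop :=
  (∃ a, u = [a] ∧ Γ.Missing w a) ∨
  ∃ ρ L K v j, Attachment S Γ w ρ L K v ∧ 1 ≤ j ∧ j ≤ armLength ρ L K ∧ u = ρ.stem j

/-- The vertices of the extension of `Γ`: a vertex of `Γ`, and the word leading from it to the new
vertex. Words which are not stems give isolated vertices. -/
abbrev ExtVertex (Γ : FoldedGraph X) := Γ.Vertex × List (Letter X)

variable (Γ) in
/-- An edge of `Γ`, seen in the extension. -/
def OldEdge (x : ExtVertex Γ) (a : Letter X) (y : ExtVertex Γ) : Prop :=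
  x.2 = [] ∧ y.2 = [] ∧ Γ.Edge x.1 a y.1

variable (S Γ) in
/-- An edge along a stem, directed away from `Γ`. -/
def Descends (x : ExtVertex Γ) (a : Letter X) (y : ExtVertex Γ) : Prop :=
  x.1 = y.1 ∧ y.2 = a :: x.2 ∧ IsStem S Γ x.1 y.2

variable (S Γ) in
/-- The edge joining the tips of the two arms of an arc. -/
def Bridge (x : ExtVertex Γ) (a : Letter X) (y : ExtVertex Γ) : Prop :=
  ∃ ρ L K, Attachment S Γ x.1 ρ L K y.1 ∧ x.2 = ρ.stem (armLength ρ L K) ∧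
    a = ρ (armLength ρ L K) ∧ y.2 = (ρ.flip K).stem (armLength (ρ.flip K) L K)

variable (S Γ) in
/-- The edges of the extension of `Γ`. -/
def ExtEdge (x : ExtVertex Γ) (a : Letter X) (y : ExtVertex Γ) : Prop :=
  OldEdge Γ x a y ∨ Descends S Γ x a y ∨ Descends S Γ y a.inv x ∨ Bridge S Γ x a y

theorem Attachment.isStem (h : Attachment S Γ w ρ L K v) (hj : 1 ≤ j)
    (hj' : j ≤ armLength ρ L K) : IsStem S Γ w (ρ.stem j) :=
  .inr ⟨ρ, L, K, v, j, h, hj, hj', rfl⟩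

theorem Attachment.eq_of_stem_eq {σ : Line X} {L' K' j' : ℕ} {v' : Γ.Vertex}
    (h : Attachment S Γ w ρ L K v) (hj : pieceBound L ≤ j) (h' : Attachment S Γ w σ L' K' v')
    (hstem : ρ.stem j = σ.stem j') : ρ = σ ∧ L = L' ∧ K = K' ∧ v = v' ∧ j = j' := by
  obtain ⟨rfl, hagree⟩ := Line.stem_inj hstem
  obtain ⟨rfl, rfl⟩ := S.piece h.isRelator h'.isRelator fun i hi => hagree i (by omega)
  obtain ⟨rfl, rfl⟩ := h.unique h'
  simp

theorem Attachment.eq_of_isStem_cons (h : Attachment S Γ w ρ L K v) (hj : pieceBound L ≤ j)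
    (hstem : IsStem S Γ w (a :: ρ.stem j)) : a = ρ j ∧ j < armLength ρ L K := by
  have hbound := S.two_le_pieceBound h.isRelator
  obtain ⟨b, hb, -⟩ | ⟨σ, L', K', v', _ | i, h', hpos, hle, hσ⟩ := hstem
  · have : j = 0 := by simpa using congrArg List.length hb
    omega
  · omega
  · obtain ⟨rfl, htail⟩ := List.cons.inj hσ
    obtain ⟨rfl, rfl, rfl, rfl, rfl⟩ := h.eq_of_stem_eq hj h' htail
    exact ⟨rfl, hle⟩

theorem IsStem.ne_inv {u : List (Letter X)} (h : IsStem S Γ w (a :: b :: u)) : a ≠ b.inv := by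
  obtain ⟨c, hc, -⟩ | ⟨ρ, L, K, v, _ | _ | j, h, hpos, -, hρ⟩ := h
  · simp at hc
  · omega
  · simp [Line.stem] at hρ
  · simp only [Line.stem, List.cons.injEq] at hρ
    rw [hρ.1, hρ.2.1]
    exact S.reduced h.isRelator j

theorem IsStem.missing (h : IsStem S Γ w [a]) : Γ.Missing w a := by
  obtain ⟨b, hb, hmissing⟩ | ⟨ρ, L, K, v, _ | _ | j, h, hpos, -, hρ⟩ := h
  · rwa [List.singleton_inj.mp hb]
  · omega
  · simp only [Line.stem, List.cons.injEq, and_true] at hρ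
    rw [hρ]
    exact h.missing
  · simp [Line.stem] at hρ

section Edges

variable {x y z : ExtVertex Γ}

theorem Bridge.symm (h : Bridge S Γ x a y) : Bridge S Γ y a.inv x := by
  obtain ⟨ρ, L, K, h, hx, rfl, hy⟩ := h
  refine ⟨ρ.flip K, L, K, h.flip, hy, ?_, by rwa [Line.flip_flip]⟩
  have hadd := h.armLength_add
  exact (h.flip_eq_inv (by omega)).symm

theorem Bridge.ne_nil (h : Bridge S Γ x a y) : x.2 ≠ [] := by
  obtain ⟨ρ, L, K, h, hx, -, -⟩ := h
  rw [hx, Ne, ← List.length_eq_zero_iff, Line.length_stem]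
  exact h.armLength_pos.ne'

theorem Bridge.unique (h : Bridge S Γ x a y) (h' : Bridge S Γ x b z) : a = b ∧ y = z := by
  obtain ⟨ρ, L, K, h, hx, rfl, hy⟩ := h
  obtain ⟨σ, L', K', h', hx', rfl, hz⟩ := h'
  obtain ⟨rfl, rfl, rfl, hyz, -⟩ := h.eq_of_stem_eq
    (by have := h.two_mul_pieceBound_le_armLength; omega) h' (hx.symm.trans hx')
  exact ⟨rfl, Prod.ext hyz (hy.trans hz.symm)⟩

theorem Descends.not_bridge (h : Descends S Γ x a y) (h' : Bridge S Γ x b z) : False := by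
  obtain ⟨ρ, L, K, h', hx, -, -⟩ := h'
  obtain ⟨-, hy, hstem⟩ := h
  rw [hy, hx] at hstem
  exact (h'.eq_of_isStem_cons (by have := h'.two_mul_pieceBound_le_armLength; omega) hstem).2.false

theorem Descends.bridge_ne_inv (h : Descends S Γ y b x) (h' : Bridge S Γ x a z) : a ≠ b.inv := by
  obtain ⟨ρ, L, K, h', hx, rfl, -⟩ := h'
  obtain ⟨-, hb, -⟩ := h
  obtain ⟨i, hi⟩ := Nat.exists_eq_succ_of_ne_zero h'.armLength_pos.ne'
  rw [hx, hi, Line.stem, List.cons.injEq] at hb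
  rw [hi, ← hb.1]
  exact_mod_cast S.reduced h'.isRelator i

theorem OldEdge.not_descends (h : OldEdge Γ x a y) (h' : Descends S Γ x a z) : False := by
  obtain ⟨hx, -, hedge⟩ := h
  obtain ⟨-, hz, hstem⟩ := h'
  rw [hz, hx] at hstem
  exact hstem.missing _ hedge

theorem Descends.ne_nil (h : Descends S Γ x a y) : y.2 ≠ [] := by
  simp [h.2.1]

theorem Descends.ne_inv (h : Descends S Γ x a y) (h' : Descends S Γ y b z) : b ≠ a.inv := by
  obtain ⟨-, hz, hstem⟩ := h'
  rw [hz, h.2.1] at hstem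
  exact hstem.ne_inv

theorem Descends.left_unique (h : Descends S Γ x a z) (h' : Descends S Γ y b z) :
    a = b ∧ x = y := by
  obtain ⟨hab, hxy⟩ := List.cons.inj (h.2.1.symm.trans h'.2.1)
  exact ⟨hab, Prod.ext (h.1.trans h'.1.symm) hxy⟩

theorem ExtEdge.symm (h : ExtEdge S Γ x a y) : ExtEdge S Γ y a.inv x := by
  obtain ⟨hx, hy, hedge⟩ | h | h | h := h
  · exact .inl ⟨hy, hx, Γ.symm hedge⟩
  · exact .inr (.inr (.inl (by rwa [Letter.inv_inv])))
  · exact .inr (.inl h)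
  · exact .inr (.inr (.inr h.symm))

theorem ExtEdge.det (h : ExtEdge S Γ x a y) (h' : ExtEdge S Γ x a z) : y = z := by
  obtain h | h | h | h := h <;> obtain h' | h' | h' | h' := h'
  · exact Prod.ext (Γ.det h.2.2 h'.2.2) (h.2.1.trans h'.2.1.symm)
  · exact (h.not_descends h').elim
  · exact absurd h.1 h'.ne_nil
  · exact absurd h.1 h'.ne_nil
  · exact (h'.not_descends h).elim
  · exact Prod.ext (h.1.symm.trans h'.1) (h.2.1.trans h'.2.1.symm)
  · exact absurd a.inv_inv.symm (h'.ne_inv h)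
  · exact (h.not_bridge h').elim
  · exact absurd h'.1 h.ne_nil
  · exact absurd a.inv_inv.symm (h.ne_inv h')
  · exact (h.left_unique h').2
  · exact absurd a.inv_inv.symm (h.bridge_ne_inv h')
  · exact absurd h'.1 h.ne_nil
  · exact (h'.not_bridge h).elim
  · exact absurd a.inv_inv.symm (h'.bridge_ne_inv h)
  · exact (h.unique h').2

theorem ExtEdge.descends_or_bridge (h : ExtEdge S Γ x a y) (hx : x.2 ≠ [])
    (hdown : ¬ Descends S Γ y a.inv x) : Descends S Γ x a y ∨ Bridge S Γ x a y := by
  obtain h | h | h | h := h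
  · exact absurd h.1 hx
  · exact .inl h
  · exact absurd h hdown
  · exact .inr h

end Edges

variable (S Γ) in
/-- The graph obtained from `Γ` by attaching, at every vertex, an arc for every relator which
cannot be read there, and an edge for every missing letter. -/
def extension : FoldedGraph X where
  Vertex := ExtVertex Γ
  Edge := ExtEdge S Γ
  symm := ExtEdge.symm
  det := ExtEdge.det

theorem extension_path (h : Γ.Path ρ k v w) :
    (extension S Γ).Path ρ k (v, []) (w, []) := by
  obtain ⟨q, rfl, rfl, hq⟩ := h
  exact ⟨fun i => (q i, []), rfl, rfl, fun i hi => .inl ⟨rfl, rfl, hq i hi⟩⟩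

theorem extension_closesAt (h : Γ.ClosesAt ρ L v) :
    (extension S Γ).ClosesAt ρ L (v, []) := by
  obtain ⟨q, rfl, hq, hper⟩ := h
  exact ⟨fun t => (q t, []), rfl, fun t => .inl ⟨rfl, rfl, hq t⟩, hper.comp (·, [])⟩

theorem Attachment.reads_arm (h : Attachment S Γ w ρ L K v) (hj : j ≤ armLength ρ L K) :
    (extension S Γ).Reads ρ j fun i => (w, ρ.stem i) :=
  fun _ _ => .inr (.inl ⟨rfl, rfl, h.isStem (by omega) (by omega)⟩)

theorem Attachment.closesAt (h : Attachment S Γ w ρ L K v) :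
    (extension S Γ).ClosesAt ρ L (w, []) := by
  set m := armLength ρ L K with hm
  set m' := armLength (ρ.flip K) L K
  have hlength : m + 1 + m' + K = L := h.armLength_add
  have hdown : (extension S Γ).Path ρ m (w, []) (w, ρ.stem m) :=
    ⟨_, rfl, rfl, h.reads_arm le_rfl⟩
  have hbridge : (extension S Γ).Path (ρ.shift m) 1 (w, ρ.stem m) (v, (ρ.flip K).stem m') :=
    .single (.inr (.inr (.inr ⟨ρ, L, K, h, rfl, by simp [Line.shift, hm], rfl⟩)))
  have hup : (extension S Γ).Path (ρ.shift (m + 1 : ℕ)) m' (v, (ρ.flip K).stem m') (v, []) :=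
    Path.reverse ⟨_, rfl, rfl, h.flip.reads_arm le_rfl⟩ fun i _ => by
      rw [h.flip_eq_inv (t := i + (m + 1 : ℕ)) (by push_cast [← hlength]; ring), Letter.inv_inv]
      rfl
  have hold : (extension S Γ).Path (ρ.shift (m + 1 + m' : ℕ)) K (v, []) (w, []) := by
    refine extension_path (h.path.reverse fun i _ => ?_)
    rw [Line.reverse, Letter.inv_inv, ← S.periodic h.isRelator, Line.shift]
    congr 1
    push_cast [← hlength]
    ring
  refine Path.closesAt ?_ (by omega) (S.periodic h.isRelator)
  exact hlength ▸ ((hdown.append hbridge).append hup).append hold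

theorem Attachment.closesAt_stem (h : Attachment S Γ w ρ L K v) (hj : j ≤ armLength ρ L K) :
    (extension S Γ).ClosesAt (ρ.shift j) L (w, ρ.stem j) :=
  (h.reads_arm hj).closesAt_shift_iff.2 h.closesAt

variable (S Γ) in
/-- Every relator which can be read for two maximal pieces closes up. -/
def LongReadsClose : Prop :=
  ∀ ρ L, S.IsRelator ρ L → ∀ k q, 2 * pieceBound L ≤ k → Γ.Reads ρ k q → Γ.ClosesAt ρ L (q 0)

theorem LongReadsClose.exists_attachment (hΓ : LongReadsClose S Γ) (hρ : S.IsRelator ρ L)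
    (hmissing : Γ.Missing w (ρ 0)) : ∃ K v, Attachment S Γ w ρ L K v := by
  obtain ⟨q, rfl, hq⟩ | ⟨K, hK, v, hpath, hend⟩ :=
    exists_reads_or_missing ρ.reverse w (2 * pieceBound L)
  · have hclosed := (hΓ _ _ (S.reverse hρ) _ q le_rfl hq).reverse
    rw [Line.reverse_reverse] at hclosed
    obtain ⟨v, hv⟩ := hclosed.exists_edge
    exact absurd hv (hmissing v)
  · exact ⟨K, v, hρ, hmissing, hpath, hend, hK⟩

theorem LongReadsClose.closesAt_extension (hΓ : LongReadsClose S Γ) (hρ : S.IsRelator ρ L)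
    (v : Γ.Vertex) : (extension S Γ).ClosesAt ρ L (v, []) := by
  obtain ⟨q, rfl, hq⟩ | ⟨j, -, w, hpath, hend⟩ :=
    exists_reads_or_missing ρ v (2 * pieceBound L)
  · exact extension_closesAt (hΓ _ _ hρ _ q le_rfl hq)
  · obtain ⟨K, u, h⟩ := hΓ.exists_attachment (S.shift hρ j) (w := w)
      (by simpa [Line.shift] using hend)
    obtain ⟨r, hr0, hrj, hr⟩ := extension_path (S := S) hpath
    rw [← hr0, ← hr.closesAt_shift_iff, hrj]
    exact h.closesAt

theorem eq_of_descends {q : ℕ → ExtVertex Γ} {c : ℕ}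
    (hq : ∀ i < c, Descends S Γ (q i) (τ i) (q (i + 1))) (hc : q c = (w, ρ.stem k)) :
    c ≤ k ∧ q 0 = (w, ρ.stem (k - c)) ∧ ∀ i : ℕ, i < c → τ i = ρ.shift (k - c : ℕ) i := by
  induction c generalizing k with
  | zero => simpa using hc
  | succ c ih =>
    obtain ⟨hbase, hcons, -⟩ := hq c c.lt_succ_self
    rw [hc] at hbase hcons
    obtain _ | k := k
    · simp [Line.stem] at hcons
    obtain ⟨hletter, hstem⟩ := List.cons.inj hcons
    obtain ⟨hle, hq0, hagree⟩ := ih (k := k) (fun i hi => hq i (by omega))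
      (Prod.ext hbase hstem.symm)
    rw [Nat.add_sub_add_right]
    refine ⟨by omega, hq0, fun i hi => ?_⟩
    obtain hic | rfl := Nat.lt_succ_iff_lt_or_eq.mp hi
    · exact hagree i hic
    · rw [← hletter, Line.shift]
      congr 1
      omega

theorem eq_of_ascends {q : ℕ → ExtVertex Γ} {c : ℕ}
    (hq : ∀ i < c, Descends S Γ (q (i + 1)) (τ i).inv (q i)) (h0 : (q 0).2 = ρ.stem k) :
    c ≤ k ∧ (q c).2 = ρ.stem (k - c) ∧ ∀ i : ℕ, i < c → τ i = (ρ.shift k).reverse i := by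
  induction c with
  | zero => simpa using h0
  | succ c ih =>
    obtain ⟨hle, hstem, hagree⟩ := ih fun i hi => hq i (by omega)
    obtain ⟨-, hcons, -⟩ := hq c c.lt_succ_self
    rw [hstem] at hcons
    obtain hkc | ⟨j, hkc⟩ := Nat.eq_zero_or_pos (k - c) |>.imp_right Nat.exists_eq_add_of_lt
    · simp [hkc, Line.stem] at hcons
    rw [hkc] at hcons
    obtain ⟨hletter, htail⟩ := List.cons.inj hcons
    refine ⟨by omega, by rw [← htail]; congr 1; omega, fun i hi => ?_⟩
    obtain hic | rfl := Nat.lt_succ_iff_lt_or_eq.mp hi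
    · exact hagree i hic
    · rw [← Letter.inv_inv (τ i), ← hletter, Line.reverse, Line.shift]
      congr 2
      omega

theorem eq_of_leaves_tip (hτ : τ.IsReduced) (h : Attachment S Γ w ρ L K v)
    {q : ℕ → ExtVertex Γ} (hq : ∀ i < k, ExtEdge S Γ (q i) (τ i) (q (i + 1)))
    (hne : ∀ i ≤ k, (q i).2 ≠ []) (h0 : q 0 = (v, (ρ.flip K).stem (armLength (ρ.flip K) L K)))
    (hprev : τ (-1) = ρ (armLength ρ L K)) {i : ℕ} (hi : i ≤ pieceBound L) (hik : i ≤ k) :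
    q i = (v, (ρ.flip K).stem (armLength (ρ.flip K) L K - i)) ∧
      τ (i - 1) = ρ (armLength ρ L K + i) := by
  have hadd := h.armLength_add
  have harm := h.flip.two_mul_pieceBound_le_armLength
  set m := armLength ρ L K
  set m' := armLength (ρ.flip K) L K
  induction i with
  | zero => simpa [h0] using hprev
  | succ i ih =>
    obtain ⟨hqi, hlast⟩ := ih (by omega) (by omega)
    have hnotback : τ i ≠ ρ.flip K (m' - i : ℕ) := by
      rw [h.flip_eq_inv (t := m + i) (by omega), ← hlast]
      simpa using hτ (i - 1)
    have hup : Descends S Γ (q (i + 1)) (τ i).inv (q i) := by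
      by_contra hup
      obtain hdown | hbridge := (hq i hik).descends_or_bridge (hne i (by omega)) hup
      · obtain ⟨-, hcons, hstem⟩ := hdown
        rw [hcons, hqi] at hstem
        exact hnotback (h.flip.eq_of_isStem_cons (by omega) hstem).1
      · obtain ⟨σ, L', K', h', hstem, hletter, -⟩ := hbridge
        rw [hqi] at h' hstem
        obtain ⟨rfl, rfl, rfl, -, hlength⟩ := h.flip.eq_of_stem_eq (by omega) h' hstem
        exact hnotback (by rw [hlength, hletter])
    obtain ⟨hbase, hcons, -⟩ := hup
    rw [hqi, show m' - i = m' - (i + 1) + 1 by omega] at hcons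
    obtain ⟨hletter, hstem⟩ := List.cons.inj hcons
    refine ⟨Prod.ext (by rw [hbase, hqi]) hstem.symm, ?_⟩
    rw [h.flip_eq_inv (t := m + (i + 1 : ℕ)) (by omega)] at hletter
    rw [← Letter.inv_inv (ρ _), hletter, Letter.inv_inv]
    simp

theorem closesAt_of_descends (hτ : S.IsRelator τ M) {q : ℕ → ExtVertex Γ} (hne : (q 1).2 ≠ [])
    (hq : ∀ i < pieceBound M, Descends S Γ (q i) (τ i) (q (i + 1))) :
    (extension S Γ).ClosesAt τ M (q 0) := by
  obtain ⟨n, hn⟩ := Nat.exists_eq_add_of_le' (S.two_le_pieceBound hτ)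
  obtain ⟨hbase, hcons, hstem⟩ := hq (n + 1) (by omega)
  rw [hbase] at hstem
  obtain ⟨a, ha, -⟩ | ⟨ρ, L, K, v, j, h, -, hj, hρ⟩ := hstem
  · have hnil := (List.cons.inj (hcons.symm.trans ha)).2
    obtain _ | n := n
    · exact absurd hnil hne
    · exact absurd hnil (hq (n + 1) (by omega)).ne_nil
  · have hlast : q (pieceBound M) = ((q (n + 1 + 1)).1, ρ.stem j) := by
      rw [hn]
      exact Prod.ext rfl hρ
    obtain ⟨-, hq0, hagree⟩ := eq_of_descends hq hlast
    obtain ⟨rfl, rfl⟩ := S.piece hτ (S.shift h.isRelator _) hagree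
    rw [hq0]
    exact h.closesAt_stem (by omega)

theorem closesAt_of_ascends (hτ : S.IsRelator τ M) {q : ℕ → ExtVertex Γ} (hne : (q 1).2 ≠ [])
    (hq : ∀ i < pieceBound M, Descends S Γ (q (i + 1)) (τ i).inv (q i)) :
    (extension S Γ).ClosesAt τ M (q 0) := by
  have hbound := S.two_le_pieceBound hτ
  obtain ⟨hbase, hcons, hstem⟩ := hq 0 (by omega)
  rw [hbase] at hstem
  obtain ⟨a, ha, -⟩ | ⟨ρ, L, K, v, j, h, -, hj, hρ⟩ := hstem
  · exact absurd (List.cons.inj (hcons.symm.trans ha)).2 hne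
  · obtain ⟨-, -, hagree⟩ := eq_of_ascends hq hρ
    obtain ⟨rfl, rfl⟩ := S.piece hτ (S.reverse (S.shift h.isRelator j)) hagree
    have hclosed := (h.closesAt_stem hj).reverse
    rwa [← hρ] at hclosed

theorem closesAt_of_descends_bridge (hτ : S.IsRelator τ M) {q : ℕ → ExtVertex Γ} {c : ℕ}
    (hk : pieceBound M ≤ k) (hq : ∀ i < k, ExtEdge S Γ (q i) (τ i) (q (i + 1)))
    (hne : ∀ i ≤ k, (q i).2 ≠ []) (hc : c < k)
    (hdown : ∀ i < c, Descends S Γ (q i) (τ i) (q (i + 1)))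
    (hbridge : Bridge S Γ (q c) (τ c) (q (c + 1))) :
    (extension S Γ).ClosesAt τ M (q 0) := by
  obtain ⟨ρ, L, K, h, hstart, hletter, htip⟩ := hbridge
  set m := armLength ρ L K
  obtain ⟨hcm, hq0, hbefore⟩ := eq_of_descends (k := m) hdown (Prod.ext rfl hstart)
  have hafter : ∀ i ≤ pieceBound L, c + 1 + i ≤ k → τ (c + i) = ρ (m + i) := by
    intro i hi hik
    have hedges : ∀ i < k - (c + 1),
        ExtEdge S Γ (q (c + 1 + i)) (τ.shift (c + 1) i) (q (c + 1 + (i + 1))) := fun i hi => by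
      have hedge := hq (c + 1 + i) (by omega)
      rwa [show ((c + 1 + i : ℕ) : ℤ) = i + (c + 1) by push_cast; ring] at hedge
    have hlast := (eq_of_leaves_tip (S.reduced (S.shift hτ (c + 1))) h hedges
      (fun i hi => hne _ (by omega)) (Prod.ext rfl htip) (by simpa [Line.shift] using hletter)
      hi (by omega)).2
    rwa [Line.shift, show (i : ℤ) - 1 + (c + 1) = c + i by ring] at hlast
  have hagree : ∀ i : ℕ, i < k → i < c + 1 + pieceBound L → τ i = ρ.shift (m - c : ℕ) i := by
    intro i hik hi
    obtain hic | hic := lt_or_ge i c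
    · exact hbefore i hic
    · have hlast := hafter (i - c) (by omega) (by omega)
      rw [show (c : ℤ) + (i - c : ℕ) = i by omega] at hlast
      rw [hlast, Line.shift]
      congr 1
      omega
  obtain ⟨rfl, rfl⟩ : τ = ρ.shift (m - c : ℕ) ∧ M = L := by
    obtain hML | hLM := le_total (pieceBound M) (pieceBound L)
    · exact S.piece hτ (S.shift h.isRelator _) fun i hi => hagree i (by omega) (by omega)
    · exact (S.piece (S.shift h.isRelator _) hτ fun i hi =>
        (hagree i (by omega) (by omega)).symm).imp Eq.symm Eq.symm
  rw [hq0]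
  exact h.closesAt_stem (by omega)

theorem closesAt_of_not_ascends (hτ : S.IsRelator τ M) {q : ℕ → ExtVertex Γ}
    (hk : pieceBound M ≤ k) (hq : ∀ i < k, ExtEdge S Γ (q i) (τ i) (q (i + 1)))
    (hne : ∀ i ≤ k, (q i).2 ≠ []) (h0 : ¬ Descends S Γ (q 1) (τ 0).inv (q 0)) :
    (extension S Γ).ClosesAt τ M (q 0) := by
  have hbound := S.two_le_pieceBound hτ
  by_cases hall : ∀ i < pieceBound M, Descends S Γ (q i) (τ i) (q (i + 1))
  · exact closesAt_of_descends hτ (hne 1 (by omega)) hall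
  push Not at hall
  obtain ⟨c, ⟨hcM, hc⟩, hmin⟩ := Nat.lt_wfRel.wf.has_min
    {c | c < pieceBound M ∧ ¬ Descends S Γ (q c) (τ c) (q (c + 1))} hall
  have hdown : ∀ i < c, Descends S Γ (q i) (τ i) (q (i + 1)) := fun i hi =>
    not_not.1 fun h => hmin i ⟨by omega, h⟩ hi
  have hnotup : ¬ Descends S Γ (q (c + 1)) (τ c).inv (q c) := by
    obtain _ | c := c
    · exact h0
    · intro hup
      refine S.reduced hτ c ?_
      have hletters := ((hdown c (by omega)).left_unique hup).1
      rw [hletters, Letter.inv_inv]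
      simp
  obtain h | hbridge := (hq c (by omega)).descends_or_bridge (hne c (by omega)) hnotup
  · exact absurd h hc
  · exact closesAt_of_descends_bridge hτ hk hq hne (by omega) hdown hbridge

theorem longReadsClose_extension (hΓ : LongReadsClose S Γ) :
    LongReadsClose S (extension S Γ) := by
  intro τ M hτ k q hk hread
  change ℕ → ExtVertex Γ at q
  have hbound := S.two_le_pieceBound hτ
  by_cases hold : ∃ i ≤ k, (q i).2 = []
  · obtain ⟨i, hik, hnil⟩ := hold
    rw [← (hread.mono hik).closesAt_shift_iff]
    have hclosed := hΓ.closesAt_extension (S.shift hτ i) (q i).1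
    rwa [← hnil] at hclosed
  push Not at hold
  by_cases hall : ∀ i < pieceBound M, Descends S Γ (q (i + 1)) (τ i).inv (q i)
  · exact closesAt_of_ascends hτ (hold 1 (by omega)) hall
  push Not at hall
  obtain ⟨c, hc, hnotup⟩ := hall
  rw [← (hread.mono (by omega : c ≤ k)).closesAt_shift_iff]
  refine closesAt_of_not_ascends (S.shift hτ c) (q := fun i => q (c + i)) (k := k - c) (by omega)
    (fun i hi => ?_) (fun i hi => hold _ (by omega)) (by simpa [Line.shift] using hnotup)
  have hedge := hread (c + i) (by omega)
  rwa [Nat.cast_add, add_comm (c : ℤ)] at hedge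

end Extension

/-! ### The limit graph and its action -/

section Limit

open FoldedGraph

variable (S : RelatorSystem X)

/-- Iterated extensions of the graph with one vertex and no edges. -/
def tower : ℕ → FoldedGraph X
  | 0 => { Vertex := PUnit, Edge := fun _ _ _ => False, symm := id, det := False.elim }
  | n + 1 => extension S (tower n)

theorem longReadsClose_tower (n : ℕ) : LongReadsClose S (tower S n) := by
  induction n with
  | zero =>
    intro ρ L hρ k q hk hread
    have := S.two_le_pieceBound hρ
    exact (hread 0 (by omega)).elim
  | succ n ih => exact longReadsClose_extension ih

/-- A vertex of the tower, recorded as the sequence of stems leading to it; this identifies a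
vertex with its copies in the later graphs. -/
def code : ∀ n, (tower S n).Vertex → ℕ → List (Letter X)
  | 0, _ => fun _ => []
  | n + 1, x => Function.update (code n x.1) n x.2

theorem code_of_le {n k : ℕ} (h : n ≤ k) (v : (tower S n).Vertex) : code S n v k = [] := by
  induction n with
  | zero => rfl
  | succ n ih =>
    rw [code, Function.update_of_ne (by omega)]
    exact ih (by omega) _

theorem code_injective (n : ℕ) : Function.Injective (code S n) := by
  induction n with
  | zero => exact fun _ _ _ => rfl
  | succ n ih =>
    intro v w h
    simp only [code] at h
    refine Prod.ext (ih ?_) (by simpa using congrFun h n)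
    funext k
    obtain rfl | hk := eq_or_ne k n
    · rw [code_of_le S le_rfl, code_of_le S le_rfl]
    · simpa only [Function.update_of_ne hk] using congrFun h k

theorem code_succ (n : ℕ) (v : (tower S n).Vertex) : code S (n + 1) (v, []) = code S n v := by
  change Function.update (code S n v) n [] = code S n v
  rw [← code_of_le S le_rfl v, Function.update_eq_self]

/-- The edges of the `n`-th graph of the tower, between codes of vertices. -/
def CodeEdge (n : ℕ) (x : ℕ → List (Letter X)) (a : Letter X) (y : ℕ → List (Letter X)) : Prop :=
  ∃ v w, code S n v = x ∧ code S n w = y ∧ (tower S n).Edge v a w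

theorem CodeEdge.mono {m n : ℕ} (h : m ≤ n) {x y : ℕ → List (Letter X)} {a : Letter X}
    (hxy : CodeEdge S m x a y) : CodeEdge S n x a y := by
  induction h with
  | refl => exact hxy
  | step _ ih =>
    obtain ⟨v, w, rfl, rfl, hedge⟩ := ih
    exact ⟨(v, []), (w, []), code_succ .., code_succ .., .inl ⟨rfl, rfl, hedge⟩⟩

/-- The union of the tower. -/
def limit : FoldedGraph X where
  Vertex := {x // ∃ n v, code S n v = x}
  Edge x a y := ∃ n, CodeEdge S n x a y
  symm := fun ⟨n, v, w, hv, hw, hedge⟩ => ⟨n, w, v, hw, hv, (tower S n).symm hedge⟩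
  det := by
    rintro x a y z ⟨m, hm⟩ ⟨n, hn⟩
    obtain ⟨v, w, hv, hw, hvw⟩ := hm.mono S (le_max_left m n)
    obtain ⟨v', w', hv', hz, hvw'⟩ := hn.mono S (le_max_right m n)
    obtain rfl := code_injective S _ (hv.trans hv'.symm)
    obtain rfl := (tower S _).det hvw hvw'
    exact Subtype.ext (hw.symm.trans hz)

/-- A vertex of the tower, seen in the limit. -/
def toLimit (n : ℕ) (v : (tower S n).Vertex) : (limit S).Vertex := ⟨code S n v, n, v, rfl⟩

theorem toLimit_injective (n : ℕ) : Function.Injective (toLimit S n) :=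
  fun _ _ h => code_injective S n (congrArg Subtype.val h)

theorem toLimit_succ (n : ℕ) (v : (tower S n).Vertex) :
    toLimit S (n + 1) (v, []) = toLimit S n v :=
  Subtype.ext (code_succ S n v)

theorem toLimit_edge {n : ℕ} {v w : (tower S n).Vertex} {a : Letter X}
    (h : (tower S n).Edge v a w) : (limit S).Edge (toLimit S n v) a (toLimit S n w) :=
  ⟨n, v, w, rfl, rfl, h⟩

theorem toLimit_edge_of_missing {n : ℕ} {v : (tower S n).Vertex} {a : Letter X}
    (h : (tower S n).Missing v a) :
    (limit S).Edge (toLimit S n v) a (toLimit S (n + 1) (v, [a])) := by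
  rw [← toLimit_succ]
  exact toLimit_edge S (.inr (.inl ⟨rfl, rfl, .inl ⟨a, rfl, h⟩⟩))

theorem limit_exists_edge (a : Letter X) (x : (limit S).Vertex) : ∃ y, (limit S).Edge x a y := by
  obtain ⟨-, n, v, rfl⟩ := x
  by_cases hmissing : (tower S n).Missing v a
  · exact ⟨_, toLimit_edge_of_missing S hmissing⟩
  · obtain ⟨w, hw⟩ : ∃ w, (tower S n).Edge v a w := by simpa [Missing] using hmissing
    exact ⟨_, toLimit_edge S hw⟩

theorem limit_closesAt {ρ : Line X} {L : ℕ} (hρ : S.IsRelator ρ L) (x : (limit S).Vertex) :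
    (limit S).ClosesAt ρ L x := by
  obtain ⟨-, n, v, rfl⟩ := x
  obtain ⟨q, hq0, hq, hper⟩ := (longReadsClose_tower S n).closesAt_extension hρ v
  exact ⟨fun t => toLimit S (n + 1) (q t), (congrArg (toLimit S (n + 1)) hq0).trans
    (toLimit_succ S n v), fun t => toLimit_edge S (hq t), hper.comp (toLimit S (n + 1))⟩

/-- The endpoint of the edge labelled `a` leaving a vertex of the limit. -/
noncomputable def next (a : Letter X) (x : (limit S).Vertex) : (limit S).Vertex :=
  (limit_exists_edge S a x).choose

theorem next_spec (a : Letter X) (x : (limit S).Vertex) : (limit S).Edge x a (next S a x) :=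
  (limit_exists_edge S a x).choose_spec

theorem next_eq {a : Letter X} {x y : (limit S).Vertex} (h : (limit S).Edge x a y) :
    next S a x = y :=
  (limit S).det (next_spec S a x) h

theorem next_next (a : Letter X) (x : (limit S).Vertex) : next S a.inv (next S a x) = x :=
  next_eq S ((limit S).symm (next_spec S a x))

/-- The action of the free group on the limit. Each generator moves against its edges, so that
a word carries the end of a path labelled by it to the start of the path. -/
noncomputable def action : FreeGroup X →* Equiv.Perm (limit S).Vertex :=
  FreeGroup.lift fun x =>
    { toFun := next S (x, false)
      invFun := next S (x, true)
      left_inv := next_next S (x, false)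
      right_inv := next_next S (x, true) }

theorem action_letter {x y : (limit S).Vertex} {a : Letter X} (h : (limit S).Edge x a y) :
    action S (FreeGroup.mk [a]) y = x := by
  obtain ⟨g, _ | _⟩ := a
  · have hmk : FreeGroup.mk [(g, false)] = (FreeGroup.of g)⁻¹ := rfl
    rw [hmk, map_inv, action, FreeGroup.lift_apply_of]
    exact next_eq S ((limit S).symm h)
  · change action S (FreeGroup.of g) y = x
    rw [action, FreeGroup.lift_apply_of]
    exact next_eq S ((limit S).symm h)

theorem action_word {ρ : Line X} {q : ℤ → (limit S).Vertex}
    (hq : ∀ t, (limit S).Edge (q t) (ρ t) (q (t + 1))) (k : ℕ) :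
    action S (FreeGroup.mk (ρ.word k)) (q k) = q 0 := by
  induction k with
  | zero => simp [Line.word, ← FreeGroup.one_eq_mk]
  | succ k ih =>
    rw [Line.word, List.range_succ, List.map_append, ← FreeGroup.mul_mk, map_mul,
      Equiv.Perm.mul_apply, ← ih]
    exact congrArg _ (action_letter S (by simpa using hq k))

theorem action_relator {ρ : Line X} {L : ℕ} (hρ : S.IsRelator ρ L) :
    action S (FreeGroup.mk (ρ.word L)) = 1 := by
  ext1 x
  obtain ⟨q, rfl, hq, hper⟩ := limit_closesAt S hρ x
  have hword := action_word S hq L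
  rwa [hper.eq] at hword

theorem action_of_injective : Function.Injective fun x : X => action S (FreeGroup.of x) := by
  intro x y hxy
  have hletter (z : X) : action S (FreeGroup.of z)
      (toLimit S 1 (PUnit.unit, [(z, true)])) = toLimit S 0 PUnit.unit :=
    action_letter S (toLimit_edge_of_missing S (n := 0) fun _ => id)
  have hxy' := (hletter y).trans (hletter x).symm
  rw [← show action S (FreeGroup.of x) = action S (FreeGroup.of y) from hxy] at hxy'
  simpa using (congrArg Prod.snd
    (toLimit_injective S 1 ((action S (FreeGroup.of x)).injective hxy'))).symm

end Limit

/-! ### Positive words made of blocks -/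

/-- A cyclic word made of the blocks `head k * run ^ exp k` for `k < count`. -/
structure BlockWord (X : Type u) where
  count : ℕ
  head : ℕ → List (Letter X)
  run : X
  exp : ℕ → ℕ
  count_pos : 0 < count

namespace BlockWord

variable (B : BlockWord X)

/-- The `k`-th block as a word. -/
def block (k : ℕ) : List (Letter X) := B.head k ++ List.replicate (B.exp k) (B.run, true)

/-- The concatenation of the blocks. -/
def toList : List (Letter X) := (List.range B.count).flatMap B.block

/-- The periodic line repeating the word; the default value of `getD` is never used. -/
def line : Line X := fun i => B.toList.getD (i % B.toList.length).toNat (B.run, true)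

/-- The total length of the first `n` blocks. -/
def pos (n : ℕ) : ℕ := ∑ k ∈ Finset.range n, (B.block k).length

/-- The blocks of the line are numbered by `ℤ`; this is the position in the cyclic word of the
`j`-th one. -/
def index (j : ℤ) : ℕ := (j % B.count).toNat

/-- The position on the line where the `j`-th block starts. -/
def start (j : ℤ) : ℤ := B.toList.length * (j / B.count) + B.pos (B.index j)

theorem pos_succ (n : ℕ) : B.pos (n + 1) = B.pos n + (B.block n).length :=
  Finset.sum_range_succ _ n

theorem pos_mono : Monotone B.pos :=
  monotone_nat_of_le_succ fun n => by simp [pos_succ]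

theorem length_block (k : ℕ) : (B.block k).length = (B.head k).length + B.exp k := by
  simp [block]

theorem length_flatMap_range (n : ℕ) : ((List.range n).flatMap B.block).length = B.pos n := by
  induction n with
  | zero => rfl
  | succ n ih => simp [List.range_succ, ih, pos_succ]

theorem length_toList : B.toList.length = B.pos B.count :=
  B.length_flatMap_range B.count

theorem getElem?_flatMap_range {n k o : ℕ} (hk : k < n) (ho : o < (B.block k).length) :
    ((List.range n).flatMap B.block)[B.pos k + o]? = (B.block k)[o]? := by
  induction n with
  | zero => omega
  | succ n ih =>
    simp only [List.range_succ, List.flatMap_append, List.flatMap_singleton]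
    obtain hkn | rfl := Nat.lt_succ_iff_lt_or_eq.mp hk
    · rw [List.getElem?_append_left, ih hkn]
      have := B.pos_mono (Nat.succ_le_of_lt hkn)
      rw [Nat.succ_eq_add_one, pos_succ] at this
      rw [length_flatMap_range]
      omega
    · rw [List.getElem?_append_right (by rw [length_flatMap_range]; omega), length_flatMap_range,
        Nat.add_sub_cancel_left]

theorem index_cast (j : ℤ) : (B.index j : ℤ) = j % B.count :=
  Int.toNat_of_nonneg (Int.emod_nonneg _ (by have := B.count_pos; omega))

theorem index_lt (j : ℤ) : B.index j < B.count := by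
  have := B.count_pos
  have := B.index_cast j
  have := Int.emod_lt_of_pos j (b := B.count) (by omega)
  omega

theorem mul_ediv_add_index (j : ℤ) : B.count * (j / B.count) + B.index j = j := by
  rw [index_cast]
  exact Int.mul_ediv_add_emod j _

theorem index_mul_add (q : ℤ) {k : ℕ} (hk : k < B.count) : B.index (B.count * q + k) = k := by
  have := B.index_cast (B.count * q + k)
  rw [Int.mul_add_emod_self_left, Int.emod_eq_of_lt (by omega) (by omega)] at this
  exact_mod_cast this

theorem index_add_one {j : ℤ} (h : B.index j + 1 < B.count) :
    B.index (j + 1) = B.index j + 1 := by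
  rw [← B.index_mul_add (j / B.count) h]
  congr 1
  have := B.mul_ediv_add_index j
  push_cast
  omega

theorem index_add_one_of_last {j : ℤ} (h : B.index j + 1 = B.count) : B.index (j + 1) = 0 := by
  rw [← B.index_mul_add (j / B.count + 1) B.count_pos]
  congr 1
  have := B.mul_ediv_add_index j
  rw [mul_add]
  push_cast
  omega

theorem start_mul_add (q : ℤ) {k : ℕ} (hk : k ≤ B.count) :
    B.start (B.count * q + k) = B.toList.length * q + B.pos k := by
  have hcount := B.count_pos
  obtain hk | rfl := hk.lt_or_eq
  · rw [start, index_mul_add _ _ hk, Int.mul_add_ediv_left _ _ (by omega),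
      Int.ediv_eq_zero_of_lt (by omega) (by omega), add_zero]
  · have hwrap := B.index_mul_add (q + 1) hcount
    rw [Nat.cast_zero, add_zero, mul_add, mul_one] at hwrap
    rw [start, hwrap, ← mul_add_one, Int.mul_ediv_cancel_left _ (by omega), mul_add_one,
      length_toList]
    simp [pos]

theorem start_add_one (j : ℤ) :
    B.start (j + 1) = B.start j + (B.block (B.index j)).length := by
  have hj := B.mul_ediv_add_index j
  have hsucc := B.start_mul_add (j / B.count) (k := B.index j + 1) (B.index_lt j)
  rw [Nat.cast_add_one, ← add_assoc, hj, pos_succ] at hsucc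
  rw [hsucc, start]
  push_cast
  ring

theorem line_periodic : Function.Periodic B.line (B.toList.length : ℤ) := fun i => by
  simp only [line, Int.add_emod_right]

theorem line_natCast {i : ℕ} (hi : i < B.toList.length) : B.line i = B.toList[i] := by
  rw [line, Int.emod_eq_of_lt (by omega) (by omega), Int.toNat_natCast]
  exact List.getD_eq_getElem _ _ hi

theorem word_line : B.line.word B.toList.length = B.toList := by
  refine List.ext_getElem (by simp [Line.word]) fun i _ hi => ?_
  simpa [Line.word] using B.line_natCast hi

theorem getElem?_block {j : ℤ} {o : ℕ} (ho : o < (B.block (B.index j)).length) :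
    (B.block (B.index j))[o]? = some (B.line (B.start j + o)) := by
  have hlt : B.pos (B.index j) + o < B.toList.length := by
    have := B.pos_mono (Nat.succ_le_of_lt (B.index_lt j))
    rw [Nat.succ_eq_add_one, pos_succ, ← length_toList] at this
    omega
  have hline : B.line (B.start j + o) = B.line (B.pos (B.index j) + o : ℕ) := by
    rw [start, add_assoc, add_comm, mul_comm]
    exact_mod_cast B.line_periodic.int_mul (j / B.count) _
  rw [hline, line_natCast _ hlt, ← B.getElem?_flatMap_range (B.index_lt j) ho]
  exact List.getElem?_eq_getElem hlt

theorem getElem?_head {j : ℤ} {o : ℕ} (ho : o < (B.head (B.index j)).length) :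
    (B.head (B.index j))[o]? = some (B.line (B.start j + o)) := by
  rw [← getElem?_block _ (by rw [length_block]; omega), block, List.getElem?_append_left ho]

theorem line_eq_run {j u : ℤ} (h : B.start j + (B.head (B.index j)).length ≤ u)
    (h' : u < B.start (j + 1)) : B.line u = (B.run, true) := by
  obtain ⟨o, rfl⟩ := Int.le.dest h
  rw [start_add_one, length_block] at h'
  have hblock := B.getElem?_block (j := j) (o := (B.head (B.index j)).length + o)
    (by rw [length_block]; omega)
  rw [block, List.getElem?_append_right (by omega), List.getElem?_replicate_of_lt (by omega),
    Option.some_inj] at hblock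
  rw [hblock, add_assoc]
  push_cast
  rfl

theorem line_add_start_sub_start {j j' : ℤ} (h : B.index j = B.index j') (u : ℤ) :
    B.line (u + (B.start j - B.start j')) = B.line u := by
  rw [start, start, h, add_sub_add_right_eq_sub, ← mul_sub, mul_comm]
  exact B.line_periodic.int_mul _ u

theorem exists_start_le (hB : ∀ k < B.count, B.block k ≠ []) (u : ℤ) :
    ∃ j, B.start j ≤ u ∧ u < B.start (j + 1) := by
  have hlength : 0 < B.toList.length := by
    have := List.length_pos_iff.mpr (hB 0 B.count_pos)
    have := B.pos_mono (Nat.succ_le_of_lt B.count_pos)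
    rw [Nat.succ_eq_add_one, pos_succ, ← length_toList] at this
    omega
  have hcover (n : ℕ) (i : ℕ) (hi : i < B.pos n) : ∃ k < n, B.pos k ≤ i ∧ i < B.pos (k + 1) := by
    induction n with
    | zero => simp [pos] at hi
    | succ n ih =>
      by_cases hin : i < B.pos n
      · obtain ⟨k, hk, hki⟩ := ih hin
        exact ⟨k, by omega, hki⟩
      · exact ⟨n, n.lt_succ_self, by omega, hi⟩
  have hnonneg := Int.emod_nonneg u (b := B.toList.length) (by omega)
  have hlt := Int.emod_lt_of_pos u (b := B.toList.length) (by omega)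
  obtain ⟨k, hk, hle, hlt⟩ := hcover B.count (u % B.toList.length).toNat
    (by rw [← length_toList]; omega)
  have hu := Int.mul_ediv_add_emod u B.toList.length
  refine ⟨B.count * (u / B.toList.length) + k, ?_, ?_⟩
  · rw [start_mul_add _ _ hk.le]
    omega
  · have := B.start_mul_add (u / B.toList.length) (k := k + 1) hk
    rw [Nat.cast_add_one, ← add_assoc] at this
    rw [this]
    omega

theorem line_eq_run_or_mem_head (hB : ∀ k < B.count, B.block k ≠ []) (u : ℤ) :
    B.line u = (B.run, true) ∨ ∃ k < B.count, B.line u ∈ B.head k := by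
  obtain ⟨j, hle, hlt⟩ := B.exists_start_le hB u
  by_cases hu : B.start j + (B.head (B.index j)).length ≤ u
  · exact .inl (B.line_eq_run hu hlt)
  · obtain ⟨o, rfl⟩ := Int.le.dest hle
    exact .inr ⟨_, B.index_lt j, List.mem_of_getElem? (B.getElem?_head (by omega))⟩

theorem mk_toList : FreeGroup.mk B.toList = ((List.range B.count).map fun k =>
    FreeGroup.mk (B.head k) * FreeGroup.of B.run ^ B.exp k).prod := by
  rw [toList]
  induction List.range B.count with
  | nil => rfl
  | cons k l ih =>
    have hrun (n : ℕ) : FreeGroup.mk (List.replicate n (B.run, true)) = FreeGroup.of B.run ^ n := by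
      simp [FreeGroup.of, FreeGroup.pow_mk]
    rw [List.flatMap_cons, ← FreeGroup.mul_mk, ih, List.map_cons, List.prod_cons, block,
      ← FreeGroup.mul_mk, hrun]

/-- The shape of the relators of the presentation: no head cancels or meets the runs, so that the
blocks can be recognized on the line, the exponents determine the index of a block, and five
consecutive blocks are shorter than a piece. -/
structure IsProper : Prop where
  four_le_count : 4 ≤ B.count
  head_ne_nil : ∀ k < B.count, B.head k ≠ []
  isReduced_head : ∀ k < B.count, FreeGroup.IsReduced (B.head k)
  fst_ne_run : ∀ k < B.count, ∀ a ∈ B.head k, a.1 ≠ B.run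
  exp_pos : ∀ k < B.count, 0 < B.exp k
  strictMonoOn_exp : StrictMonoOn B.exp (Set.Iio B.count)
  five_mul_length_lt : ∀ k < B.count, 5 * (B.block k).length < pieceBound B.toList.length

namespace IsProper

variable {B} {B' : BlockWord X} {j j' s u : ℤ}

theorem block_ne_nil (hB : B.IsProper) : ∀ k < B.count, B.block k ≠ [] := fun k hk h =>
  hB.head_ne_nil k hk (List.append_eq_nil_iff.mp h).1

theorem start_add_length_head_lt (hB : B.IsProper) (j : ℤ) :
    B.start j + (B.head (B.index j)).length < B.start (j + 1) := by
  have := hB.exp_pos _ (B.index_lt j)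
  rw [start_add_one, length_block]
  push_cast
  omega

theorem strictMono_start (hB : B.IsProper) : StrictMono B.start :=
  strictMono_int_of_lt_succ fun j => by
    have := hB.start_add_length_head_lt j
    omega

theorem line_fst_ne_run (hB : B.IsProper) (h : B.start j ≤ u)
    (h' : u < B.start j + (B.head (B.index j)).length) : (B.line u).1 ≠ B.run := by
  obtain ⟨o, rfl⟩ := Int.le.dest h
  exact hB.fst_ne_run _ (B.index_lt j) _ (List.mem_of_getElem? (B.getElem?_head (by omega)))

theorem line_eq_run_iff (hB : B.IsProper) (h : B.start j ≤ u) (h' : u < B.start (j + 1)) :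
    B.line u = (B.run, true) ↔ B.start j + (B.head (B.index j)).length ≤ u := by
  refine ⟨fun hrun => ?_, fun hle => B.line_eq_run hle h'⟩
  by_contra! hlt
  exact hB.line_fst_ne_run h hlt (congrArg Prod.fst hrun)

theorem line_ne_run_false (hB : B.IsProper) (u : ℤ) : B.line u ≠ (B.run, false) := by
  obtain hrun | ⟨k, hk, hmem⟩ := B.line_eq_run_or_mem_head hB.block_ne_nil u
  · simp [hrun]
  · exact fun h => hB.fst_ne_run k hk _ hmem (congrArg Prod.fst h)

theorem isReduced_line (hB : B.IsProper) : B.line.IsReduced := by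
  intro u hcancel
  obtain ⟨j, hle, hlt⟩ := B.exists_start_le hB.block_ne_nil u
  by_cases hhead : u + 1 < B.start j + (B.head (B.index j)).length
  · obtain ⟨o, rfl⟩ := Int.le.dest hle
    have hred := List.isChain_iff_getElem.mp (hB.isReduced_head _ (B.index_lt j)) o (by omega)
    have hfst := B.getElem?_head (j := j) (o := o) (by omega)
    have hsnd := B.getElem?_head (j := j) (o := o + 1) (by omega)
    rw [List.getElem?_eq_getElem (by omega), Option.some_inj] at hfst hsnd
    rw [Nat.cast_add_one, ← add_assoc, hcancel] at hsnd
    rw [hfst, hsnd] at hred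
    simp [Letter.inv] at hred
  have hhead' := hB.start_add_length_head_lt j
  by_cases hnext : u + 1 < B.start (j + 1)
  · rw [B.line_eq_run (not_lt.mp hhead) hnext] at hcancel
    refine hB.line_ne_run_false u ?_
    rw [← Letter.inv_inv (B.line u), ← hcancel]
    rfl
  · rw [B.line_eq_run (by omega) hlt] at hcancel
    exact hB.line_ne_run_false (u + 1) hcancel

theorem exists_start_eq_iff (hB : B.IsProper) :
    (∃ j, B.start j = u) ↔ B.line (u - 1) = (B.run, true) ∧ B.line u ≠ (B.run, true) := by
  constructor
  · rintro ⟨j, rfl⟩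
    have hprev := hB.start_add_length_head_lt (j - 1)
    rw [sub_add_cancel] at hprev
    have hhead := List.length_pos_iff.mpr (hB.head_ne_nil _ (B.index_lt j))
    refine ⟨B.line_eq_run (j := j - 1) (by omega) (by rw [sub_add_cancel]; omega), fun h => ?_⟩
    exact hB.line_fst_ne_run (j := j) le_rfl (by omega) (congrArg Prod.fst h)
  · rintro ⟨hprev, hne⟩
    obtain ⟨j, hle, hlt⟩ := B.exists_start_le hB.block_ne_nil u
    refine ⟨j, hle.antisymm ?_⟩
    by_contra! hstart
    rw [Ne, hB.line_eq_run_iff hle hlt, not_le] at hne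
    exact hB.line_fst_ne_run (j := j) (by omega) (by omega) (congrArg Prod.fst hprev)

theorem exists_aligned_block (hB : B.IsProper) (hB' : B'.IsProper) (hrun : B.run = B'.run)
    (h : ∀ u, B.start j - 1 ≤ u → u ≤ B.start (j + 1) → B.line u = B'.line (u + s)) :
    ∃ j', B'.start j' = B.start j + s ∧ B'.start (j' + 1) = B.start (j + 1) + s := by
  have hstart (u : ℤ) (hu : B.start j ≤ u) (hu' : u ≤ B.start (j + 1)) :
      (∃ i, B.start i = u) ↔ ∃ i, B'.start i = u + s := by
    rw [hB.exists_start_eq_iff, hB'.exists_start_eq_iff, h u (by omega) hu',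
      h (u - 1) (by omega) (by omega), hrun, sub_add_eq_add_sub]
  have hlt := hB.strictMono_start (lt_add_one j)
  obtain ⟨j', hj'⟩ := (hstart _ le_rfl hlt.le).mp ⟨j, rfl⟩
  obtain ⟨i', hi'⟩ := (hstart _ hlt.le le_rfl).mp ⟨j + 1, rfl⟩
  have hj'i' : j' < i' := hB'.strictMono_start.lt_iff_lt.mp (by omega)
  have hle := hB'.strictMono_start.monotone (Int.add_one_le_of_lt hj'i')
  have hlt' := hB'.strictMono_start (lt_add_one j')
  obtain ⟨i, hi⟩ := (hstart (B'.start (j' + 1) - s) (by omega) (by omega)).mpr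
    ⟨j' + 1, by ring⟩
  have hji : j < i := hB.strictMono_start.lt_iff_lt.mp (by omega)
  have := hB.strictMono_start.monotone (Int.add_one_le_of_lt hji)
  exact ⟨j', hj', by omega⟩

theorem block_eq_of_aligned (hB : B.IsProper) (hB' : B'.IsProper) (hrun : B.run = B'.run)
    (hj : B'.start j' = B.start j + s) (hj' : B'.start (j' + 1) = B.start (j + 1) + s)
    (h : ∀ u, B.start j ≤ u → u < B.start (j + 1) → B.line u = B'.line (u + s)) :
    B.head (B.index j) = B'.head (B'.index j') ∧ B.exp (B.index j) = B'.exp (B'.index j') := by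
  have hlt := hB.start_add_length_head_lt j
  have hlt' := hB'.start_add_length_head_lt j'
  have hrun_iff (u : ℤ) (hu : B.start j ≤ u) (hu' : u < B.start (j + 1)) :
      B.start j + (B.head (B.index j)).length ≤ u ↔
        B.start j + (B'.head (B'.index j')).length ≤ u := by
    rw [← hB.line_eq_run_iff hu hu', h u hu hu', hrun,
      hB'.line_eq_run_iff (j := j') (by omega) (by omega)]
    omega
  have hlength : (B.head (B.index j)).length = (B'.head (B'.index j')).length := by
    have := (hrun_iff _ (by omega) hlt).mp le_rfl
    have := (hrun_iff (B.start j + (B'.head (B'.index j')).length) (by omega) (by omega)).mpr le_rfl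
    omega
  constructor
  · refine List.ext_getElem? fun o => ?_
    by_cases ho : o < (B.head (B.index j)).length
    · rw [B.getElem?_head ho, B'.getElem?_head (hlength ▸ ho), h _ (by omega) (by omega), hj,
        add_right_comm]
    · rw [List.getElem?_eq_none (by omega), List.getElem?_eq_none (by omega)]
  · have hnext := B.start_add_one j
    have hnext' := B'.start_add_one j'
    rw [length_block] at hnext hnext'
    omega

theorem exists_blocks_in_window (hB : B.IsProper) (t : ℤ) : ∃ j, B.index j + 2 < B.count ∧
    t < B.start j ∧ B.start (j + 1 + 1) < t + pieceBound B.toList.length := by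
  obtain ⟨i, hi, hi'⟩ := B.exists_start_le hB.block_ne_nil t
  have hshort (j : ℤ) : 5 * B.start (j + 1) < 5 * B.start j + pieceBound B.toList.length := by
    have := hB.five_mul_length_lt _ (B.index_lt j)
    rw [start_add_one]
    omega
  have h₀ := hshort i
  have h₁ := hshort (i + 1)
  have h₂ := hshort (i + 1 + 1)
  by_cases hlast : B.index (i + 1) + 2 < B.count
  · exact ⟨i + 1, hlast, hi', by omega⟩
  refine ⟨i + 1 + 1 + 1, ?_, ?_, ?_⟩
  · have hcount := hB.four_le_count
    have hlt := B.index_lt (i + 1)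
    by_cases hwrap : B.index (i + 1) + 1 = B.count
    · have h0 := B.index_add_one_of_last hwrap
      rw [B.index_add_one (by omega), h0]
      omega
    · have h1 := B.index_add_one (j := i + 1) (by omega)
      rw [B.index_add_one_of_last (by omega)]
      omega
  · exact hi'.trans (hB.strictMono_start (by omega))
  · have h₃ := hshort (i + 1 + 1 + 1)
    have h₄ := hshort (i + 1 + 1 + 1 + 1)
    omega

theorem exists_matching_blocks (hB : B.IsProper) (hB' : B'.IsProper) (hrun : B.run = B'.run)
    {t : ℤ} (h : ∀ u, t ≤ u → u < t + pieceBound B.toList.length → B.line u = B'.line (u + s)) :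
    ∃ j j', B.index j + 2 < B.count ∧ B'.start j' = B.start j + s ∧
      B.exp (B.index j) = B'.exp (B'.index j') ∧
      B.exp (B.index (j + 1)) = B'.exp (B'.index (j' + 1)) ∧
      B.head (B.index (j + 1)) = B'.head (B'.index (j' + 1)) := by
  obtain ⟨j, hj, hlt, hlt'⟩ := hB.exists_blocks_in_window t
  have h₁ := hB.strictMono_start (lt_add_one j)
  have h₂ := hB.strictMono_start (lt_add_one (j + 1))
  obtain ⟨j', hstart, hnext⟩ := hB.exists_aligned_block hB' hrun (j := j) (s := s)
    fun u hu hu' => h u (by omega) (by omega)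
  obtain ⟨i', hstart', hnext'⟩ := hB.exists_aligned_block hB' hrun (j := j + 1) (s := s)
    fun u hu hu' => h u (by omega) (by omega)
  obtain rfl : i' = j' + 1 := hB'.strictMono_start.injective (hstart'.trans hnext.symm)
  have hblock := hB.block_eq_of_aligned hB' hrun hstart hnext
    fun u hu hu' => h u (by omega) (by omega)
  have hblock' := hB.block_eq_of_aligned hB' hrun hstart' hnext'
    fun u hu hu' => h u (by omega) (by omega)
  exact ⟨j, j', hj, hstart, hblock.2, hblock'.2, hblock'.1⟩

end IsProper

end BlockWord

end SmallCancellation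

theorem map_chainProd {G H : Type*} [Group G] [Group H] (φ : G →* H) (lo : ℕ) (x y : G) :
    φ (chainProd lo x y) = chainProd lo (φ x) (φ y) := by
  simp [chainProd, map_list_prod, Function.comp_def]

theorem map_wProd {G H : Type*} [Group G] [Group H] (φ : G →* H) (m : ℕ) {n : ℕ}
    (xs : Fin n → G) (y : G) : φ (wProd m xs y) = wProd m (fun i => φ (xs i)) (φ y) := by
  simp [wProd, map_list_prod, List.map_ofFn, Function.comp_def]

theorem wProd_mem {G : Type*} [Group G] {K : Subgroup G} {m n : ℕ} {xs : Fin n → G} {y : G}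
    (hxs : ∀ i, xs i ∈ K) (hy : y ∈ K) : wProd m xs y ∈ K := by
  refine list_prod_mem fun z hz => ?_
  obtain ⟨k, -, rfl⟩ := List.mem_map.mp hz
  refine mul_mem (list_prod_mem fun z hz => ?_) (pow_mem hy _)
  obtain ⟨i, rfl⟩ := (List.mem_ofFn' _ _).mp hz
  exact hxs i

theorem exists_finite_closure_image_eq_top {G ι : Type*} [Group G] [Group.FG G] {g : ι → G}
    (hg : Subgroup.closure (Set.range g) = ⊤) :
    ∃ F : Set ι, F.Finite ∧ Subgroup.closure (g '' F) = ⊤ := by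
  have hmono : Monotone fun F : Finset ι => Subgroup.closure (g '' F) := fun F F' h =>
    Subgroup.closure_mono (Set.image_mono (Finset.coe_subset.mpr h))
  have htop : ⨆ F : Finset ι, Subgroup.closure (g '' F) = ⊤ := by
    have hunion : ⋃ F : Finset ι, (F : Set ι) = Set.univ :=
      Set.eq_univ_of_forall fun i => Set.mem_iUnion.mpr ⟨{i}, by simp⟩
    rw [← Subgroup.closure_iUnion, ← Set.image_iUnion, hunion, Set.image_univ, hg]
  obtain ⟨T, hT, hfin⟩ := Group.fg_iff.mp ‹Group.FG G›
  obtain ⟨F, hF⟩ := Directed.exists_mem_subset_of_finset_subset_biUnion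
    (s := hfin.toFinset) (f := fun F : Finset ι => (Subgroup.closure (g '' F) : Set G))
    hmono.directed_le
    (by rw [← Subgroup.coe_iSup_of_directed hmono.directed_le, htop]; exact fun _ _ => trivial)
  refine ⟨F, F.finite_toSet, ?_⟩
  rwa [hfin.coe_toFinset, ← Subgroup.closure_le, hT, top_le_iff] at hF

/-- The map on generators induced by a map of domains. -/
def GenSym.map {A A' : Type} (φ : A → A') : GenSym A → GenSym A'
  | .elt a => .elt (φ a)
  | .b => .b
  | .c => .c
  | .d => .d
  | .f1 => .f1
  | .f2 => .f2

/-! ### The presentation of `G(𝒜)` -/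

namespace IndexedStructure

open SmallCancellation

/-- `IsChainPair lo x y` says that `chainProd lo x y` is one of the relators of the presentation. -/
inductive IsChainPair {A : Type} : ℕ → GenSym A → GenSym A → Prop
  | f1_f2 : IsChainPair 4000 .f1 .f2
  | f2_f1 : IsChainPair 4000 .f2 .f1
  | b_f1 : IsChainPair 1000 .b .f1
  | b_f2 : IsChainPair 1000 .b .f2
  | c_f1 : IsChainPair 2000 .c .f1
  | c_f2 : IsChainPair 2000 .c .f2
  | d_f1 : IsChainPair 3000 .d .f1
  | d_f2 : IsChainPair 3000 .d .f2
  | elt_c (a : A) : IsChainPair 0 (.elt a) .c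
  | elt_d (a : A) : IsChainPair 0 (.elt a) .d

namespace IsChainPair

variable {A : Type} {lo lo' : ℕ} {x y : GenSym A}

theorem ne (h : IsChainPair lo x y) : x ≠ y := by
  cases h <;> simp

theorem right_ne_elt (h : IsChainPair lo x y) (a : A) : y ≠ .elt a := by
  cases h <;> simp

theorem right_ne_b (h : IsChainPair lo x y) : y ≠ .b := by
  cases h <;> simp

theorem le_four_thousand (h : IsChainPair lo x y) : lo ≤ 4000 := by
  cases h <;> simp

theorem offset_unique (h : IsChainPair lo x y) (h' : IsChainPair lo' x y) : lo = lo' := by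
  cases h <;> cases h' <;> rfl

end IsChainPair

/-- The cyclic word `chainProd lo x y`. -/
def chainBlocks {A : Type} (lo : ℕ) (x y : GenSym A) : BlockWord (GenSym A) where
  count := 1000
  head _ := [(x, true)]
  run := y
  exp k := (lo + k + 1) ^ 2
  count_pos := by norm_num

variable (S : IndexedStructure) {m : ℕ}

/-- The word `x₁ ⋯ xₙ`. -/
def argWord (xs : Fin (S.arity m) → S.A) : List (Letter (GenSym S.A)) :=
  List.ofFn fun i => (.elt (xs i), true)

open Classical in
/-- The reduced word that the first argument word of a row becomes when the inverse of the value, if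
there is one, is moved in front of it. -/
noncomputable def firstHead (xs : Fin (S.arity m) → S.A) : List (Letter (GenSym S.A)) :=
  if S.isFunc m then FreeGroup.reduce ((.elt (S.funcInterp m xs), false) :: S.argWord xs)
  else S.argWord xs

open Classical in
/-- The cyclic relator contributed by the row `xs` of the table of the `m`-th symbol: `wProd` with
the value cancelled into the first head. If this head vanishes, as for `f(x) = x`, its run merges
cyclically with the last one. -/
noncomputable def tableBlocks (m : ℕ) (xs : Fin (S.arity m) → S.A) : BlockWord (GenSym S.A) where
  count := if S.firstHead xs = [] then 99 else 100
  head k := if S.firstHead xs ≠ [] ∧ k = 0 then S.firstHead xs else S.argWord xs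
  run := .b
  exp k :=
    if S.firstHead xs = [] then if k = 98 then 200 * m + 101 else 100 * m + k + 2
    else 100 * m + k + 1
  count_pos := by split_ifs <;> norm_num

variable {S} {xs : Fin (S.arity m) → S.A}

theorem argWord_ne_nil (hm : 1 ≤ m) : S.argWord xs ≠ [] := by
  have := S.arity_pos m hm
  rw [← List.length_pos_iff, argWord, List.length_ofFn]
  omega

theorem length_argWord : (S.argWord xs).length = S.arity m := List.length_ofFn

theorem argWord_injective :
    Function.Injective fun xs : Fin (S.arity m) → S.A => S.argWord xs := fun xs ys h => by
  funext i
  simpa using congrFun (List.ofFn_injective h) i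

theorem fst_eq_elt_of_mem_argWord {l : Letter (GenSym S.A)} (hl : l ∈ S.argWord xs) :
    ∃ a, l.1 = .elt a := by
  obtain ⟨i, rfl⟩ := (List.mem_ofFn' _ _).mp hl
  exact ⟨xs i, rfl⟩

theorem isReduced_argWord : FreeGroup.IsReduced (S.argWord xs) := by
  rw [FreeGroup.IsReduced, List.isChain_iff_getElem]
  simp [argWord]

theorem firstHead_sublist :
    (S.firstHead xs).Sublist ((.elt (S.funcInterp m xs), false) :: S.argWord xs) := by
  classical
  unfold firstHead
  split_ifs
  · exact FreeGroup.Red.sublist FreeGroup.reduce.red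
  · exact List.sublist_cons_self _ _

theorem length_firstHead_le : (S.firstHead xs).length ≤ S.arity m + 1 := by
  simpa [length_argWord] using firstHead_sublist.length_le

theorem fst_eq_elt_of_mem_firstHead {l : Letter (GenSym S.A)} (hl : l ∈ S.firstHead xs) :
    ∃ a, l.1 = .elt a := by
  obtain rfl | hl := List.mem_cons.mp (firstHead_sublist.subset hl)
  · exact ⟨_, rfl⟩
  · exact fst_eq_elt_of_mem_argWord hl

theorem isReduced_firstHead : FreeGroup.IsReduced (S.firstHead xs) := by
  classical
  unfold firstHead
  split_ifs
  · exact FreeGroup.isReduced_iff_reduce_eq.mpr FreeGroup.reduce.idem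
  · exact isReduced_argWord

theorem fst_eq_elt_of_mem_head_tableBlocks {k : ℕ} {l : Letter (GenSym S.A)}
    (hl : l ∈ (S.tableBlocks m xs).head k) : ∃ a, l.1 = .elt a := by
  simp only [tableBlocks] at hl
  split_ifs at hl
  · exact fst_eq_elt_of_mem_firstHead hl
  · exact fst_eq_elt_of_mem_argWord hl

theorem exp_tableBlocks_le {k : ℕ} (hk : k < (S.tableBlocks m xs).count) :
    (S.tableBlocks m xs).exp k ≤ 200 * m + 101 := by
  simp only [tableBlocks] at hk ⊢
  split_ifs at hk ⊢ <;> omega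

theorem length_block_tableBlocks_le {k : ℕ} (hk : k < (S.tableBlocks m xs).count) :
    ((S.tableBlocks m xs).block k).length ≤ S.arity m + 200 * m + 102 := by
  have hexp := exp_tableBlocks_le hk
  have hfirst := length_firstHead_le (xs := xs)
  have hhead : ((S.tableBlocks m xs).head k).length ≤ S.arity m + 1 := by
    simp only [tableBlocks]
    split_ifs
    · exact hfirst
    · rw [length_argWord]
      omega
  rw [BlockWord.length_block]
  omega

theorem le_length_tableBlocks :
    99 * S.arity m + 9900 * m + 5049 ≤ (S.tableBlocks m xs).toList.length := by
  have hsum : ∑ k ∈ Finset.range 99, (S.arity m + (100 * m + k + 2)) =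
      99 * S.arity m + 9900 * m + 5049 := by
    have hid : ∑ k ∈ Finset.range 99, k = 4851 := Finset.sum_range_id 99
    rw [Finset.sum_add_distrib, Finset.sum_add_distrib, Finset.sum_add_distrib, hid]
    simp only [Finset.sum_const, Finset.card_range, smul_eq_mul]
    ring
  rw [BlockWord.length_toList, ← hsum]
  by_cases hnil : S.firstHead xs = []
  · have hcount : (S.tableBlocks m xs).count = 99 := by simp [tableBlocks, hnil]
    rw [hcount]
    refine Finset.sum_le_sum fun k hk => ?_
    have := Finset.mem_range.mp hk
    simp only [BlockWord.length_block, tableBlocks, hnil, ne_eq, not_true, false_and, if_false,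
      if_true, length_argWord]
    split_ifs <;> omega
  · have hcount : (S.tableBlocks m xs).count = 99 + 1 := by simp [tableBlocks, hnil]
    rw [hcount, BlockWord.pos, Finset.sum_range_succ' _ 99]
    refine le_add_right (Finset.sum_le_sum fun k _ => ?_)
    simp only [BlockWord.length_block, tableBlocks, hnil, Nat.add_eq_zero_iff, one_ne_zero,
      and_false, if_false, length_argWord]
    omega

theorem isProper_tableBlocks (hm : 1 ≤ m) : (S.tableBlocks m xs).IsProper where
  four_le_count := by simp only [tableBlocks]; split_ifs <;> omega
  head_ne_nil k _ := by
    simp only [tableBlocks]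
    split_ifs with h
    exacts [h.1, argWord_ne_nil hm]
  isReduced_head k _ := by
    simp only [tableBlocks]
    split_ifs
    exacts [isReduced_firstHead, isReduced_argWord]
  fst_ne_run k _ l hl := by
    obtain ⟨a, ha⟩ := fst_eq_elt_of_mem_head_tableBlocks hl
    simp [ha, tableBlocks]
  exp_pos k _ := by simp only [tableBlocks]; split_ifs <;> omega
  strictMonoOn_exp k hk l hl hkl := by
    simp only [tableBlocks, Set.mem_Iio] at hk hl ⊢
    split_ifs at hk hl ⊢ <;> omega
  five_mul_length_lt k hk := by
    have := length_block_tableBlocks_le hk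
    have := le_length_tableBlocks (xs := xs)
    unfold pieceBound
    omega

theorem length_block_chainBlocks {A : Type} {lo : ℕ} {x y : GenSym A} (k : ℕ) :
    ((chainBlocks lo x y).block k).length = 1 + (lo + k + 1) ^ 2 := by
  rw [BlockWord.length_block]
  rfl

theorem length_block_chainBlocks_le {A : Type} {lo k : ℕ} {x y : GenSym A} (hk : k < 1000) :
    ((chainBlocks lo x y).block k).length ≤ 1 + (lo + 1000) ^ 2 := by
  rw [length_block_chainBlocks]
  exact Nat.add_le_add_left (Nat.pow_le_pow_left (by omega) 2) 1

theorem le_length_chainBlocks {A : Type} {lo : ℕ} {x y : GenSym A} :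
    500 * (1 + (lo + 501) ^ 2) ≤ (chainBlocks lo x y).toList.length := by
  have hsub : Finset.Ico 500 1000 ⊆ Finset.range (chainBlocks lo x y).count := fun k hk =>
    Finset.mem_range.mpr (Finset.mem_Ico.mp hk).2
  have hblock (k : ℕ) (hk : k ∈ Finset.Ico 500 1000) :
      1 + (lo + 501) ^ 2 ≤ ((chainBlocks lo x y).block k).length := by
    have := (Finset.mem_Ico.mp hk).1
    rw [length_block_chainBlocks]
    exact Nat.add_le_add_left (Nat.pow_le_pow_left (by omega) 2) 1
  have hsum := Finset.card_nsmul_le_sum _ _ _ hblock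
  rw [Nat.card_Ico, smul_eq_mul] at hsum
  rw [BlockWord.length_toList]
  exact hsum.trans (Finset.sum_le_sum_of_subset hsub)

theorem isProper_chainBlocks {A : Type} {lo : ℕ} {x y : GenSym A} (hxy : x ≠ y) :
    (chainBlocks lo x y).IsProper where
  four_le_count := by norm_num [chainBlocks]
  head_ne_nil k _ := List.cons_ne_nil _ _
  isReduced_head k _ := FreeGroup.IsReduced.singleton
  fst_ne_run k _ l hl := List.mem_singleton.mp hl ▸ hxy
  exp_pos k _ := by simp only [chainBlocks]; positivity
  strictMonoOn_exp k _ l _ hkl := by simp only [chainBlocks]; gcongr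
  five_mul_length_lt k hk := by
    have := length_block_chainBlocks_le (lo := lo) (x := x) (y := y) hk
    have := le_length_chainBlocks (lo := lo) (x := x) (y := y)
    have : (lo + 1000) ^ 2 ≤ (2 * (lo + 501)) ^ 2 := Nat.pow_le_pow_left (by omega) 2
    rw [mul_pow] at this
    unfold pieceBound
    omega

theorem exp_add_one_tableBlocks {k : ℕ} (hk : k + 2 < (S.tableBlocks m xs).count) :
    (S.tableBlocks m xs).exp (k + 1) = (S.tableBlocks m xs).exp k + 1 := by
  simp only [tableBlocks] at hk ⊢
  split_ifs at hk ⊢ <;> omega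

theorem exp_div_and_head_of_exp_add_one {k : ℕ} (hk : k + 1 < (S.tableBlocks m xs).count)
    (h : (S.tableBlocks m xs).exp (k + 1) = (S.tableBlocks m xs).exp k + 1) :
    (S.tableBlocks m xs).exp k / 100 = m ∧
      (S.tableBlocks m xs).head (k + 1) = S.argWord xs := by
  refine ⟨?_, if_neg fun hfirst => Nat.succ_ne_zero k hfirst.2⟩
  simp only [tableBlocks] at hk h ⊢
  split_ifs at hk h ⊢ <;> omega

theorem exp_zero_lt_tableBlocks {k : ℕ} (hk : k + 1 = (S.tableBlocks m xs).count) :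
    (S.tableBlocks m xs).exp 0 < (S.tableBlocks m xs).exp k := by
  simp only [tableBlocks, OfNat.zero_ne_ofNat, if_false] at hk ⊢
  split_ifs at hk ⊢ <;> omega

theorem exp_div_and_head_of_exp_index_add_one {j : ℤ}
    (h : (S.tableBlocks m xs).exp ((S.tableBlocks m xs).index (j + 1)) =
      (S.tableBlocks m xs).exp ((S.tableBlocks m xs).index j) + 1) :
    (S.tableBlocks m xs).exp ((S.tableBlocks m xs).index j) / 100 = m ∧
      (S.tableBlocks m xs).head ((S.tableBlocks m xs).index (j + 1)) = S.argWord xs := by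
  obtain hlast | hnext := (Nat.succ_le_of_lt ((S.tableBlocks m xs).index_lt j)).eq_or_lt
  · rw [BlockWord.index_add_one_of_last _ hlast] at h
    have := exp_zero_lt_tableBlocks hlast
    omega
  · rw [BlockWord.index_add_one _ hnext] at h ⊢
    exact exp_div_and_head_of_exp_add_one hnext h

variable (S) in
/-- The cyclic words of all relators of the presentation but the powers of `f₁` and `f₂`. -/
inductive IsRelatorBlocks : BlockWord (GenSym S.A) → Prop
  | chain {lo : ℕ} {x y : GenSym S.A} (h : IsChainPair lo x y) :
    IsRelatorBlocks (chainBlocks lo x y)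
  | table {m : ℕ} (hm : 1 ≤ m) (xs : Fin (S.arity m) → S.A) (h : S.isFunc m ∨ S.relInterp m xs) :
    IsRelatorBlocks (S.tableBlocks m xs)

namespace IsRelatorBlocks

variable {B B' : BlockWord (GenSym S.A)} {g : GenSym S.A} {s t u : ℤ}

theorem isProper (hB : S.IsRelatorBlocks B) : B.IsProper := by
  cases hB with
  | chain h => exact isProper_chainBlocks h.ne
  | table hm xs _ => exact isProper_tableBlocks hm

theorem run_ne_elt (hB : S.IsRelatorBlocks B) (a : S.A) : B.run ≠ .elt a := by
  cases hB with
  | chain h => exact h.right_ne_elt a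
  | table => simp [tableBlocks]

theorem of_mem_head (hB : S.IsRelatorBlocks B) {k : ℕ} {l : Letter (GenSym S.A)}
    (hl : l ∈ B.head k) : (∃ a, l.1 = .elt a) ∨ B.head k = [l] ∧ l.2 = true := by
  cases hB with
  | chain h =>
    obtain rfl := List.mem_singleton.mp hl
    exact .inr ⟨rfl, rfl⟩
  | table => exact .inl (fst_eq_elt_of_mem_head_tableBlocks hl)

theorem eq_elt_of_line_eq_neg (hB : S.IsRelatorBlocks B) (h : B.line u = (g, false)) :
    ∃ a, g = .elt a := by
  obtain hrun | ⟨k, -, hmem⟩ := B.line_eq_run_or_mem_head hB.isProper.block_ne_nil u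
  · simp [hrun] at h
  · rw [h] at hmem
    simpa using hB.of_mem_head hmem

theorem eq_run_of_line_repeat (hB : S.IsRelatorBlocks B) (hg : ∀ a, g ≠ .elt a)
    (h : B.line u = (g, true)) (h' : B.line (u + 1) = (g, true)) : g = B.run := by
  obtain ⟨j, hle, hlt⟩ := B.exists_start_le hB.isProper.block_ne_nil u
  have hhead := hB.isProper.start_add_length_head_lt j
  obtain hu | hu := le_or_gt (B.start j + (B.head (B.index j)).length) u
  · exact congrArg Prod.fst (h.symm.trans (B.line_eq_run hu hlt))
  obtain ⟨o, rfl⟩ := Int.le.dest hle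
  have hmem := List.mem_of_getElem? (B.getElem?_head (j := j) (o := o) (by omega))
  rw [h] at hmem
  obtain ⟨a, ha⟩ | ⟨hsingle, -⟩ := hB.of_mem_head hmem
  · exact absurd ha (hg a)
  · rw [hsingle, List.length_singleton] at hu hhead
    have hrun := B.line_eq_run (j := j) (u := B.start j + o + 1)
      (by rw [hsingle, List.length_singleton]; omega) (by omega)
    exact congrArg Prod.fst (h'.symm.trans hrun)

theorem run_eq (hB : S.IsRelatorBlocks B) (hB' : S.IsRelatorBlocks B')
    (h : ∀ u, t ≤ u → u < t + pieceBound B.toList.length → B.line u = B'.line (u + s)) :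
    B.run = B'.run := by
  obtain ⟨j, hj, hlt, hlt'⟩ := hB.isProper.exists_blocks_in_window t
  have hpos := hB.isProper.exp_pos _ (B.index_lt j)
  have hexp := hB.isProper.strictMonoOn_exp (B.index_lt j) (B.index_lt (j + 1))
    (by rw [B.index_add_one (by omega)]; omega)
  have hstart := hB.isProper.strictMono_start (lt_add_one j)
  have hnext := B.start_add_one (j + 1)
  rw [B.length_block] at hnext
  have hrun (u : ℤ) (hu : B.start (j + 1 + 1) - 2 ≤ u) (hu' : u < B.start (j + 1 + 1)) :
      B'.line (u + s) = (B.run, true) := by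
    rw [← h u (by omega) (by omega), B.line_eq_run (j := j + 1) (by omega) hu']
  refine hB'.eq_run_of_line_repeat hB.run_ne_elt (hrun _ le_rfl (by omega)) ?_
  rw [add_right_comm]
  exact hrun _ (by omega) (by omega)

theorem eq_of_matching_blocks (hB : S.IsRelatorBlocks B) (hB' : S.IsRelatorBlocks B')
    (hrun : B.run = B'.run) {j j' : ℤ} (hj : B.index j + 2 < B.count)
    (hexp : B.exp (B.index j) = B'.exp (B'.index j'))
    (hexp' : B.exp (B.index (j + 1)) = B'.exp (B'.index (j' + 1)))
    (hhead : B.head (B.index (j + 1)) = B'.head (B'.index (j' + 1))) : B = B' := by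
  cases hB with
  | @chain lo x y h =>
    cases hB' with
    | chain h' =>
      obtain rfl : x = _ := congrArg Prod.fst (List.singleton_inj.mp hhead)
      obtain rfl : y = _ := hrun
      rw [h.offset_unique h']
    | table => exact absurd hrun h.right_ne_b
  | @table m hm xs h =>
    cases hB' with
    | chain h' => exact absurd hrun.symm h'.right_ne_b
    | table hm' xs' h' =>
      have hsucc := exp_add_one_tableBlocks hj
      rw [← BlockWord.index_add_one _ (by omega)] at hsucc
      obtain ⟨hm, hargs⟩ := exp_div_and_head_of_exp_index_add_one hsucc
      obtain ⟨hm', hargs'⟩ := exp_div_and_head_of_exp_index_add_one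
        (hexp'.symm.trans (hsucc.trans (hexp ▸ rfl)))
      obtain rfl : m = _ := by rw [← hm, hexp, hm']
      rw [argWord_injective (hargs.symm.trans (hhead.trans hargs'))]

theorem shift_eq_of_agree (hB : S.IsRelatorBlocks B) (hB' : S.IsRelatorBlocks B')
    (h : ∀ i : ℕ, i < pieceBound B.toList.length → B.line.shift t i = B'.line.shift s i) :
    B.line.shift t = B'.line.shift s ∧ B = B' := by
  have hwindow (u : ℤ) (hu : t ≤ u) (hu' : u < t + pieceBound B.toList.length) :
      B.line u = B'.line (u + (s - t)) := by
    obtain ⟨i, rfl⟩ := Int.le.dest hu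
    have hi := h i (by omega)
    simp only [Line.shift] at hi
    rw [add_comm t, hi]
    congr 1
    ring
  have hrun := hB.run_eq hB' hwindow
  obtain ⟨j, j', hj, hstart, hexp, hexp', hhead⟩ :=
    hB.isProper.exists_matching_blocks hB'.isProper hrun hwindow
  obtain rfl := hB.eq_of_matching_blocks hB' hrun hj hexp hexp' hhead
  have hindex := hB.isProper.strictMonoOn_exp.injOn (B.index_lt j) (B.index_lt j') hexp
  refine ⟨funext fun i => ?_, rfl⟩
  rw [Line.shift, ← B.line_add_start_sub_start hindex.symm, hstart, Line.shift]
  congr 1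
  ring

theorem exists_line_ne (hB : S.IsRelatorBlocks B) (hg : g = .f1 ∨ g = .f2) (t : ℤ) :
    ∃ u, t ≤ u ∧ u ≤ t + (1 + 5000 ^ 2) ∧ B.line u ≠ (g, true) := by
  obtain ⟨j, hle, hlt⟩ := B.exists_start_le hB.isProper.block_ne_nil t
  have hstart := hB.isProper.exists_start_eq_iff.mp ⟨j + 1, rfl⟩
  cases hB with
  | @chain lo x y h =>
    have hlo := h.le_four_thousand
    have hlength := length_block_chainBlocks_le (lo := lo) (x := x) (y := y)
      ((chainBlocks lo x y).index_lt j)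
    have hsq : (lo + 1000) ^ 2 ≤ 5000 ^ 2 := Nat.pow_le_pow_left (by omega) 2
    have hnext := (chainBlocks lo x y).start_add_one j
    by_cases hgy : g = y
    · exact ⟨_, hlt.le, by omega, by rw [hgy]; exact hstart.2⟩
    · exact ⟨_, Int.le_sub_one_of_lt hlt, by omega, fun hline =>
        hgy (congrArg Prod.fst (hline.symm.trans hstart.1))⟩
  | table hm xs h =>
    refine ⟨t, le_rfl, by omega, fun hline => ?_⟩
    obtain hrun | ⟨k, -, hmem⟩ :=
      BlockWord.line_eq_run_or_mem_head _ (isProper_tableBlocks hm).block_ne_nil t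
    · have : g = .b := congrArg Prod.fst (hline.symm.trans hrun)
      simp [this] at hg
    · obtain ⟨a, ha⟩ := fst_eq_elt_of_mem_head_tableBlocks hmem
      have : g = .elt a := (congrArg Prod.fst hline).symm.trans ha
      simp [this] at hg

end IsRelatorBlocks

/-- `IsPower p₁ p₂ f p` says that `f ^ p` is one of the relators of the presentation. -/
inductive IsPower {A : Type} (p₁ p₂ : ℕ) : GenSym A → ℕ → Prop
  | f1 : IsPower p₁ p₂ .f1 p₁
  | f2 : IsPower p₁ p₂ .f2 p₂

variable (S) in
/-- The lines of the relators of the presentation, as opposed to those of their inverses. -/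
inductive IsPositiveLine (p₁ p₂ : ℕ) : Line (GenSym S.A) → ℕ → Prop
  | blocks {B : BlockWord (GenSym S.A)} (hB : S.IsRelatorBlocks B) (t : ℤ) :
    IsPositiveLine p₁ p₂ (B.line.shift t) B.toList.length
  | power {f : GenSym S.A} {p : ℕ} (h : IsPower p₁ p₂ f p) :
    IsPositiveLine p₁ p₂ (fun _ => (f, true)) p

section PowerRelators

variable {p₁ p₂ : ℕ}

theorem IsPower.exponent_unique {A : Type} {f : GenSym A} {p q : ℕ} (h : IsPower p₁ p₂ f p)
    (h' : IsPower p₁ p₂ f q) : p = q := by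
  cases h <;> cases h' <;> rfl

theorem IsPower.eq_f1_or_eq_f2 {A : Type} {f : GenSym A} {p : ℕ} (h : IsPower p₁ p₂ f p) :
    f = .f1 ∨ f = .f2 := by
  cases h <;> simp

theorem IsPower.lt {A : Type} {f : GenSym A} {p n : ℕ} (h₁ : n < p₁) (h₂ : n < p₂)
    (h : IsPower p₁ p₂ f p) : n < p := by
  cases h <;> assumption

end PowerRelators

namespace IsPositiveLine

variable {p₁ p₂ L M : ℕ} {ρ σ : Line (GenSym S.A)}

theorem shift (h : S.IsPositiveLine p₁ p₂ ρ L) (t : ℤ) : S.IsPositiveLine p₁ p₂ (ρ.shift t) L := by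
  cases h with
  | blocks hB s =>
    rw [Line.shift_shift]
    exact .blocks hB _
  | power h => exact .power h

theorem periodic (h : S.IsPositiveLine p₁ p₂ ρ L) : Function.Periodic ρ (L : ℤ) := by
  cases h with
  | @blocks B hB t =>
    intro i
    rw [Line.shift, add_right_comm]
    exact B.line_periodic _
  | power h => exact fun _ => rfl

theorem isReduced (h : S.IsPositiveLine p₁ p₂ ρ L) : ρ.IsReduced := by
  cases h with
  | blocks hB t =>
    intro i
    rw [Line.shift, add_right_comm]
    exact hB.isProper.isReduced_line _
  | power h => exact fun _ => (Letter.inv_ne_self _).symm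

theorem large (h₁ : 10 ^ 10 < p₁) (h₂ : 10 ^ 10 < p₂) (h : S.IsPositiveLine p₁ p₂ ρ L) :
    13 ≤ L := by
  cases h with
  | @blocks B hB t =>
    have hblock := List.length_pos_iff.mpr (hB.isProper.block_ne_nil 0 B.count_pos)
    have := hB.isProper.five_mul_length_lt 0 B.count_pos
    unfold pieceBound at this
    omega
  | power h =>
    have := h.lt h₁ h₂
    omega

theorem eq_elt_of_apply_eq_neg (h : S.IsPositiveLine p₁ p₂ ρ L) {i : ℤ} {g : GenSym S.A}
    (hi : ρ i = (g, false)) : ∃ a, g = .elt a := by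
  cases h with
  | blocks hB t => exact hB.eq_elt_of_line_eq_neg hi
  | power h => simp at hi

theorem exists_apply_eq_pos (h₁ : 10 ^ 10 < p₁) (h₂ : 10 ^ 10 < p₂)
    (h : S.IsPositiveLine p₁ p₂ ρ L) :
    ∃ i : ℕ, i < pieceBound L ∧ ∃ g, (∀ a, g ≠ .elt a) ∧ ρ i = (g, true) := by
  cases h with
  | @blocks B hB t =>
    obtain ⟨j, -, hlt, hlt'⟩ := hB.isProper.exists_blocks_in_window t
    have hj := hB.isProper.strictMono_start (show j < j + 1 + 1 by omega)
    have hrun := (hB.isProper.exists_start_eq_iff.mp ⟨j, rfl⟩).1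
    refine ⟨(B.start j - 1 - t).toNat, by omega, B.run, hB.run_ne_elt, ?_⟩
    rw [← hrun, Line.shift]
    congr 1
    omega
  | @power f p h =>
    have := h.lt h₁ h₂
    refine ⟨0, by unfold pieceBound; omega, f, fun a ha => ?_, rfl⟩
    simpa [ha] using h.eq_f1_or_eq_f2

theorem not_shift_line_eq_const {B : BlockWord (GenSym S.A)} (hB : S.IsRelatorBlocks B) {t : ℤ}
    {l : Letter (GenSym S.A)}
    (h : ∀ i : ℕ, i < pieceBound B.toList.length → B.line.shift t i = l) : False := by
  obtain ⟨j, -, hlt, hlt'⟩ := hB.isProper.exists_blocks_in_window t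
  have hj := hB.isProper.strictMono_start (show j < j + 1 + 1 by omega)
  obtain ⟨hrun, hne⟩ := hB.isProper.exists_start_eq_iff.mp ⟨j, rfl⟩
  have hletter (u : ℤ) (hu : t ≤ u) (hu' : u < t + pieceBound B.toList.length) : B.line u = l := by
    obtain ⟨i, rfl⟩ := Int.le.dest hu
    rw [← h i (by omega), Line.shift, add_comm]
  rw [hletter _ (by omega) (by omega)] at hne hrun
  exact hne hrun

theorem not_const_eq_shift_line {p : ℕ} (hp : 10 ^ 10 < p) {f : GenSym S.A} (hf : f = .f1 ∨ f = .f2)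
    {B : BlockWord (GenSym S.A)} (hB : S.IsRelatorBlocks B) {t : ℤ}
    (h : ∀ i : ℕ, i < pieceBound p → (f, true) = B.line.shift t i) : False := by
  obtain ⟨u, hle, hlt, hne⟩ := hB.exists_line_ne hf t
  obtain ⟨i, rfl⟩ := Int.le.dest hle
  refine hne ?_
  rw [h i (by unfold pieceBound; omega), Line.shift, add_comm]

theorem piece (h₁ : 10 ^ 10 < p₁) (h₂ : 10 ^ 10 < p₂) (hρ : S.IsPositiveLine p₁ p₂ ρ L)
    (hσ : S.IsPositiveLine p₁ p₂ σ M) (h : ∀ i : ℕ, i < pieceBound L → ρ i = σ i) :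
    ρ = σ ∧ L = M := by
  cases hρ with
  | blocks hB t =>
    cases hσ with
    | blocks hB' t' =>
      obtain ⟨hline, rfl⟩ := hB.shift_eq_of_agree hB' h
      exact ⟨hline, rfl⟩
    | power => exact (not_shift_line_eq_const hB h).elim
  | @power f p hf =>
    have hp := hf.lt h₁ h₂
    cases hσ with
    | blocks hB t => exact (not_const_eq_shift_line hp hf.eq_f1_or_eq_f2 hB h).elim
    | @power g q hg =>
      obtain rfl : f = g := congrArg Prod.fst (h 0 (by unfold pieceBound; omega))
      exact ⟨rfl, hf.exponent_unique hg⟩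

theorem not_agree_reverse (h₁ : 10 ^ 10 < p₁) (h₂ : 10 ^ 10 < p₂)
    (hρ : S.IsPositiveLine p₁ p₂ ρ L) (hσ : S.IsPositiveLine p₁ p₂ σ M) :
    ¬ ∀ i : ℕ, i < pieceBound L → ρ i = σ.reverse i := fun h => by
  obtain ⟨i, hi, g, hg, hpos⟩ := hρ.exists_apply_eq_pos h₁ h₂
  rw [h i hi] at hpos
  have hneg := congrArg Letter.inv hpos
  rw [Line.reverse, Letter.inv_inv] at hneg
  obtain ⟨a, ha⟩ := hσ.eq_elt_of_apply_eq_neg hneg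
  exact hg a ha

end IsPositiveLine

variable (S) in
/-- The small cancellation family of the presentation of `G(𝒜)`. -/
def relatorSystem {p₁ p₂ : ℕ} (h₁ : 10 ^ 10 < p₁) (h₂ : 10 ^ 10 < p₂) :
    RelatorSystem (GenSym S.A) where
  IsRelator ρ L := S.IsPositiveLine p₁ p₂ ρ L ∨ S.IsPositiveLine p₁ p₂ ρ.reverse L
  shift hρ t := hρ.imp (·.shift t) fun h => by
    rw [Line.reverse_shift]
    exact h.shift (-t)
  reverse hρ := by
    rw [Line.reverse_reverse]
    exact hρ.symm
  periodic {ρ L} hρ := by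
    obtain h | h := hρ
    · exact h.periodic
    · exact ρ.reverse_reverse ▸ Line.periodic_reverse h.periodic
  reduced {ρ L} hρ := by
    obtain h | h := hρ
    · exact h.isReduced
    · exact ρ.reverse_reverse ▸ h.isReduced.reverse
  large hρ := hρ.elim (·.large h₁ h₂) (·.large h₁ h₂)
  piece {ρ L σ M} hρ hσ h := by
    -- Reading the windows backwards turns agreement of two inverses into agreement of relators.
    have hreverse (i : ℕ) (hi : i < pieceBound L) :
        ρ.reverse.shift (-pieceBound L) i = σ.reverse.shift (-pieceBound L) i := by
      have := h (pieceBound L - 1 - i) (by omega)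
      rw [Line.shift, Line.shift, Line.reverse, Line.reverse]
      convert congrArg Letter.inv this using 3 <;> omega
    obtain hρ | hρ := hρ <;> obtain hσ | hσ := hσ
    · exact hρ.piece h₁ h₂ hσ h
    · refine (hρ.not_agree_reverse h₁ h₂ hσ fun i hi => ?_).elim
      rw [Line.reverse_reverse, h i hi]
    · refine ((hρ.shift (-pieceBound L)).not_agree_reverse h₁ h₂
        (hσ.shift (pieceBound L)) fun i hi => ?_).elim
      rw [hreverse i hi, Line.reverse_shift]
    · obtain ⟨heq, rfl⟩ :=
        (hρ.shift (-pieceBound L)).piece h₁ h₂ (hσ.shift (-pieceBound L)) hreverse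
      have hline := congrArg (Line.shift · (pieceBound L)) heq
      simp only [Line.shift_shift, neg_add_cancel, Line.shift_zero] at hline
      exact ⟨by rw [← ρ.reverse_reverse, hline, σ.reverse_reverse], rfl⟩

theorem mk_argWord :
    FreeGroup.mk (S.argWord xs) = (List.ofFn fun i => FreeGroup.of (.elt (xs i))).prod := by
  rw [← FreeGroup.lift_of_apply (FreeGroup.mk (S.argWord xs)), FreeGroup.lift_mk, argWord,
    List.map_ofFn]
  rfl

theorem mk_firstHead (hf : S.isFunc m) :
    FreeGroup.mk (S.firstHead xs) =
      (FreeGroup.of (.elt (S.funcInterp m xs)))⁻¹ * FreeGroup.mk (S.argWord xs) := by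
  classical
  rw [firstHead, if_pos hf, FreeGroup.reduce.self, FreeGroup.of, FreeGroup.inv_mk,
    FreeGroup.mul_mk]
  rfl

theorem wProd_of_eq_prod_mk_argWord :
    wProd m (fun i => FreeGroup.of (.elt (xs i))) (FreeGroup.of .b) =
      ((List.range 100).map fun k =>
        FreeGroup.mk (S.argWord xs) * FreeGroup.of .b ^ (100 * m + k + 1)).prod := by
  rw [wProd, mk_argWord]

theorem mk_chainBlocks {A : Type} (lo : ℕ) (x y : GenSym A) :
    FreeGroup.mk (chainBlocks lo x y).toList =
      chainProd lo (FreeGroup.of x) (FreeGroup.of y) :=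
  BlockWord.mk_toList _

theorem mk_tableBlocks_of_not_isFunc (hm : 1 ≤ m) (hf : ¬ S.isFunc m) :
    FreeGroup.mk (S.tableBlocks m xs).toList =
      wProd m (fun i => FreeGroup.of (.elt (xs i))) (FreeGroup.of .b) := by
  have hfirst : S.firstHead xs = S.argWord xs := if_neg hf
  simp [BlockWord.mk_toList, wProd_of_eq_prod_mk_argWord, tableBlocks, hfirst, argWord_ne_nil hm]

theorem isConj_mk_tableBlocks_of_isFunc (hf : S.isFunc m) :
    IsConj (FreeGroup.mk (S.tableBlocks m xs).toList)
      (wProd m (fun i => FreeGroup.of (.elt (xs i))) (FreeGroup.of .b) *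
        (FreeGroup.of (.elt (S.funcInterp m xs)))⁻¹) := by
  have hmk := mk_firstHead (xs := xs) hf
  rw [BlockWord.mk_toList, wProd_of_eq_prod_mk_argWord, isConj_iff]
  set P := FreeGroup.mk (S.argWord xs) with hP
  set v := FreeGroup.of (GenSym.elt (S.funcInterp m xs))
  by_cases hnil : S.firstHead xs = []
  · have hv : v = P := by rwa [hnil, ← FreeGroup.one_eq_mk, eq_comm, inv_mul_eq_one] at hmk
    have hcount : (S.tableBlocks m xs).count = 98 + 1 := if_pos hnil
    have hmiddle : (List.range 98).map (fun k => FreeGroup.mk ((S.tableBlocks m xs).head k) *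
          FreeGroup.of (S.tableBlocks m xs).run ^ (S.tableBlocks m xs).exp k) =
        (List.range 98).map fun k => P * FreeGroup.of .b ^ (100 * m + k.succ + 1) := by
      refine List.map_congr_left fun k hk => ?_
      have : k ≠ 98 := (List.mem_range.mp hk).ne
      simp [tableBlocks, hnil, this, hP, add_assoc]
    refine ⟨P * FreeGroup.of .b ^ (100 * m + 1), ?_⟩
    rw [hv, hcount, List.prod_range_succ _ 98, hmiddle, List.prod_range_succ _ 99,
      List.prod_range_succ' _ 98]
    simp only [tableBlocks, hnil, ← hP, ne_eq, not_true_eq_false, false_and, if_true, if_false]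
    group
  · have hcount : (S.tableBlocks m xs).count = 99 + 1 := if_neg hnil
    refine ⟨v, ?_⟩
    rw [hcount, List.prod_range_succ' _ 99, List.prod_range_succ' _ 99]
    simp only [tableBlocks, hnil, hmk, ← hP, ne_eq, not_false_eq_true, true_and, if_true, if_false,
      Nat.succ_ne_zero]
    group

theorem action_mk_toList_eq_one (h₁ : 10 ^ 10 < p₁) (h₂ : 10 ^ 10 < p₂)
    {B : BlockWord (GenSym S.A)} (hB : S.IsRelatorBlocks B) :
    action (S.relatorSystem h₁ h₂) (FreeGroup.mk B.toList) = 1 := by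
  have hρ : (S.relatorSystem h₁ h₂).IsRelator B.line B.toList.length := by
    exact .inl (by simpa only [Line.shift_zero] using IsPositiveLine.blocks hB 0)
  simpa only [B.word_line] using action_relator _ hρ

theorem action_of_pow_eq_one (h₁ : 10 ^ 10 < p₁) (h₂ : 10 ^ 10 < p₂) {f : GenSym S.A} {p : ℕ}
    (hf : IsPower p₁ p₂ f p) :
    action (S.relatorSystem h₁ h₂) (FreeGroup.of f ^ p) = 1 := by
  have h := action_relator (S.relatorSystem h₁ h₂) (.inl (IsPositiveLine.power hf))
  rwa [show Line.word (fun _ => (f, true)) p = (List.replicate p [(f, true)]).flatten by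
    simp [Line.word, List.map_const'], ← FreeGroup.pow_mk] at h

/-! ### Homomorphisms out of `G(𝒜)` -/

section Realizations

variable {G H : Type*} [Group G] [Group H] {p₁ p₂ : ℕ}

variable (S) in
/-- A realization of `S` in a group assigns elements to the generators so that the relators of the
presentation of `G(𝒜)` become trivial. -/
structure IsRealization (p₁ p₂ : ℕ) (f : GenSym S.A → G) : Prop where
  pow_eq_one {x : GenSym S.A} {p : ℕ} : IsPower p₁ p₂ x p → f x ^ p = 1
  chainProd_eq_one {lo : ℕ} {x y : GenSym S.A} : IsChainPair lo x y → chainProd lo (f x) (f y) = 1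
  wProd_eq {m : ℕ} (hm : 1 ≤ m) (hf : S.isFunc m) (xs : Fin (S.arity m) → S.A) :
    wProd m (fun i => f (.elt (xs i))) (f .b) = f (.elt (S.funcInterp m xs))
  wProd_eq_one {m : ℕ} (hm : 1 ≤ m) (hf : ¬ S.isFunc m) {xs : Fin (S.arity m) → S.A}
    (hrel : S.relInterp m xs) : wProd m (fun i => f (.elt (xs i))) (f .b) = 1

theorem IsRealization.lift_eq_one {f : GenSym S.A → G} (hf : S.IsRealization p₁ p₂ f) :
    ∀ r ∈ grpRels S p₁ p₂, FreeGroup.lift f r = 1 := by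
  have hchain {lo : ℕ} {x y : GenSym S.A} (h : IsChainPair lo x y) :
      FreeGroup.lift f (chainProd lo (FreeGroup.of x) (FreeGroup.of y)) = 1 := by
    simpa only [map_chainProd, FreeGroup.lift_apply_of] using hf.chainProd_eq_one h
  have hpow {x : GenSym S.A} {p : ℕ} (h : IsPower p₁ p₂ x p) :
      FreeGroup.lift f (FreeGroup.of x ^ p) = 1 := by
    simpa only [map_pow, FreeGroup.lift_apply_of] using hf.pow_eq_one h
  rintro r (((hr | ⟨a, hr | hr⟩) | ⟨m, hm, hfunc, xs, hr⟩) | ⟨m, hm, hfunc, xs, hrel, hr⟩)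
  · obtain hr | hr | hr | hr | hr | hr | hr | hr | hr | hr := hr <;> rw [hr]
    exacts [hpow .f1, hpow .f2, hchain .f1_f2, hchain .f2_f1, hchain .b_f1, hchain .b_f2,
      hchain .c_f1, hchain .c_f2, hchain .d_f1, hchain .d_f2]
  · exact hr ▸ hchain (.elt_c a)
  · exact hr ▸ hchain (.elt_d a)
  · simpa only [hr, map_mul, map_inv, map_wProd, FreeGroup.lift_apply_of, mul_inv_eq_one] using
      hf.wProd_eq hm hfunc xs
  · simpa only [hr, map_wProd, FreeGroup.lift_apply_of] using hf.wProd_eq_one hm hfunc hrel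

theorem IsRealization.exists_hom {f : GenSym S.A → G} (hf : S.IsRealization p₁ p₂ f) :
    ∃ φ : GA S p₁ p₂ →* G, ∀ x, φ (gen S p₁ p₂ x) = f x :=
  ⟨PresentedGroup.toGroup hf.lift_eq_one, fun _ => PresentedGroup.toGroup.of hf.lift_eq_one⟩

variable (S) in
theorem isRealization_gen (p₁ p₂ : ℕ) : S.IsRealization p₁ p₂ (gen S p₁ p₂) where
  pow_eq_one {x p} h := by
    have hmem : FreeGroup.of x ^ p ∈ grpRels S p₁ p₂ := by
      cases h <;> simp [grpRels]
    exact (map_pow _ _ _).symm.trans (PresentedGroup.one_of_mem hmem)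
  chainProd_eq_one {lo x y} h := by
    have hmem : chainProd lo (FreeGroup.of x) (FreeGroup.of y) ∈ grpRels S p₁ p₂ := by
      cases h
      case elt_c a => exact .inl (.inl (.inr ⟨a, .inl rfl⟩))
      case elt_d a => exact .inl (.inl (.inr ⟨a, .inr rfl⟩))
      all_goals simp [grpRels]
    exact (map_chainProd _ _ _ _).symm.trans (PresentedGroup.one_of_mem hmem)
  wProd_eq hm hf xs := by
    have hone := PresentedGroup.one_of_mem (rels := grpRels S p₁ p₂)
      (.inl (.inr ⟨_, hm, hf, xs, rfl⟩))
    rwa [map_mul, map_inv, map_wProd, mul_inv_eq_one] at hone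
  wProd_eq_one hm hf xs hrel := by
    have hone := PresentedGroup.one_of_mem (rels := grpRels S p₁ p₂)
      (.inr ⟨_, hm, hf, xs, hrel, rfl⟩)
    rwa [map_wProd] at hone

theorem isRealization_action (h₁ : 10 ^ 10 < p₁) (h₂ : 10 ^ 10 < p₂) :
    S.IsRealization p₁ p₂ fun x => action (S.relatorSystem h₁ h₂) (FreeGroup.of x) where
  pow_eq_one h := by rw [← map_pow, action_of_pow_eq_one h₁ h₂ h]
  chainProd_eq_one h := by
    rw [← map_chainProd, ← mk_chainBlocks, action_mk_toList_eq_one h₁ h₂ (.chain h)]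
  wProd_eq hm hf xs := by
    have hconj := (action (S.relatorSystem h₁ h₂)).map_isConj
      (isConj_mk_tableBlocks_of_isFunc (xs := xs) hf)
    rwa [action_mk_toList_eq_one h₁ h₂ (.table hm xs (.inl hf)), isConj_one_right, map_mul,
      map_inv, mul_inv_eq_one, map_wProd] at hconj
  wProd_eq_one hm hf xs hrel := by
    have hone := action_mk_toList_eq_one h₁ h₂ (.table hm xs (.inr hrel))
    rwa [mk_tableBlocks_of_not_isFunc hm hf, map_wProd] at hone

theorem gen_injective (h₁ : 10 ^ 10 < p₁) (h₂ : 10 ^ 10 < p₂) :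
    Function.Injective (gen S p₁ p₂) := by
  obtain ⟨φ, hφ⟩ := (S.isRealization_action h₁ h₂).exists_hom
  refine Function.Injective.of_comp (f := φ) ?_
  simpa only [Function.comp_def, hφ] using action_of_injective (S.relatorSystem h₁ h₂)

end Realizations

variable (S) in
/-- Closure of a subset of the domain under the function symbols. -/
def IsClosedUnderFunctions (B : Set S.A) : Prop :=
  ∀ m, 1 ≤ m → S.isFunc m → ∀ as : Fin (S.arity m) → S.A, (∀ i, as i ∈ B) → S.funcInterp m as ∈ B

variable (S) in
/-- Finite generation of the structure: only the whole domain contains a suitable finite set and is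
closed under the function symbols. -/
def IsFinitelyGenerated : Prop :=
  ∃ s : Set S.A, s.Finite ∧ ∀ B : Set S.A, s ⊆ B → S.IsClosedUnderFunctions B → B = Set.univ

theorem isClosedUnderFunctions_setOf_gen_mem {p₁ p₂ : ℕ} {K : Subgroup (GA S p₁ p₂)}
    (hb : gen S p₁ p₂ .b ∈ K) :
    S.IsClosedUnderFunctions {a | gen S p₁ p₂ (.elt a) ∈ K} := fun m hm hf as has => by
  rw [Set.mem_ofPred_eq, ← (S.isRealization_gen p₁ p₂).wProd_eq hm hf as]
  exact wProd_mem has hb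

theorem IsFinitelyGenerated.group_fg (h : S.IsFinitelyGenerated) (p₁ p₂ : ℕ) :
    Group.FG (GA S p₁ p₂) := by
  obtain ⟨s, hs, hgen⟩ := h
  let T : Set (GenSym S.A) := .elt '' s ∪ {.b, .c, .d, .f1, .f2}
  let K := Subgroup.closure (gen S p₁ p₂ '' T)
  have hT {x : GenSym S.A} (hx : x ∈ T) : gen S p₁ p₂ x ∈ K := Subgroup.subset_closure ⟨x, hx, rfl⟩
  have hdomain : {a | gen S p₁ p₂ (.elt a) ∈ K} = Set.univ :=
    hgen _ (fun a ha => hT (.inl ⟨a, ha, rfl⟩))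
      (isClosedUnderFunctions_setOf_gen_mem (hT (.inr (by simp))))
  rw [Group.fg_iff]
  refine ⟨gen S p₁ p₂ '' T, ?_, ((hs.image _).union (Set.toFinite _)).image _⟩
  rw [eq_top_iff, ← PresentedGroup.closure_range_of, Subgroup.closure_le]
  rintro _ ⟨x, rfl⟩
  cases x with
  | elt a => exact Set.eq_univ_iff_forall.mp hdomain a
  | _ => exact hT (.inr (by simp))

section Double

theorem IsPower.map {A A' : Type} {p₁ p₂ p : ℕ} {x : GenSym A} (φ : A → A')
    (h : IsPower p₁ p₂ x p) : IsPower p₁ p₂ (x.map φ) p := by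
  cases h <;> constructor

theorem IsChainPair.map {A A' : Type} {lo : ℕ} {x y : GenSym A} (φ : A → A')
    (h : IsChainPair lo x y) : IsChainPair lo (x.map φ) (y.map φ) := by
  cases h <;> constructor

open Classical in
/-- The second of two embeddings of a set into its double along `B`, in which the elements outside
`B` occur twice. The first one is `Sum.inl`. -/
noncomputable def secondCopy {A : Type} (B : Set A) (a : A) : A ⊕ ↥Bᶜ :=
  if h : a ∈ B then .inl a else .inr ⟨a, h⟩

theorem inl_eq_secondCopy_iff {A : Type} {B : Set A} {a : A} :
    .inl a = secondCopy B a ↔ a ∈ B := by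
  unfold secondCopy
  split_ifs with h <;> simp [h]

/-- The projection of the double to the original set. -/
def fold {A : Type} {B : Set A} : A ⊕ ↥Bᶜ → A := Sum.elim id Subtype.val

theorem fold_secondCopy {A : Type} {B : Set A} (a : A) : fold (secondCopy B a) = a := by
  unfold secondCopy
  split_ifs <;> rfl

variable (S) in
open Classical in
/-- Two copies of `S` glued along `B`. Function symbols are evaluated in the second copy if all
arguments belong to it, and otherwise in the first copy; all relations hold. -/
noncomputable def double (B : Set S.A) : IndexedStructure where
  A := S.A ⊕ ↥Bᶜ
  arity := S.arity
  arity_pos := S.arity_pos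
  isFunc := S.isFunc
  funcInterp m as :=
    if ∀ i, as i = secondCopy B (fold (as i)) then
      secondCopy B (S.funcInterp m fun i => fold (as i))
    else .inl (S.funcInterp m fun i => fold (as i))
  relInterp _ _ := True

variable {B : Set S.A}

theorem double_funcInterp_secondCopy (as : Fin (S.arity m) → S.A) :
    (S.double B).funcInterp m (fun i => secondCopy B (as i)) =
      secondCopy B (S.funcInterp m as) := by
  simp [double, fold_secondCopy]

theorem IsClosedUnderFunctions.double_funcInterp_inl (hB : S.IsClosedUnderFunctions B) (hm : 1 ≤ m)
    (hf : S.isFunc m) (as : Fin (S.arity m) → S.A) :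
    (S.double B).funcInterp m (fun i => .inl (as i)) = .inl (S.funcInterp m as) := by
  simp only [double]
  split_ifs with h
  · exact (inl_eq_secondCopy_iff.mpr (hB m hm hf as fun i => inl_eq_secondCopy_iff.mp (h i))).symm
  · rfl

theorem isRealization_gen_double_map (p₁ p₂ : ℕ) {φ : S.A → S.A ⊕ ↥Bᶜ}
    (hφ : ∀ m, 1 ≤ m → S.isFunc m → ∀ as : Fin (S.arity m) → S.A,
      (S.double B).funcInterp m (fun i => φ (as i)) = φ (S.funcInterp m as)) :
    S.IsRealization p₁ p₂ fun x => gen (S.double B) p₁ p₂ (x.map φ) where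
  pow_eq_one h := ((S.double B).isRealization_gen p₁ p₂).pow_eq_one (h.map φ)
  chainProd_eq_one h := ((S.double B).isRealization_gen p₁ p₂).chainProd_eq_one (h.map φ)
  wProd_eq {m} hm hf xs :=
    (((S.double B).isRealization_gen p₁ p₂).wProd_eq hm hf fun i => φ (xs i)).trans
      (congrArg (fun a => gen (S.double B) p₁ p₂ (.elt a)) (hφ m hm hf xs))
  wProd_eq_one hm hf _ _ :=
    ((S.double B).isRealization_gen p₁ p₂).wProd_eq_one hm hf trivial

end Double

variable {p₁ p₂ : ℕ}

theorem IsClosedUnderFunctions.eq_univ_of_closure_eq_top (h₁ : 10 ^ 10 < p₁) (h₂ : 10 ^ 10 < p₂)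
    {B : Set S.A} (hB : S.IsClosedUnderFunctions B) {F : Set (GenSym S.A)}
    (hF : Subgroup.closure (gen S p₁ p₂ '' F) = ⊤) (hFB : GenSym.elt ⁻¹' F ⊆ B) :
    B = Set.univ := by
  obtain ⟨φ, hφ⟩ := (isRealization_gen_double_map p₁ p₂
    fun _ hm hf as => hB.double_funcInterp_inl hm hf as).exists_hom
  obtain ⟨ψ, hψ⟩ := (isRealization_gen_double_map p₁ p₂
    fun _ _ _ as => double_funcInterp_secondCopy (B := B) as).exists_hom
  have hφψ : φ = ψ := by
    refine MonoidHom.eq_of_eqOn_dense hF ?_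
    rintro _ ⟨x, hx, rfl⟩
    rw [hφ, hψ]
    cases x with
    | elt a => exact congrArg (fun a' => gen _ _ _ (.elt a')) (inl_eq_secondCopy_iff.mpr (hFB hx))
    | _ => rfl
  refine Set.eq_univ_of_forall fun a => inl_eq_secondCopy_iff.mp (GenSym.elt.inj ?_)
  exact gen_injective h₁ h₂ (((hφ (.elt a)).symm.trans (by rw [hφψ])).trans (hψ (.elt a)))

theorem isFinitelyGenerated_of_group_fg (h₁ : 10 ^ 10 < p₁) (h₂ : 10 ^ 10 < p₂)
    [Group.FG (GA S p₁ p₂)] : S.IsFinitelyGenerated := by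
  obtain ⟨F, hfin, hF⟩ :=
    exists_finite_closure_image_eq_top (PresentedGroup.closure_range_of (grpRels S p₁ p₂))
  exact ⟨.elt ⁻¹' F, hfin.preimage fun _ _ _ _ => GenSym.elt.inj, fun B hFB hB =>
    hB.eq_univ_of_closure_eq_top h₁ h₂ hF hFB⟩

end IndexedStructure

theorem stmt_8_general (S : IndexedStructure) {p₁ p₂ : ℕ} (hbig₁ : 10 ^ 10 < p₁)
    (hbig₂ : 10 ^ 10 < p₂) : S.IsFinitelyGenerated ↔ Group.FG (GA S p₁ p₂) :=
  ⟨fun h => h.group_fg p₁ p₂, fun _ => S.isFinitelyGenerated_of_group_fg hbig₁ hbig₂⟩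

/-- Lemma `lem:finite-generation`: the `L`-structure `𝒜` is finitely
generated (there is a finite subset of `A` whose closure under the interpretations of all
function symbols of `L` is all of `A`) if and only if the group `G(𝒜)` is finitely
generated. -/
theorem stmt_8 (S : IndexedStructure) (p₁ p₂ : ℕ)
    (hp₁ : p₁.Prime) (hp₂ : p₂.Prime) (hne : p₁ ≠ p₂)
    (hbig₁ : 10 ^ 10 < p₁) (hbig₂ : 10 ^ 10 < p₂) :
    (∃ s : Set S.A, s.Finite ∧
      ∀ B : Set S.A, s ⊆ B →
        (∀ m, 1 ≤ m → S.isFunc m →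
          ∀ as : Fin (S.arity m) → S.A, (∀ i, as i ∈ B) → S.funcInterp m as ∈ B) →
        B = Set.univ) ↔
    Group.FG (GA S p₁ p₂) :=
  stmt_8_general S hbig₁ hbig₂
end

section
/- The symmetrized closure of the relator set of the presentation of G(𝒜) (the closure of the set of cyclic reductions of the relators under inverses and cyclic permutations) satisfies the C'(1/20) small cancellation condition: for every relator r in the symmetrized set and every piece u with r = uv, the word length of u is less than (1/20) times the word length of r. -/
/-- A word (in the letters `α` and their formal inverses) is reduced if it has no adjacent
pair of mutually inverse letters. -/
def IsReducedWord {α : Type} (w : List (α × Bool)) : Prop :=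
  w.Chain' fun s t => ¬ (s.1 = t.1 ∧ s.2 = !t.2)

/-- A word is cyclically reduced if all of its cyclic permutations (rotations) are reduced. -/
def IsCyclicallyReduced {α : Type} (w : List (α × Bool)) : Prop :=
  ∀ k : ℕ, IsReducedWord (w.rotate k)

/-- The symmetrized closure of a set `R` of relators: the closure of the set of cyclic
reductions of the relators under inverses and cyclic permutations.  Equivalently (and this is
how we phrase it), it is the set of cyclically reduced words which, as elements of the free
group, are conjugate to some `r ∈ R` or to its inverse. -/
def symmClosure {α : Type} (R : Set (FreeGroup α)) : Set (List (α × Bool)) :=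
  {w | IsCyclicallyReduced w ∧
    ∃ r ∈ R, (∃ u : FreeGroup α, r = u * FreeGroup.mk w * u⁻¹) ∨
      (∃ u : FreeGroup α, r⁻¹ = u * FreeGroup.mk w * u⁻¹)}

/-- A word `u` is a piece (relative to a symmetrized set `RR`) if it is an initial segment of
two distinct elements of `RR`. -/
def IsPiece {α : Type} (RR : Set (List (α × Bool))) (u : List (α × Bool)) : Prop :=
  ∃ r₁ ∈ RR, ∃ r₂ ∈ RR, r₁ ≠ r₂ ∧ u <+: r₁ ∧ u <+: r₂

/-!
Up to conjugacy, every relator other than the powers of `f₁` and `f₂` is a product of many blocks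
`stem · y ^ e`, where the letter `y` is the same for all blocks and does not occur in the stems, and
the positive exponents `e` are pairwise distinct. Any three blocks make up less than a twentieth of
the relator, so a common prefix of two elements of the symmetrized set that fills a twentieth of one
of them contains two consecutive complete blocks.

Such a prefix contains `yy`, since one of two distinct positive exponents is at least `2`. As no
other generator outside the domain of `𝒜` is ever doubled, both elements have the same marker `y`
with the same sign, and we may take it to be positive. Two complete blocks occur together in only
one relator, and at only one place of it because its exponents do not repeat, so the two elements
start at the same place of the same relator and are equal. A power of `f₁` or `f₂` cannot share a
prefix of this length with a product of blocks, because the prefix would contain a stem.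
-/

namespace SmallCancellation

open FreeGroup (invRev)

/-! ### Cyclically reduced words -/

section FreeGroup

variable {α : Type*} {v w c c' L : List (α × Bool)}

theorem isCyclicallyReduced_iff_cycleChain : FreeGroup.IsCyclicallyReduced w ↔
    Cycle.Chain (fun a b : α × Bool => a.1 = b.1 → a.2 = b.2) (w : Cycle (α × Bool)) := by
  cases w with
  | nil => simp
  | cons a l =>
    rw [Cycle.chain_coe_cons, ← List.cons_append, List.isChain_append]
    simp [FreeGroup.isCyclicallyReduced_iff, FreeGroup.IsReduced]

theorem isCyclicallyReduced_congr_of_isRotated (h : v ~r w) :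
    FreeGroup.IsCyclicallyReduced v ↔ FreeGroup.IsCyclicallyReduced w := by
  rw [isCyclicallyReduced_iff_cycleChain, isCyclicallyReduced_iff_cycleChain,
    Cycle.coe_eq_coe.2 h]

theorem isReduced_invRev (h : FreeGroup.IsReduced w) : FreeGroup.IsReduced (invRev w) := by
  classical
  rw [FreeGroup.isReduced_iff_reduce_eq, FreeGroup.reduce_invRev, h.reduce_eq]

theorem isCyclicallyReduced_invRev (h : FreeGroup.IsCyclicallyReduced w) :
    FreeGroup.IsCyclicallyReduced (invRev w) := by
  refine ⟨isReduced_invRev h.isReduced, fun a ha b hb hab => ?_⟩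
  simp only [invRev, List.getLast?_reverse, List.head?_reverse, List.head?_map,
    List.getLast?_map, Option.mem_def, Option.map_eq_some_iff] at ha hb
  obtain ⟨a, ha, rfl⟩ := ha
  obtain ⟨b, hb, rfl⟩ := hb
  exact congrArg (!·) (h.2 b hb a ha hab.symm).symm

theorem eq_of_mk_eq_mk (hv : FreeGroup.IsReduced v) (hw : FreeGroup.IsReduced w)
    (h : FreeGroup.mk v = FreeGroup.mk w) : v = w := by
  classical
  rw [← hv.reduce_eq, ← hw.reduce_eq, FreeGroup.reduce.sound h]

theorem ne_inverse_iff {a b : α × Bool} : b ≠ (a.1, !a.2) ↔ (a.1 = b.1 → a.2 = b.2) := by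
  obtain ⟨a, s⟩ := a
  obtain ⟨b, t⟩ := b
  cases s <;> cases t <;> simp [eq_comm]

theorem isReduced_conj (hL : FreeGroup.IsReduced L) (hc : FreeGroup.IsReduced c) (hne : c ≠ [])
    (hhead : ∀ x ∈ L.getLast?, (x.1, !x.2) ∉ c.head?) (hlast : ∀ x ∈ L.getLast?, x ∉ c.getLast?) :
    FreeGroup.IsReduced (L ++ c ++ invRev L) := by
  refine FreeGroup.IsReduced.append_overlap (List.isChain_append.2 ⟨hL, hc, ?_⟩)
    (List.isChain_append.2 ⟨hc, isReduced_invRev hL, ?_⟩) hne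
  · rintro x hx b hb
    exact ne_inverse_iff.1 fun h => hhead x hx (h ▸ hb)
  · intro a ha b hb
    simp only [invRev, List.head?_reverse, List.getLast?_map, Option.mem_def,
      Option.map_eq_some_iff] at hb
    obtain ⟨x, hx, rfl⟩ := hb
    exact ne_inverse_iff.1 fun h => hlast x hx (by
      rw [Prod.mk.injEq, Bool.not_inj_iff] at h
      rwa [Prod.ext h.1 h.2])

theorem not_isCyclicallyReduced_conj (hL : L ≠ []) :
    ¬ FreeGroup.IsCyclicallyReduced (L ++ c ++ invRev L) := by
  obtain ⟨a, L, rfl⟩ := List.exists_cons_of_ne_nil hL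
  have hword : a :: L ++ c ++ invRev (a :: L) = a :: (L ++ c ++ invRev L) ++ [(a.1, !a.2)] := by
    simp [invRev]
  rw [hword, FreeGroup.isCyclicallyReduced_cons_append_iff]
  simp

/- Shorten the conjugator one letter at a time: if its last letter cancels against `c`, the
cancellation is a rotation of `c`, and if nothing cancels then `L ++ c ++ L⁻¹` is reduced, hence
equal to `c'`, which is impossible for a nonempty `L` because `c'` is cyclically reduced. -/
theorem isRotated_of_mk_eq_conj (hL : FreeGroup.IsReduced L) (hc : FreeGroup.IsCyclicallyReduced c)
    (hc' : FreeGroup.IsCyclicallyReduced c')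
    (h : FreeGroup.mk c' = FreeGroup.mk L * FreeGroup.mk c * (FreeGroup.mk L)⁻¹) : c ~r c' := by
  induction L using List.reverseRecOn generalizing c with
  | nil =>
    rw [← FreeGroup.one_eq_mk, one_mul, inv_one, mul_one] at h
    rw [eq_of_mk_eq_mk hc'.isReduced hc.isReduced h]
  | append_singleton L x ih =>
    have hL₀ : FreeGroup.IsReduced L := hL.infix (List.prefix_append L [x]).isInfix
    by_cases hlast : x ∈ c.getLast?
    · obtain ⟨c₀, rfl⟩ := List.getLast?_eq_some_iff.1 hlast
      have hrot : (c₀ ++ [x]) ~r (x :: c₀) := List.isRotated_append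
      refine hrot.trans (ih hL₀ ((isCyclicallyReduced_congr_of_isRotated hrot).1 hc) ?_)
      rw [h, ← List.singleton_append (l := c₀)]
      simp only [← FreeGroup.mul_mk]
      group
    by_cases hhead : (x.1, !x.2) ∈ c.head?
    · obtain ⟨c₀, rfl⟩ := List.head?_eq_some_iff.1 hhead
      have hrot : ((x.1, !x.2) :: c₀) ~r (c₀ ++ [(x.1, !x.2)]) :=
        List.isRotated_append (l := [(x.1, !x.2)])
      have hinv : FreeGroup.mk [(x.1, !x.2)] = (FreeGroup.mk [x])⁻¹ := by
        rw [FreeGroup.inv_mk]; rfl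
      refine hrot.trans (ih hL₀ ((isCyclicallyReduced_congr_of_isRotated hrot).1 hc) ?_)
      rw [h, ← List.singleton_append (l := c₀)]
      simp only [← FreeGroup.mul_mk, hinv]
      group
    rcases eq_or_ne c [] with rfl | hne
    · rw [← FreeGroup.one_eq_mk, mul_one, mul_inv_cancel, FreeGroup.one_eq_mk] at h
      rw [eq_of_mk_eq_mk hc'.isReduced hc.isReduced h]
    exfalso
    have hred : FreeGroup.IsReduced (L ++ [x] ++ c ++ invRev (L ++ [x])) :=
      isReduced_conj hL hc.isReduced hne (by simpa using hhead) (by simpa using hlast)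
    obtain rfl : c' = L ++ [x] ++ c ++ invRev (L ++ [x]) :=
      eq_of_mk_eq_mk hc'.isReduced hred (by
        rw [h, FreeGroup.inv_mk, FreeGroup.mul_mk, FreeGroup.mul_mk])
    exact not_isCyclicallyReduced_conj (List.concat_ne_nil x L) hc'

theorem isRotated_of_isConj_mk (hc : FreeGroup.IsCyclicallyReduced c)
    (hc' : FreeGroup.IsCyclicallyReduced c')
    (h : IsConj (FreeGroup.mk c) (FreeGroup.mk c')) : c ~r c' := by
  classical
  obtain ⟨g, hg⟩ := isConj_iff.1 h
  exact isRotated_of_mk_eq_conj FreeGroup.isReduced_toWord hc hc'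
    (by rw [FreeGroup.mk_toWord, hg])

theorem mk_map_true (l : List α) :
    FreeGroup.mk (l.map fun a => (a, true)) = (l.map FreeGroup.of).prod := by
  induction l with
  | nil => rfl
  | cons a l ih => rw [List.map_cons, List.map_cons, List.prod_cons, ← ih]; rfl

theorem isReduced_map_true (l : List α) : FreeGroup.IsReduced (l.map fun a => (a, true)) := by
  rw [FreeGroup.IsReduced, List.isChain_map]
  exact (List.pairwise_of_forall fun _ _ _ => rfl).isChain

end FreeGroup

section SymmClosure

variable {α : Type} {R : Set (FreeGroup α)} {w : List (α × Bool)}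

theorem isCyclicallyReduced_of_forall_rotate (h : _root_.IsCyclicallyReduced w) :
    FreeGroup.IsCyclicallyReduced w := by
  have hrot (k : ℕ) : FreeGroup.IsReduced (w.rotate k) :=
    (h k).imp fun a b hab => ne_inverse_iff.1 fun hb => hab (by simp [hb])
  rcases w with - | ⟨b, l⟩
  · exact FreeGroup.IsCyclicallyReduced.nil
  rcases l.eq_nil_or_concat' with rfl | ⟨l, a, rfl⟩
  · exact FreeGroup.IsCyclicallyReduced.singleton
  rw [← List.cons_append, FreeGroup.isCyclicallyReduced_cons_append_iff]
  have hab : FreeGroup.IsReduced [a, b] := (hrot 1).infix ⟨l, [], by simp⟩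
  exact ⟨by simpa using hrot 0, (FreeGroup.isReduced_cons_cons.1 hab).1⟩

theorem exists_isRotated_of_mem_symmClosure {C : Set (List (α × Bool))}
    (hC : ∀ c ∈ C, FreeGroup.IsCyclicallyReduced c)
    (hR : ∀ r ∈ R, ∃ c ∈ C, IsConj r (FreeGroup.mk c)) (hw : w ∈ symmClosure R) :
    (∃ c ∈ C, w ~r c) ∨ ∃ c ∈ C, invRev w ~r c := by
  obtain ⟨hcyc, r, hr, hconj⟩ := hw
  replace hcyc := isCyclicallyReduced_of_forall_rotate hcyc
  obtain ⟨c, hc, hrc⟩ := hR r hr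
  refine hconj.imp (fun ⟨g, hg⟩ => ?_) fun ⟨g, hg⟩ => ?_
  · have hwr : IsConj (FreeGroup.mk w) r := isConj_iff.2 ⟨g, hg.symm⟩
    exact ⟨c, hc, isRotated_of_isConj_mk hcyc (hC c hc) (hwr.trans hrc)⟩
  · have hwr : IsConj (FreeGroup.mk (invRev w)) r :=
      isConj_iff.2 ⟨g, by rw [← FreeGroup.inv_mk, ← conj_inv, ← hg, inv_inv]⟩
    exact ⟨c, hc, isRotated_of_isConj_mk (isCyclicallyReduced_invRev hcyc) (hC c hc)
      (hwr.trans hrc)⟩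

end SymmClosure

/-! ### Words built from blocks -/

section Lists

variable {β : Type*} {rel : β → β → Prop} {l l' : List β} {a : β}

theorem cycleChain_of_isChain_append_self (h : (l ++ l).IsChain rel) :
    Cycle.Chain rel (l : Cycle β) := by
  cases l with
  | nil => trivial
  | cons a l => exact (Cycle.chain_coe_cons rel a l).2 (h.infix ⟨[], l, by simp⟩)

theorem rel_self_of_infix_of_cycleChain (hl : Cycle.Chain rel (l : Cycle β))
    (ha : [a, a] <:+: l) : rel a a := by
  cases l with
  | nil => simp at ha
  | cons b l =>
    rw [Cycle.chain_coe_cons, ← List.cons_append] at hl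
    simpa using hl.infix (ha.trans (List.prefix_append _ _).isInfix)

theorem exists_append_of_isRotated (h : l ~r l') (hne : l' ≠ []) :
    ∃ s t, t ≠ [] ∧ l' = s ++ t ∧ l = t ++ s := by
  obtain ⟨n, rfl⟩ := h.symm
  have hlt : n % l'.length < l'.length := Nat.mod_lt _ (List.length_pos_iff.2 hne)
  exact ⟨l'.take (n % l'.length), l'.drop (n % l'.length), by simpa using hlt,
    (List.take_append_drop ..).symm, List.rotate_eq_drop_append_take_mod⟩

theorem cons_eq_cons_of_isRotated_of_nodup (hl : (a :: l).Nodup) (h : (a :: l) ~r (a :: l')) :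
    a :: l = a :: l' := by
  obtain ⟨n, hn⟩ := h
  have hhead : (a :: l)[n % (a :: l).length]? = (a :: l)[0]? := by
    rw [← List.head?_rotate (Nat.mod_lt _ (by simp)), List.rotate_mod, hn]
    rfl
  have hzero : n % (a :: l).length = 0 :=
    (List.getElem?_inj (Nat.mod_lt _ (by simp)) hl).1 hhead
  rw [← hn, ← List.rotate_mod, hzero, List.rotate_zero]

theorem eq_replicate_of_isRotated {n : ℕ} (h : l ~r List.replicate n a) :
    l = List.replicate n a := by
  obtain ⟨k, rfl⟩ := h.symm
  exact List.rotate_replicate a n k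

theorem replicate_append_inj {m n : ℕ} (hl : l.head? ≠ some a) (hl' : l'.head? ≠ some a)
    (h : List.replicate m a ++ l = List.replicate n a ++ l') : m = n ∧ l = l' := by
  induction m generalizing n with
  | zero => cases n <;> simp_all [List.replicate_succ]
  | succ m ih =>
    cases n with
    | zero => exact absurd (by simp [← h.trans (List.nil_append _), List.replicate_succ]) hl'
    | succ n => simpa using ih (by simpa [List.replicate_succ] using h)

theorem append_cons_inj_of_notMem_of_notMem {s s' : List β} (hs : a ∉ s) (hs' : a ∉ s')
    (h : s ++ a :: l = s' ++ a :: l') : s = s' ∧ l = l' := by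
  rcases List.append_eq_append_iff.1 h with ⟨t, rfl, ht⟩ | ⟨t, rfl, ht⟩ <;>
    cases t <;> simp_all

end Lists

/-- A block `stem · y ^ exp` of a word built from a marker letter `y`. The marker is common to all
the blocks of a word and is passed to `Block.toWord` and `blockWord` instead of being stored. -/
structure Block (β : Type*) where
  /-- The part of the block that precedes the power of the marker. -/
  stem : List β
  /-- The exponent of the marker. -/
  exp : ℕ

/-- The word `stem · y ^ exp` spelled by a block. -/
def Block.toWord {β : Type*} (y : β) (b : Block β) : List β :=
  b.stem ++ List.replicate b.exp y

/-- A block is proper for the marker `y` if its stem and its power of `y` can be told apart and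
neither is empty. -/
structure Block.IsProper {β : Type*} (y : β) (b : Block β) : Prop where
  stem_ne_nil : b.stem ≠ []
  marker_notMem : y ∉ b.stem
  exp_pos : 0 < b.exp

/-- The concatenation of the words of a list of blocks. -/
def blockWord {β : Type*} (y : β) (B : List (Block β)) : List β :=
  B.flatMap (Block.toWord y)

/-- At least three proper blocks with pairwise distinct exponents. -/
structure IsBlockList {β : Type*} (y : β) (B : List (Block β)) : Prop where
  proper : ∀ b ∈ B, b.IsProper y
  nodup_exp : (B.map Block.exp).Nodup
  three_le_length : 3 ≤ B.length

/-- `n` exceeds the total length of any three distinct blocks of `B`, so that a subword of length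
`n` of a cyclic permutation of `blockWord y B` contains two consecutive complete blocks. -/
def IsLong {β : Type*} (y : β) (B : List (Block β)) (n : ℕ) : Prop :=
  ∀ b₁ ∈ B, ∀ b₂ ∈ B, ∀ b₃ ∈ B, [b₁, b₂, b₃].Nodup →
    (b₁.toWord y).length + (b₂.toWord y).length + (b₃.toWord y).length < n

section Blocks

variable {β : Type*} {y : β} {b b' : Block β} {B B' C : List (Block β)} {r r' s t u : List β}

@[simp]
theorem blockWord_nil : blockWord y [] = [] :=
  rfl

@[simp]
theorem blockWord_cons : blockWord y (b :: B) = b.toWord y ++ blockWord y B :=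
  List.flatMap_cons

@[simp]
theorem blockWord_append : blockWord y (B ++ C) = blockWord y B ++ blockWord y C :=
  List.flatMap_append

@[simp]
theorem length_toWord : (b.toWord y).length = b.stem.length + b.exp := by
  simp [Block.toWord]

theorem length_blockWord :
    (blockWord y B).length = (B.map fun b => b.stem.length + b.exp).sum := by
  simp [blockWord, List.length_flatMap]

theorem mk_blockWord {α : Type*} {y : α} {B : List (Block (α × Bool))} :
    FreeGroup.mk (blockWord (y, true) B) =
      (B.map fun b => FreeGroup.mk b.stem * FreeGroup.of y ^ b.exp).prod := by
  induction B with
  | nil => rfl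
  | cons b B ih =>
    rw [blockWord_cons, ← FreeGroup.mul_mk, ih, Block.toWord, ← FreeGroup.mul_mk,
      List.map_cons, List.prod_cons, FreeGroup.of, FreeGroup.pow_mk,
      List.flatten_replicate_singleton]

theorem Block.IsProper.toWord_ne_nil (hb : b.IsProper y) : b.toWord y ≠ [] :=
  List.append_ne_nil_of_left_ne_nil hb.stem_ne_nil _

theorem Block.IsProper.exists_toWord_eq_cons (hb : b.IsProper y) :
    ∃ a ∈ b.stem, ∃ s, b.toWord y = a :: s := by
  obtain ⟨a, s, ha⟩ := List.exists_cons_of_ne_nil hb.stem_ne_nil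
  exact ⟨a, by simp [ha], s ++ List.replicate b.exp y, by simp [Block.toWord, ha]⟩

theorem Block.IsProper.head?_append_ne (hb : b.IsProper y) (hs : s <+: b.toWord y)
    (ht : t.head? ≠ some y) : (s ++ t).head? ≠ some y := by
  cases s with
  | nil => exact ht
  | cons c s =>
    obtain ⟨a, ha, l, hl⟩ := hb.exists_toWord_eq_cons
    rw [hl, List.cons_prefix_cons] at hs
    intro h
    obtain rfl : c = y := by simpa using h
    exact hb.marker_notMem (hs.1 ▸ ha)

theorem Block.IsProper.getLast?_eq_of_suffix (hb : b.IsProper y) (hs : s <:+ b.toWord y)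
    (hne : s ≠ []) : s.getLast? = some y := by
  obtain ⟨p, hp⟩ := hs
  rw [← List.getLast?_append_of_ne_nil p hne, hp]
  simp [Block.toWord, List.getLast?_replicate, hb.exp_pos.ne']

theorem head?_blockWord_append_ne (hB : ∀ b ∈ B, b.IsProper y) (ht : t.head? ≠ some y) :
    (blockWord y B ++ t).head? ≠ some y := by
  induction B with
  | nil => exact ht
  | cons b B ih =>
    rw [List.forall_mem_cons] at hB
    rw [blockWord_cons, List.append_assoc]
    exact hB.1.head?_append_ne List.prefix_rfl (ih hB.2)

theorem Block.eq_of_toWord_append_eq (hb : b.IsProper y) (hb' : b'.IsProper y)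
    (hs : s.head? ≠ some y) (ht : t.head? ≠ some y)
    (h : b.toWord y ++ s = b'.toWord y ++ t) : b = b' ∧ s = t := by
  obtain ⟨stem, exp⟩ := b
  obtain ⟨stem', exp'⟩ := b'
  obtain ⟨n, rfl⟩ := Nat.exists_eq_add_one.2 hb.exp_pos
  obtain ⟨n', rfl⟩ := Nat.exists_eq_add_one.2 hb'.exp_pos
  simp only [Block.toWord, List.append_assoc, List.replicate_succ, List.cons_append] at h
  obtain ⟨rfl, hpow⟩ := append_cons_inj_of_notMem_of_notMem hb.marker_notMem hb'.marker_notMem h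
  obtain ⟨rfl, rfl⟩ := replicate_append_inj hs ht hpow
  exact ⟨rfl, rfl⟩

theorem prefix_of_blockWord_append_eq (hC : ∀ b ∈ C, b.IsProper y) (hB : ∀ b ∈ B, b.IsProper y)
    (ht : t.head? ≠ some y) (h : blockWord y C ++ t = blockWord y B) : C <+: B := by
  induction C generalizing B with
  | nil => exact List.nil_prefix
  | cons c C ih =>
    rw [List.forall_mem_cons] at hC
    cases B with
    | nil => simp [blockWord, hC.1.toWord_ne_nil] at h
    | cons b B =>
      rw [List.forall_mem_cons] at hB
      rw [blockWord_cons, blockWord_cons, List.append_assoc] at h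
      obtain ⟨rfl, hrest⟩ := Block.eq_of_toWord_append_eq hC.1 hB.1
        (head?_blockWord_append_ne hC.2 ht)
        (by simpa using head?_blockWord_append_ne (t := []) hB.2 (by simp)) h
      exact List.cons_prefix_cons.2 ⟨rfl, ih hC.2 hB.2 hrest⟩

theorem exists_eq_of_blockWord_eq_append (ht : t ≠ [])
    (h : blockWord y B = s ++ t) : ∃ B₁ b B₂ p q, B = B₁ ++ b :: B₂ ∧ b.toWord y = p ++ q ∧
      q ≠ [] ∧ s = blockWord y B₁ ++ p ∧ t = q ++ blockWord y B₂ := by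
  induction B generalizing s with
  | nil => simp_all [blockWord]
  | cons b B ih =>
    rw [blockWord_cons, List.append_eq_append_iff] at h
    rcases h with ⟨s, rfl, h⟩ | ⟨q, hb, h⟩
    · obtain ⟨B₁, c, B₂, p, q, rfl, hc, hq, rfl, rfl⟩ := ih h
      exact ⟨b :: B₁, c, B₂, p, q, rfl, hc, hq, by simp, rfl⟩
    rcases eq_or_ne q [] with rfl | hq
    · obtain ⟨B₁, c, B₂, p, q, rfl, hc, hq, hp, rfl⟩ := ih (s := []) h.symm
      exact ⟨b :: B₁, c, B₂, p, q, rfl, hc, hq, by simp [hb, ← hp], rfl⟩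
    · exact ⟨[], b, B, s, q, rfl, hb, hq, rfl, h⟩

theorem exists_split_of_isRotated (hB : ∀ b ∈ B, b.IsProper y) (hne : B ≠ [])
    (hr : r ~r blockWord y B) : ∃ b C p q, (b :: C) ~r B ∧ b.toWord y = p ++ q ∧ q ≠ [] ∧
      r = q ++ (blockWord y C ++ p) := by
  have hword : blockWord y B ≠ [] := by
    obtain ⟨b, C, rfl⟩ := List.exists_cons_of_ne_nil hne
    simp [(hB b List.mem_cons_self).toWord_ne_nil]
  obtain ⟨s, t, ht, hst, rfl⟩ := exists_append_of_isRotated hr hword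
  obtain ⟨B₁, b, B₂, p, q, rfl, hb, hq, rfl, rfl⟩ := exists_eq_of_blockWord_eq_append ht hst
  exact ⟨b, B₂ ++ B₁, p, q, List.isRotated_append (l := b :: B₂), hb, hq, by simp⟩

theorem exists_isRotated_eq_blockWord (hB : ∀ b ∈ B, b.IsProper y) (hne : B ≠ [])
    (hr : r ~r blockWord y B) (hhead : r.head? ≠ some y) (hlast : r.getLast? = some y) :
    ∃ C, C ~r B ∧ r = blockWord y C := by
  obtain ⟨b, C, p, q, hC, hb, hq, rfl⟩ := exists_split_of_isRotated hB hne hr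
  rcases eq_or_ne p [] with rfl | hp
  · exact ⟨b :: C, hC, by simp [hb]⟩
  exfalso
  have hy : y ∈ p := List.mem_of_getLast? (by simpa [List.getLast?_append, hp] using hlast)
  rcases List.append_eq_append_iff.1 hb with ⟨s, rfl, hs⟩ | ⟨s, hs, rfl⟩
  · obtain ⟨a, q, rfl⟩ := List.exists_cons_of_ne_nil hq
    obtain rfl : a = y := List.eq_of_mem_replicate (show a ∈ List.replicate b.exp y by simp [hs])
    exact hhead rfl
  · exact (hB b (hC.mem_iff.1 List.mem_cons_self)).marker_notMem (by simp [hs, hy])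

theorem isChain_blockWord {rel : β → β → Prop} (hB : ∀ b ∈ B, b.IsProper y) (hy : rel y y)
    (hchain : ∀ b ∈ B, b.stem.IsChain rel) (hstem : ∀ b ∈ B, ∀ a ∈ b.stem, rel a y ∧ rel y a) :
    (blockWord y B).IsChain rel := by
  induction B with
  | nil => exact .nil
  | cons b B ih =>
    rw [List.forall_mem_cons] at hB hchain hstem
    rw [blockWord_cons, Block.toWord, List.append_assoc]
    refine List.isChain_append.2 ⟨hchain.1, List.isChain_append.2
      ⟨List.isChain_replicate_of_rel _ hy, ih hB.2 hchain.2 hstem.2, ?_⟩, ?_⟩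
    · intro a ha c hc
      obtain rfl := List.eq_of_mem_replicate (List.mem_of_getLast? ha)
      obtain ⟨d, hd, hcd⟩ : ∃ d ∈ B, c ∈ d.stem := by
        cases B with
        | nil => simp at hc
        | cons d B =>
          obtain ⟨c', hc', s, hs⟩ := (hB.2 d (by simp)).exists_toWord_eq_cons
          obtain rfl : c' = c := by simpa [hs] using hc
          exact ⟨d, by simp, hc'⟩
      exact (hstem.2 d hd c hcd).2
    · intro a ha c hc
      obtain ⟨n, hn⟩ := Nat.exists_eq_add_one.2 hB.1.exp_pos
      obtain rfl : y = c := by simpa [hn, List.replicate_succ] using hc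
      exact (hstem.1 a (List.mem_of_getLast? ha)).1

theorem cycleChain_blockWord {rel : β → β → Prop} (hB : ∀ b ∈ B, b.IsProper y) (hy : rel y y)
    (hchain : ∀ b ∈ B, b.stem.IsChain rel) (hstem : ∀ b ∈ B, ∀ a ∈ b.stem, rel a y ∧ rel y a) :
    Cycle.Chain rel (blockWord y B : Cycle β) := by
  have hBB {p : Block β → Prop} (h : ∀ b ∈ B, p b) : ∀ b ∈ B ++ B, p b :=
    List.forall_mem_append.2 ⟨h, h⟩
  refine cycleChain_of_isChain_append_self ?_
  rw [← blockWord_append]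
  exact isChain_blockWord (hBB hB) hy (hBB hchain) (hBB hstem)

theorem exists_two_blocks_of_isLong (hB : IsBlockList y B) (hr : r ~r blockWord y B)
    (hu : u <+: r) (hlong : IsLong y B u.length) :
    ∃ q b₁ b₂ D z t, u = q ++ (blockWord y [b₁, b₂] ++ z :: t) ∧ q.getLast? = some y ∧ z ≠ y ∧
      (b₁ :: b₂ :: D) ~r B ∧ r.rotate q.length = blockWord y (b₁ :: b₂ :: D) := by
  obtain ⟨b, C, p, q, hC, hb, hq, rfl⟩ :=
    exists_split_of_isRotated hB.proper (by rintro rfl; simpa using hB.three_le_length) hr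
  have hproper : ∀ c ∈ b :: C, c.IsProper y := fun c hc => hB.proper c (hC.mem_iff.1 hc)
  obtain ⟨b₁, b₂, D, rfl⟩ : ∃ b₁ b₂ D, C = b₁ :: b₂ :: D := by
    have := hC.perm.length_eq ▸ hB.three_le_length
    match C with
    | b₁ :: b₂ :: D => exact ⟨b₁, b₂, D, rfl⟩
  have hnodup : [b, b₁, b₂].Nodup :=
    (hC.nodup_iff.2 (.of_map _ hB.nodup_exp)).sublist ((List.prefix_append [b, b₁, b₂] D).sublist)
  have hlen : q.length + (blockWord y [b₁, b₂]).length < u.length := by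
    have hsum := hlong b (hC.mem_iff.1 (by simp)) b₁ (hC.mem_iff.1 (by simp)) b₂
      (hC.mem_iff.1 (by simp)) hnodup
    have hqb := congrArg List.length hb
    simp only [List.length_append, blockWord_cons, blockWord_nil, List.length_nil] at hqb ⊢
    omega
  obtain ⟨s, rfl⟩ : q ++ blockWord y [b₁, b₂] <+: u :=
    List.prefix_of_prefix_length_le ⟨blockWord y D ++ p, by simp⟩ hu (by simpa using hlen.le)
  obtain ⟨z, t, rfl⟩ : ∃ z t, s = z :: t := List.exists_cons_of_ne_nil (by rintro rfl; simp at hlen)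
  refine ⟨q, b₁, b₂, D ++ [b], z, t, by simp, ?_, ?_, ?_, ?_⟩
  · exact (hproper b (by simp)).getLast?_eq_of_suffix ⟨p, hb.symm⟩ hq
  · have hp : p.head? ≠ some y := by
      simpa using (hproper b (by simp)).head?_append_ne (t := []) ⟨q, hb.symm⟩ (by simp)
    have hD := head?_blockWord_append_ne (B := D) (fun c hc => hproper c (by simp [hc])) hp
    obtain ⟨v, hv⟩ : z :: t <+: blockWord y D ++ p := by
      simpa [List.prefix_append_right_inj] using hu
    rintro rfl
    exact hD (by simp [← hv])
  · exact (List.isRotated_append (l' := [b])).trans hC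
  · rw [List.rotate_append_length_eq]
    simp [hb]

theorem not_prefix_of_isRotated_replicate {n : ℕ} (hB : IsBlockList y B) (hr : r ~r blockWord y B)
    (hu : u <+: r) (hlong : IsLong y B u.length) (hr' : r' ~r List.replicate n y) :
    ¬ u <+: r' := by
  intro hu'
  obtain ⟨q, b₁, b₂, D, z, t, rfl, -, hz, -, -⟩ := exists_two_blocks_of_isLong hB hr hu hlong
  exact hz (List.eq_of_mem_replicate (hr'.mem_iff.1 (hu'.subset (by simp))))

theorem pair_infix_replicate {n : ℕ} (hn : 2 ≤ n) : [y, y] <:+: List.replicate n y := by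
  obtain ⟨k, rfl⟩ := Nat.exists_eq_add_of_le hn
  exact ⟨[], List.replicate k y, by simp [List.replicate_add]⟩

theorem marker_pair_infix_of_isLong (hB : IsBlockList y B) (hr : r ~r blockWord y B)
    (hu : u <+: r) (hlong : IsLong y B u.length) : [y, y] <:+: u := by
  obtain ⟨q, b₁, b₂, D, z, t, rfl, -, -, hD, -⟩ := exists_two_blocks_of_isLong hB hr hu hlong
  have hexp : b₁.exp ≠ b₂.exp := by
    have := (hD.map Block.exp).nodup_iff.2 hB.nodup_exp
    simp_all
  have hpos : 0 < b₁.exp ∧ 0 < b₂.exp :=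
    ⟨(hB.proper _ (hD.mem_iff.1 (by simp))).exp_pos, (hB.proper _ (hD.mem_iff.1 (by simp))).exp_pos⟩
  rcases (show 2 ≤ b₁.exp ∨ 2 ≤ b₂.exp by omega) with h | h
  · exact (pair_infix_replicate h).trans
      ⟨q ++ b₁.stem, b₂.toWord y ++ z :: t, by simp [Block.toWord]⟩
  · exact (pair_infix_replicate h).trans
      ⟨q ++ b₁.toWord y ++ b₂.stem, z :: t, by simp [Block.toWord]⟩

theorem eq_of_common_prefix_of_isLong (hB : IsBlockList y B) (hB' : IsBlockList y B')
    (hBB' : ∀ b₁ ∈ B, ∀ b₂ ∈ B, b₁ ≠ b₂ → b₁ ∈ B' → b₂ ∈ B' → B = B')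
    (hr : r ~r blockWord y B) (hr' : r' ~r blockWord y B') (hu : u <+: r) (hu' : u <+: r')
    (hlong : IsLong y B u.length) : r = r' := by
  obtain ⟨q, b₁, b₂, D, z, t, rfl, hq, hz, hD, hrot⟩ := exists_two_blocks_of_isLong hB hr hu hlong
  obtain ⟨v, rfl⟩ := hu'
  set r' := q ++ (blockWord y [b₁, b₂] ++ z :: t) ++ v with hr'_def
  have hrot' : r'.rotate q.length = blockWord y [b₁, b₂] ++ z :: (t ++ v ++ q) := by
    rw [hr'_def, List.append_assoc, List.rotate_append_length_eq]
    simp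
  have hnodup : (b₁ :: b₂ :: D).Nodup := hD.nodup_iff.2 (.of_map _ hB.nodup_exp)
  have hproper : ∀ c ∈ [b₁, b₂], c.IsProper y := by
    intro c hc
    exact hB.proper c (hD.mem_iff.1 (List.mem_append_left D hc))
  obtain ⟨C, hC, hrC⟩ : ∃ C, C ~r B' ∧ r'.rotate q.length = blockWord y C := by
    refine exists_isRotated_eq_blockWord hB'.proper
      (by rintro rfl; simpa using hB'.three_le_length) ((List.IsRotated.forall r' _).trans hr')
      ?_ ?_
    · rw [hrot']
      exact head?_blockWord_append_ne hproper (by simpa using hz)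
    · simp only [hrot', ← List.cons_append, ← List.append_assoc, List.getLast?_append, hq,
        Option.some_or]
  obtain ⟨D', rfl⟩ : [b₁, b₂] <+: C := by
    refine prefix_of_blockWord_append_eq hproper (fun c hc => hB'.proper c (hC.mem_iff.1 hc))
      (by simpa using hz) (hrot'.symm.trans hrC)
  obtain rfl : B = B' :=
    hBB' b₁ (hD.mem_iff.1 (by simp)) b₂ (hD.mem_iff.1 (by simp)) (by simp_all)
      (hC.mem_iff.1 (by simp)) (hC.mem_iff.1 (by simp))
  have hDD' : b₁ :: b₂ :: D = b₁ :: b₂ :: D' :=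
    cons_eq_cons_of_isRotated_of_nodup hnodup (hD.trans hC.symm)
  exact List.rotate_injective q.length (hrot.trans ((congrArg _ hDD').trans hrC.symm))

end Blocks

section Symmetrization

variable {α : Type*} {P : Set (List (α × Bool))} {r r' u : List (α × Bool)}

theorem exists_prefix_of_invRev_mem (hrot : ∀ l ∈ P, ∀ l', l ~r l' → l' ∈ P) (hr : invRev r ∈ P)
    (hu : u <+: r) : ∃ t, r = u ++ t ∧ invRev u ++ invRev t ∈ P := by
  obtain ⟨t, rfl⟩ := hu
  rw [FreeGroup.invRev_append] at hr
  exact ⟨t, rfl, hrot _ hr _ List.isRotated_append⟩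

theorem eq_of_common_prefix_of_mem_or_invRev_mem {k : ℕ}
    (hrot : ∀ l ∈ P, ∀ l', l ~r l' → l' ∈ P)
    (hpos : ∀ r ∈ P, ∀ r' ∈ P, ∀ u, u <+: r → u <+: r' → r.length ≤ k * u.length → r = r')
    (hneg : ∀ r ∈ P, ∀ r', invRev r' ∈ P → ∀ u, u <+: r → u <+: r' → k * u.length < r.length)
    (hr : r ∈ P ∨ invRev r ∈ P) (hr' : r' ∈ P ∨ invRev r' ∈ P) (hu : u <+: r) (hu' : u <+: r')
    (hlen : r.length ≤ k * u.length) : r = r' := by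
  rcases hr with hr | hr
  · exact hr'.elim (fun hr' => hpos r hr r' hr' u hu hu' hlen)
      fun hr' => absurd (hneg r hr r' hr' u hu hu') hlen.not_gt
  obtain ⟨t, rfl, ht⟩ := exists_prefix_of_invRev_mem hrot hr hu
  have hlen' : (invRev u ++ invRev t).length ≤ k * (invRev u).length := by simpa using hlen
  rcases hr' with hr' | hr'
  · obtain ⟨t', rfl⟩ := hu'
    have hmem : invRev (invRev u ++ invRev t') ∈ P := by
      rw [← FreeGroup.invRev_append, FreeGroup.invRev_invRev]
      exact hrot _ hr' _ List.isRotated_append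
    exact absurd (hneg _ ht _ hmem _ (List.prefix_append ..) (List.prefix_append ..)) hlen'.not_gt
  · obtain ⟨t', rfl, ht'⟩ := exists_prefix_of_invRev_mem hrot hr' hu'
    have heq := hpos _ ht _ ht' _ (List.prefix_append ..) (List.prefix_append ..) hlen'
    rw [FreeGroup.invRev_injective (List.append_cancel_left heq)]

end Symmetrization

/-! ### The relators of `G(𝒜)` -/

/-- The parameter `lo` of the relators `chainProd lo x y` whose first argument is the generator
`x`. -/
def offset {A : Type} : GenSym A → ℕ
  | .elt _ => 0
  | .b => 1000
  | .c => 2000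
  | .d => 3000
  | .f1 => 4000
  | .f2 => 4000

/-- The blocks of the relator `chainProd (offset x) x y`. -/
def chainBlocks {A : Type} (x : GenSym A) : List (Block (GenSym A × Bool)) :=
  (List.range 1000).map fun k => ⟨[(x, true)], (offset x + k + 1) ^ 2⟩

section ChainBlocks

variable {A : Type} {x y : GenSym A} {b : Block (GenSym A × Bool)}

theorem offset_le : offset x ≤ 4000 := by
  cases x <;> simp [offset]

theorem mem_chainBlocks :
    b ∈ chainBlocks x ↔ ∃ k < 1000, ⟨[(x, true)], (offset x + k + 1) ^ 2⟩ = b := by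
  simp [chainBlocks]

theorem nodup_exp_chainBlocks : ((chainBlocks x).map Block.exp).Nodup := by
  rw [chainBlocks, List.map_map]
  refine List.nodup_range.map fun i j hij => ?_
  have : offset x + i + 1 = offset x + j + 1 := Nat.pow_left_injective two_ne_zero hij
  omega

theorem six_mul_sum_succ_sq (lo n : ℕ) :
    6 * ((List.range n).map fun k => 1 + (lo + k + 1) ^ 2).sum =
      n * (6 + 6 * lo ^ 2 + 6 * lo * (n + 1) + (n + 1) * (2 * n + 1)) := by
  induction n with
  | zero => simp
  | succ n ih =>
    rw [List.sum_range_succ, mul_add, ih]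
    ring

theorem isLong_chainBlocks {y : GenSym A × Bool} {n : ℕ}
    (hn : 3 * (1 + (offset x + 1000) ^ 2) < n) : IsLong y (chainBlocks x) n := by
  have hle : ∀ b ∈ chainBlocks x, (b.toWord y).length ≤ 1 + (offset x + 1000) ^ 2 := by
    intro b hb
    obtain ⟨k, hk, rfl⟩ := mem_chainBlocks.1 hb
    rw [length_toWord]
    exact Nat.add_le_add_left (Nat.pow_le_pow_left (by omega) 2) 1
  intro b₁ h₁ b₂ h₂ b₃ h₃ _
  have := hle b₁ h₁
  have := hle b₂ h₂
  have := hle b₃ h₃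
  omega

theorem lt_length_blockWord_chainBlocks {y : GenSym A × Bool} :
    60 * (1 + (offset x + 1000) ^ 2) < (blockWord y (chainBlocks x)).length := by
  have hsum := six_mul_sum_succ_sq (offset x) 1000
  have hlen : (blockWord y (chainBlocks x)).length =
      ((List.range 1000).map fun k => 1 + (offset x + k + 1) ^ 2).sum := by
    rw [length_blockWord, chainBlocks, List.map_map]
    rfl
  nlinarith [offset_le (x := x)]

theorem mk_blockWord_chainBlocks : FreeGroup.mk (blockWord (y, true) (chainBlocks x)) =
    chainProd (offset x) (FreeGroup.of x) (FreeGroup.of y) := by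
  rw [mk_blockWord, chainBlocks, List.map_map]
  rfl

end ChainBlocks

/-- The first block of the cyclic word spelled by `V y^{100m+1} (∏ W y^{100m+k+2})`, the product
being over `k < 99`. If `V` is empty, then `y^{100m+1}` is merged into the last power
`y^{100m+100}` of the product. -/
def opHead {β : Type*} (m : ℕ) (W : List β) : List β → Block β
  | [] => ⟨W, 200 * m + 101⟩
  | a :: V => ⟨a :: V, 100 * m + 1⟩

/-- The blocks of the cyclic word spelled by `V y^{100m+1} (∏ W y^{100m+k+2})`, the product being
over `k < 99`. With `W = x₁⋯xₙ` this is `wₘ(x₁,…,xₙ,y)` if `V = W`, and its product with `a⁻¹` if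
`V` is the reduced form of `a⁻¹x₁⋯xₙ`. -/
def opBlocks {β : Type*} (m : ℕ) (W V : List β) : List (Block β) :=
  opHead m W V ::
    (List.range (if V.isEmpty then 98 else 99)).map fun k => ⟨W, 100 * m + k + 2⟩

section OpBlocks

variable {β : Type*} {m m' n : ℕ} {y : β} {W W' V V' : List β} {b b₁ b₂ : Block β}

theorem mem_opBlocks (hb : b ∈ opBlocks m W V) :
    b = opHead m W V ∨ ∃ k < 99, b = ⟨W, 100 * m + k + 2⟩ := by
  rw [opBlocks, List.mem_cons, List.mem_map] at hb
  refine hb.imp_right fun ⟨k, hk, hkb⟩ => ⟨k, ?_, hkb.symm⟩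
  have := List.mem_range.1 hk
  split at this <;> omega

theorem exp_opHead_mod : (opHead m W V).exp % 100 = 1 := by
  cases V <;> simp only [opHead] <;> omega

theorem exp_pos_of_mem_opBlocks (hb : b ∈ opBlocks m W V) : 0 < b.exp := by
  rcases mem_opBlocks hb with rfl | ⟨k, -, rfl⟩
  · have := exp_opHead_mod (m := m) (W := W) (V := V)
    omega
  · exact Nat.succ_pos _

theorem stem_of_mem_opBlocks (hb : b ∈ opBlocks m W V) : b.stem = W ∨ b.stem = V ∧ V ≠ [] := by
  rcases mem_opBlocks hb with rfl | ⟨k, -, rfl⟩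
  · cases V <;> simp [opHead]
  · exact .inl rfl

theorem nodup_exp_opBlocks : ((opBlocks m W V).map Block.exp).Nodup := by
  rw [opBlocks, List.map_cons, List.map_map, List.nodup_cons]
  refine ⟨fun h => ?_, List.nodup_range.map fun i j hij => ?_⟩
  · obtain ⟨k, hk, hexp⟩ := List.mem_map.1 h
    have hmod : (100 * m + k + 2) % 100 = 1 := (congrArg (· % 100) hexp).trans exp_opHead_mod
    have := List.mem_range.1 hk
    split at this <;> omega
  · simpa using hij

theorem three_le_length_opBlocks : 3 ≤ (opBlocks m W V).length := by
  rw [opBlocks, List.length_cons, List.length_map, List.length_range]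
  split <;> omega

theorem eq_and_eq_of_common_blocks (h₁ : b₁ ∈ opBlocks m W V) (h₂ : b₂ ∈ opBlocks m W V)
    (hne : b₁ ≠ b₂) (h₁' : b₁ ∈ opBlocks m' W' V') (h₂' : b₂ ∈ opBlocks m' W' V') :
    m = m' ∧ W = W' := by
  have hmatch : ∀ b ∈ opBlocks m' W' V', (∃ k < 99, b = ⟨W, 100 * m + k + 2⟩) →
      m = m' ∧ W = W' := by
    rintro b hb ⟨k, hk, rfl⟩
    rcases mem_opBlocks hb with h | ⟨k', hk', h⟩
    · have hmod : (100 * m + k + 2) % 100 = 1 := (congrArg (·.exp % 100) h).trans exp_opHead_mod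
      omega
    · rw [Block.mk.injEq] at h
      exact ⟨by omega, h.1⟩
  rcases mem_opBlocks h₁ with rfl | h
  · rcases mem_opBlocks h₂ with rfl | h
    · exact absurd rfl hne
    · exact hmatch _ h₂' h
  · exact hmatch _ h₁' h

theorem two_mul_sum_range_add (c n : ℕ) :
    2 * ((List.range n).map fun k => c + k).sum + n = n * (2 * c + n) := by
  induction n with
  | zero => simp
  | succ n ih =>
    rw [List.sum_range_succ]
    linarith

theorem length_blockWord_opBlocks_ge :
    99 * W.length + 10000 * m + 5050 ≤ (blockWord y (opBlocks m W V)).length := by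
  have hlen : (blockWord y (opBlocks m W V)).length = (opHead m W V).stem.length +
      (opHead m W V).exp + ((List.range (if V.isEmpty then 98 else 99)).map fun k =>
        W.length + 100 * m + 2 + k).sum := by
    rw [length_blockWord, opBlocks, List.map_cons, List.sum_cons, List.map_map]
    refine congrArg (_ + List.sum ·) (List.map_congr_left fun k _ => ?_)
    change W.length + (100 * m + k + 2) = _
    omega
  have h98 := two_mul_sum_range_add (W.length + 100 * m + 2) 98
  have h99 := two_mul_sum_range_add (W.length + 100 * m + 2) 99
  rw [hlen]
  cases V <;> simp only [opHead, List.isEmpty_nil, List.isEmpty_cons, List.length_cons, if_true,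
    Bool.false_eq_true, if_false] <;> omega

theorem isLong_opBlocks (hm : 1 ≤ m) (hV : V.length ≤ W.length + 1)
    (hn : (blockWord y (opBlocks m W V)).length ≤ 20 * n) : IsLong y (opBlocks m W V) n := by
  have hhead : ((opHead m W V).toWord y).length ≤ W.length + 200 * m + 101 := by
    cases V <;> simp only [opHead, length_toWord, List.length_cons] at hV ⊢ <;> omega
  have hbound : ∀ b ∈ opBlocks m W V,
      b = opHead m W V ∨ (b.toWord y).length ≤ W.length + 100 * m + 100 := by
    intro b hb
    refine (mem_opBlocks hb).imp_right ?_
    rintro ⟨k, hk, rfl⟩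
    simp only [length_toWord]
    omega
  have hlen := (length_blockWord_opBlocks_ge (y := y) (m := m) (W := W) (V := V)).trans hn
  intro b₁ h₁ b₂ h₂ b₃ h₃ hnodup
  simp only [List.nodup_cons, List.mem_cons, List.not_mem_nil, or_false, not_or] at hnodup
  rcases hbound b₁ h₁ with rfl | h₁ <;> rcases hbound b₂ h₂ with rfl | h₂ <;>
    rcases hbound b₃ h₃ with rfl | h₃ <;> first | omega | simp_all

theorem wProd_eq {G : Type*} [Group G] {n : ℕ} (xs : Fin n → G) (y : G) :
    wProd m xs y = (List.ofFn xs).prod * y ^ (100 * m + 1) *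
      ((List.range 99).map fun k => (List.ofFn xs).prod * y ^ (100 * m + k + 2)).prod :=
  List.prod_range_succ' _ 99

theorem isConj_mul_comm {G : Type*} [Group G] (g h : G) : IsConj (g * h) (h * g) :=
  isConj_iff.2 ⟨h, by group⟩

theorem isConj_mk_blockWord_opBlocks {α : Type*} {y : α} {W V : List (α × Bool)} :
    IsConj (FreeGroup.mk V * FreeGroup.of y ^ (100 * m + 1) *
        ((List.range 99).map fun k => FreeGroup.mk W * FreeGroup.of y ^ (100 * m + k + 2)).prod)
      (FreeGroup.mk (blockWord (y, true) (opBlocks m W V))) := by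
  have hword : FreeGroup.mk (blockWord (y, true) (opBlocks m W V)) =
      FreeGroup.mk (opHead m W V).stem * FreeGroup.of y ^ (opHead m W V).exp *
        ((List.range (if V.isEmpty then 98 else 99)).map fun k =>
          FreeGroup.mk W * FreeGroup.of y ^ (100 * m + k + 2)).prod := by
    rw [mk_blockWord, opBlocks, List.map_cons, List.prod_cons, List.map_map]
    rfl
  cases V with
  | cons a V => exact hword ▸ IsConj.refl _
  | nil =>
    have hexp : 200 * m + 101 = 100 * m + 98 + 2 + (100 * m + 1) := by omega
    rw [hword, List.prod_range_succ, ← FreeGroup.one_eq_mk, one_mul, ← mul_assoc]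
    convert isConj_mul_comm _ _ using 1
    simp only [opHead, List.isEmpty_nil, if_true]
    rw [hexp, pow_add _ (100 * m + 98 + 2)]
    simp only [mul_assoc]

end OpBlocks

/-- The word `x₁⋯xₙ` spelled by a tuple of elements of the domain. -/
def argWord {A : Type} {n : ℕ} (as : Fin n → A) : List (GenSym A × Bool) :=
  (List.ofFn fun i => GenSym.elt (as i)).map fun x => (x, true)

open Classical in
/-- The reduced form of the first factor of the relator of the `m`-th symbol at `as`: this is
`x₁⋯xₙ` for a relation symbol, and `a⁻¹x₁⋯xₙ` for a function symbol with value `a` at `as`, the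
factor `a⁻¹` having been moved from the end of the relator to its beginning. -/
noncomputable def firstStem (S : IndexedStructure) (m : ℕ) (as : Fin (S.arity m) → S.A) :
    List (GenSym S.A × Bool) :=
  if S.isFunc m then FreeGroup.reduce ((GenSym.elt (S.funcInterp m as), false) :: argWord as)
  else argWord as

section FirstStem

variable {A : Type} {n m : ℕ} {S : IndexedStructure}

theorem length_argWord (as : Fin n → A) : (argWord as).length = n := by
  simp [argWord]

theorem argWord_injective : Function.Injective (argWord (A := A) (n := n)) := fun _ _ h =>
  funext fun i => GenSym.elt.inj (congrFun (List.ofFn_injective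
    (List.map_injective_iff.2 (Prod.mk_left_injective true) h)) i)

theorem fst_of_mem_argWord {as : Fin n → A} {l : GenSym A × Bool} (hl : l ∈ argWord as) :
    ∃ a, l.1 = .elt a := by
  simp only [argWord, List.mem_map, List.mem_ofFn] at hl
  obtain ⟨_, ⟨i, rfl⟩, rfl⟩ := hl
  exact ⟨as i, rfl⟩

theorem mk_argWord (as : Fin n → A) :
    FreeGroup.mk (argWord as) = (List.ofFn fun i => FreeGroup.of (GenSym.elt (as i))).prod := by
  rw [argWord, mk_map_true, List.map_ofFn]
  rfl

theorem firstStem_sublist (as : Fin (S.arity m) → S.A) :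
    (firstStem S m as).Sublist ((GenSym.elt (S.funcInterp m as), false) :: argWord as) := by
  classical
  rw [firstStem]
  split
  · exact FreeGroup.reduce.red.sublist
  · exact List.sublist_cons_self ..

theorem isReduced_firstStem (as : Fin (S.arity m) → S.A) :
    FreeGroup.IsReduced (firstStem S m as) := by
  classical
  rw [firstStem]
  split
  · rw [← FreeGroup.toWord_mk]
    exact FreeGroup.isReduced_toWord
  · exact isReduced_map_true _

theorem mk_firstStem_of_isFunc (hm : S.isFunc m) (as : Fin (S.arity m) → S.A) :
    FreeGroup.mk (firstStem S m as) =
      (FreeGroup.of (GenSym.elt (S.funcInterp m as)))⁻¹ * FreeGroup.mk (argWord as) := by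
  classical
  rw [firstStem, if_pos hm, FreeGroup.reduce.self]
  rfl

end FirstStem

/-- `IsRelatorBlocks S y B` means that `blockWord (y, true) B` is, up to conjugacy, one of the
relators other than the powers of `f₁` and `f₂`, the marker being the generator `y`. The relators of
the first kind are allowed for more pairs `x`, `y` than those occurring in the presentation, and
those of the second kind for all tuples. -/
inductive IsRelatorBlocks (S : IndexedStructure) :
    GenSym S.A → List (Block (GenSym S.A × Bool)) → Prop
  | chain {x y : GenSym S.A} (hxy : x ≠ y) (hb : y ≠ .b) (helt : ∀ a, y ≠ .elt a) :
    IsRelatorBlocks S y (chainBlocks x)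
  | op {m : ℕ} (hm : 1 ≤ m) (as : Fin (S.arity m) → S.A) :
    IsRelatorBlocks S .b (opBlocks m (argWord as) (firstStem S m as))

namespace IsRelatorBlocks

variable {S : IndexedStructure} {y : GenSym S.A} {B B' : List (Block (GenSym S.A × Bool))}
  {b b₁ b₂ : Block (GenSym S.A × Bool)} {n : ℕ}

theorem marker_ne_elt (h : IsRelatorBlocks S y B) (a : S.A) : y ≠ .elt a := by
  cases h with
  | chain _ _ helt => exact helt a
  | op => simp

theorem stem_cases (h : IsRelatorBlocks S y B) (hb : b ∈ B) :
    (∃ x ≠ y, b.stem = [(x, true)]) ∨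
      b.stem ≠ [] ∧ FreeGroup.IsReduced b.stem ∧ ∀ l ∈ b.stem, ∃ a, l.1 = .elt a := by
  cases h with
  | chain hxy =>
    obtain ⟨k, -, rfl⟩ := mem_chainBlocks.1 hb
    exact .inl ⟨_, hxy, rfl⟩
  | op hm as =>
    refine .inr ?_
    rcases stem_of_mem_opBlocks hb with hstem | ⟨hstem, hne⟩
    · rw [hstem]
      refine ⟨List.ne_nil_of_length_pos ?_, isReduced_map_true _, fun l => fst_of_mem_argWord⟩
      exact (S.arity_pos _ hm).trans_eq (length_argWord as).symm
    · rw [hstem]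
      refine ⟨hne, isReduced_firstStem as, fun l hl => ?_⟩
      rcases List.mem_cons.1 ((firstStem_sublist as).subset hl) with rfl | hl
      · exact ⟨_, rfl⟩
      · exact fst_of_mem_argWord hl

theorem fst_ne_marker (h : IsRelatorBlocks S y B) (hb : b ∈ B) {l : GenSym S.A × Bool}
    (hl : l ∈ b.stem) : l.1 ≠ y := by
  rcases h.stem_cases hb with ⟨x, hx, hstem⟩ | ⟨-, -, hstem⟩
  · rw [hstem, List.mem_singleton] at hl
    exact hl ▸ hx
  · obtain ⟨a, ha⟩ := hstem l hl
    exact ha ▸ (h.marker_ne_elt a).symm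

theorem exp_pos (h : IsRelatorBlocks S y B) (hb : b ∈ B) : 0 < b.exp := by
  cases h with
  | chain =>
    obtain ⟨k, -, rfl⟩ := mem_chainBlocks.1 hb
    exact Nat.pow_pos (Nat.succ_pos _)
  | op => exact exp_pos_of_mem_opBlocks hb

theorem isProper (h : IsRelatorBlocks S y B) (hb : b ∈ B) : b.IsProper (y, true) where
  stem_ne_nil := by
    rcases h.stem_cases hb with ⟨x, -, hstem⟩ | ⟨hne, -, -⟩
    · simp [hstem]
    · exact hne
  marker_notMem := fun hmem => h.fst_ne_marker hb hmem rfl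
  exp_pos := h.exp_pos hb

theorem isBlockList (h : IsRelatorBlocks S y B) : IsBlockList (y, true) B where
  proper := fun _ => h.isProper
  nodup_exp := by
    cases h with
    | chain => exact nodup_exp_chainBlocks
    | op => exact nodup_exp_opBlocks
  three_le_length := by
    cases h with
    | chain => rw [chainBlocks, List.length_map, List.length_range]; norm_num
    | op => exact three_le_length_opBlocks

theorem isLong (h : IsRelatorBlocks S y B) (hn : (blockWord (y, true) B).length ≤ 20 * n) :
    IsLong (y, true) B n := by
  cases h with
  | chain =>
    have := lt_length_blockWord_chainBlocks.trans_le hn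
    exact isLong_chainBlocks (by omega)
  | op hm as =>
    exact isLong_opBlocks hm (by simpa using (firstStem_sublist as).length_le) hn

theorem isLong_of_ne_b (h : IsRelatorBlocks S y B) (hy : y ≠ .b)
    (hn : 3 * (1 + 5000 ^ 2) < n) : IsLong (y, true) B n := by
  cases h with
  | @chain x =>
    have hx : (offset x + 1000) ^ 2 ≤ 5000 ^ 2 :=
      Nat.pow_le_pow_left (Nat.add_le_add_right offset_le 1000) 2
    exact isLong_chainBlocks (by omega)
  | op => exact absurd rfl hy

theorem eq_of_common_blocks (h : IsRelatorBlocks S y B) (h' : IsRelatorBlocks S y B')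
    (h₁ : b₁ ∈ B) (h₂ : b₂ ∈ B) (hne : b₁ ≠ b₂) (h₁' : b₁ ∈ B') (h₂' : b₂ ∈ B') : B = B' := by
  cases h with
  | chain hxy hb =>
    cases h' with
    | chain =>
      obtain ⟨k, -, rfl⟩ := mem_chainBlocks.1 h₁
      obtain ⟨k', -, hk'⟩ := mem_chainBlocks.1 h₁'
      simp_all
    | op => exact absurd rfl hb
  | op hm as =>
    cases h' with
    | chain _ hb => exact absurd rfl hb
    | op hm' as' =>
      obtain ⟨rfl, hW⟩ := eq_and_eq_of_common_blocks h₁ h₂ hne h₁' h₂'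
      rw [argWord_injective hW]

theorem isCyclicallyReduced (h : IsRelatorBlocks S y B) :
    FreeGroup.IsCyclicallyReduced (blockWord (y, true) B) := by
  rw [isCyclicallyReduced_iff_cycleChain]
  refine cycleChain_blockWord (fun _ => h.isProper) (fun _ => rfl) (fun b hb => ?_)
    fun b hb l hl => ⟨fun heq => absurd heq (h.fst_ne_marker hb hl),
      fun heq => absurd heq.symm (h.fst_ne_marker hb hl)⟩
  rcases h.stem_cases hb with ⟨x, -, hstem⟩ | ⟨-, hred, -⟩
  · rw [hstem]
    exact .singleton _
  · exact hred

theorem eq_marker_of_pair_infix (h : IsRelatorBlocks S y B) {r : List (GenSym S.A × Bool)}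
    (hr : r ~r blockWord (y, true) B) {l : GenSym S.A × Bool} (hl : ∀ a, l.1 ≠ .elt a)
    (hpair : [l, l] <:+: r) : l = (y, true) := by
  let rel : GenSym S.A × Bool → GenSym S.A × Bool → Prop :=
    fun c d => c = d → c = (y, true) ∨ ∃ a, c.1 = .elt a
  have hchain : Cycle.Chain rel (blockWord (y, true) B : Cycle (GenSym S.A × Bool)) := by
    refine cycleChain_blockWord (fun _ => h.isProper) (fun _ => .inl rfl) (fun b hb => ?_)
      fun _ _ _ _ => ⟨.inl, fun _ => .inl rfl⟩
    rcases h.stem_cases hb with ⟨x, -, hstem⟩ | ⟨-, -, helt⟩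
    · rw [hstem]
      exact .singleton _
    · exact (List.pairwise_of_forall_mem_list fun c hc _ _ _ => .inr (helt c hc)).isChain
  rw [← Cycle.coe_eq_coe.2 hr] at hchain
  exact (rel_self_of_infix_of_cycleChain hchain hpair rfl).resolve_right fun ⟨a, ha⟩ => hl a ha

end IsRelatorBlocks

/-- `IsCoreRelator S p₁ p₂ y w` means that `w` is the cyclic reduction of a relator with marker
`y`: a power of `f₁` or `f₂`, or a word of the kind described by `IsRelatorBlocks`. -/
inductive IsCoreRelator (S : IndexedStructure) (p₁ p₂ : ℕ) (y : GenSym S.A) :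
    List (GenSym S.A × Bool) → Prop
  | power {p : ℕ} (h : y = .f1 ∧ p = p₁ ∨ y = .f2 ∧ p = p₂) :
    IsCoreRelator S p₁ p₂ y (List.replicate p (y, true))
  | blocks {B : List (Block (GenSym S.A × Bool))} (h : IsRelatorBlocks S y B) :
    IsCoreRelator S p₁ p₂ y (blockWord (y, true) B)

namespace IsCoreRelator

variable {S : IndexedStructure} {p₁ p₂ : ℕ} {y y' : GenSym S.A}
  {w w' r r' u : List (GenSym S.A × Bool)}

theorem marker_ne_elt (h : IsCoreRelator S p₁ p₂ y w) (a : S.A) : y ≠ .elt a := by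
  cases h with
  | power h => rcases h with ⟨rfl, -⟩ | ⟨rfl, -⟩ <;> simp
  | blocks h => exact h.marker_ne_elt a

theorem isCyclicallyReduced (h : IsCoreRelator S p₁ p₂ y w) :
    FreeGroup.IsCyclicallyReduced w := by
  cases h with
  | power =>
    refine ⟨List.isChain_replicate_of_rel _ fun _ => rfl, fun a ha b hb _ => ?_⟩
    rw [List.eq_of_mem_replicate (List.mem_of_getLast? ha),
      List.eq_of_mem_replicate (List.mem_of_head? hb)]
  | blocks h => exact h.isCyclicallyReduced

theorem eq_marker_of_pair_infix (h : IsCoreRelator S p₁ p₂ y w) (hr : r ~r w)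
    {l : GenSym S.A × Bool} (hl : ∀ a, l.1 ≠ .elt a) (hpair : [l, l] <:+: r) : l = (y, true) := by
  cases h with
  | power => exact List.eq_of_mem_replicate (hr.mem_iff.1 (hpair.subset List.mem_cons_self))
  | blocks h => exact h.eq_marker_of_pair_infix hr hl hpair

theorem marker_pair_infix (hp₁ : 20 < p₁) (hp₂ : 20 < p₂) (h : IsCoreRelator S p₁ p₂ y w)
    (hr : r ~r w) (hu : u <+: r) (hlen : r.length ≤ 20 * u.length) :
    [(y, true), (y, true)] <:+: u := by
  cases h with
  | @power p h =>
    obtain rfl : r = List.replicate p (y, true) := eq_replicate_of_isRotated hr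
    rw [List.prefix_replicate_iff] at hu
    rw [List.length_replicate] at hlen
    rw [hu.2]
    exact pair_infix_replicate (by omega)
  | blocks h =>
    exact marker_pair_infix_of_isLong h.isBlockList hr hu (h.isLong (hr.perm.length_eq ▸ hlen))

/- If one word is a power of `f₁` or `f₂`, then `u` is so long that it contains two blocks of the
other one unless that is a power as well, and a block has letters other than the marker. -/
theorem eq_of_common_prefix (hp₁ : 60 * (1 + 5000 ^ 2) < p₁) (hp₂ : 60 * (1 + 5000 ^ 2) < p₂)
    (h : IsCoreRelator S p₁ p₂ y w) (h' : IsCoreRelator S p₁ p₂ y' w') (hr : r ~r w)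
    (hr' : r' ~r w') (hu : u <+: r) (hu' : u <+: r')
    (hlen : r.length ≤ 20 * u.length) : r = r' := by
  have hpair := marker_pair_infix (by omega) (by omega) h hr hu hlen
  obtain rfl : y = y' := congrArg Prod.fst
    (h'.eq_marker_of_pair_infix hr' h.marker_ne_elt (hpair.trans hu'.isInfix))
  rw [hr.perm.length_eq] at hlen
  cases h with
  | @power p h =>
    cases h' with
    | @power p' h' =>
      obtain rfl : p = p' := by
        rcases h with ⟨rfl, rfl⟩ | ⟨rfl, rfl⟩ <;> simpa [eq_comm] using h'
      rw [eq_replicate_of_isRotated hr, eq_replicate_of_isRotated hr']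
    | blocks h' =>
      rw [List.length_replicate] at hlen
      have hy : y ≠ .b := by
        rcases h with ⟨rfl, -⟩ | ⟨rfl, -⟩ <;> simp
      exact absurd hu (not_prefix_of_isRotated_replicate h'.isBlockList hr' hu'
        (h'.isLong_of_ne_b hy (by omega)) hr)
  | blocks h =>
    have hlong := h.isLong hlen
    cases h' with
    | power => exact absurd hu' (not_prefix_of_isRotated_replicate h.isBlockList hr hu hlong hr')
    | blocks h' =>
      exact eq_of_common_prefix_of_isLong h.isBlockList h'.isBlockList
        (fun _ h₁ _ h₂ hne => h.eq_of_common_blocks h' h₁ h₂ hne) hr hr' hu hu' hlong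

theorem lt_length_of_invRev_isRotated (hp₁ : 20 < p₁) (hp₂ : 20 < p₂)
    (h : IsCoreRelator S p₁ p₂ y w) (h' : IsCoreRelator S p₁ p₂ y' w') (hr : r ~r w)
    (hr' : invRev r' ~r w') (hu : u <+: r) (hu' : u <+: r') : 20 * u.length < r.length := by
  by_contra! hlen
  obtain ⟨s, t, hst⟩ := (marker_pair_infix hp₁ hp₂ h hr hu hlen).trans hu'.isInfix
  have hpair : [(y, false), (y, false)] <:+: invRev r' :=
    ⟨invRev t, invRev s, by simp [← hst, invRev]⟩
  simpa using h'.eq_marker_of_pair_infix hr' h.marker_ne_elt hpair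

end IsCoreRelator

section Relators

variable {S : IndexedStructure} {p₁ p₂ : ℕ} {r : FreeGroup (GenSym S.A)}

theorem exists_isCoreRelator_power {y : GenSym S.A} {p : ℕ}
    (h : y = .f1 ∧ p = p₁ ∨ y = .f2 ∧ p = p₂) :
    ∃ w, (∃ y, IsCoreRelator S p₁ p₂ y w) ∧ IsConj (FreeGroup.of y ^ p) (FreeGroup.mk w) :=
  ⟨_, ⟨y, .power h⟩, by
    rw [FreeGroup.of, FreeGroup.pow_mk, List.flatten_replicate_singleton]⟩

theorem exists_isCoreRelator_chainProd {x y : GenSym S.A} (hxy : x ≠ y) (hb : y ≠ .b)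
    (helt : ∀ a, y ≠ .elt a) :
    ∃ w, (∃ y, IsCoreRelator S p₁ p₂ y w) ∧
      IsConj (chainProd (offset x) (FreeGroup.of x) (FreeGroup.of y)) (FreeGroup.mk w) :=
  ⟨_, ⟨y, .blocks (.chain hxy hb helt)⟩, by rw [mk_blockWord_chainBlocks]⟩

theorem isConj_wProd_mul {m : ℕ} (as : Fin (S.arity m) → S.A) (g : FreeGroup (GenSym S.A))
    (hg : FreeGroup.mk (firstStem S m as) = g * FreeGroup.mk (argWord as)) :
    IsConj (wProd m (fun i => FreeGroup.of (GenSym.elt (as i))) (FreeGroup.of .b) * g)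
      (FreeGroup.mk (blockWord (.b, true) (opBlocks m (argWord as) (firstStem S m as)))) := by
  refine (isConj_mul_comm _ g).trans ?_
  convert isConj_mk_blockWord_opBlocks (m := m) using 1
  rw [wProd_eq, hg, mk_argWord]
  simp only [mul_assoc]

theorem exists_isCoreRelator_of_mem_grpRels (hr : r ∈ grpRels S p₁ p₂) :
    ∃ w, (∃ y, IsCoreRelator S p₁ p₂ y w) ∧ IsConj r (FreeGroup.mk w) := by
  rcases hr with
    ((hr | ⟨a, hr | hr⟩) | ⟨m, hm, hfun, as, rfl⟩) | ⟨m, hm, hrel, as, -, rfl⟩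
  · rcases hr with rfl | rfl | hr | hr | hr | hr | hr | hr | hr | hr
    · exact exists_isCoreRelator_power (.inl ⟨rfl, rfl⟩)
    · exact exists_isCoreRelator_power (.inr ⟨rfl, rfl⟩)
    all_goals exact hr ▸ exists_isCoreRelator_chainProd (by simp) (by simp) (by simp)
  · exact hr ▸ exists_isCoreRelator_chainProd (by simp) (by simp) (by simp)
  · exact hr ▸ exists_isCoreRelator_chainProd (by simp) (by simp) (by simp)
  · exact ⟨_, ⟨_, .blocks (.op hm as)⟩,
      isConj_wProd_mul as _ (mk_firstStem_of_isFunc hfun as)⟩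
  · refine ⟨_, ⟨_, .blocks (.op hm as)⟩, ?_⟩
    simpa using isConj_wProd_mul as 1 (by simp [firstStem, hrel])

theorem eq_of_common_prefix_of_mem_symmClosure (hp₁ : 60 * (1 + 5000 ^ 2) < p₁)
    (hp₂ : 60 * (1 + 5000 ^ 2) < p₂) {r r' u : List (GenSym S.A × Bool)}
    (hr : r ∈ symmClosure (grpRels S p₁ p₂)) (hr' : r' ∈ symmClosure (grpRels S p₁ p₂))
    (hu : u <+: r) (hu' : u <+: r') (hlen : r.length ≤ 20 * u.length) : r = r' := by
  let P : Set (List (GenSym S.A × Bool)) := {l | ∃ w, (∃ y, IsCoreRelator S p₁ p₂ y w) ∧ l ~r w}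
  have hmem : ∀ l ∈ symmClosure (grpRels S p₁ p₂), l ∈ P ∨ invRev l ∈ P := fun l =>
    exists_isRotated_of_mem_symmClosure (C := {w | ∃ y, IsCoreRelator S p₁ p₂ y w})
      (fun _ ⟨_, h⟩ => h.isCyclicallyReduced) fun _ => exists_isCoreRelator_of_mem_grpRels
  refine eq_of_common_prefix_of_mem_or_invRev_mem (P := P) ?_ ?_ ?_ (hmem r hr) (hmem r' hr')
    hu hu' hlen
  · rintro l ⟨w, hw, hl⟩ l' hl'
    exact ⟨w, hw, hl'.symm.trans hl⟩
  · rintro r ⟨w, ⟨y, h⟩, hr⟩ r' ⟨w', ⟨y', h'⟩, hr'⟩ u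
    exact h.eq_of_common_prefix hp₁ hp₂ h' hr hr'
  · rintro r ⟨w, ⟨y, h⟩, hr⟩ r' ⟨w', ⟨y', h'⟩, hr'⟩ u
    exact h.lt_length_of_invRev_isRotated (by omega) (by omega) h' hr hr'

end Relators

end SmallCancellation

open SmallCancellation in
/-- The bound on `p₁` and `p₂` makes a twentieth of `f₁ ^ p₁` or `f₂ ^ p₂` longer than three blocks
`x y ^ e` with `e ≤ 5000 ^ 2`. -/
theorem stmt_9_general (S : IndexedStructure) (p₁ p₂ : ℕ)
    (hp₁ : 60 * (1 + 5000 ^ 2) < p₁) (hp₂ : 60 * (1 + 5000 ^ 2) < p₂) :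
    ∀ r ∈ symmClosure (grpRels S p₁ p₂), ∀ u : List (GenSym S.A × Bool),
      IsPiece (symmClosure (grpRels S p₁ p₂)) u → u <+: r →
        20 * u.length < r.length := by
  rintro r hr u ⟨r₁, hr₁, r₂, hr₂, hne, hu₁, hu₂⟩ hu
  by_contra! hlen
  have h₁ : r = r₁ := eq_of_common_prefix_of_mem_symmClosure hp₁ hp₂ hr hr₁ hu hu₁ hlen
  have h₂ : r = r₂ := eq_of_common_prefix_of_mem_symmClosure hp₁ hp₂ hr hr₂ hu hu₂ hlen
  exact hne (h₁.symm.trans h₂)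

/-- the symmetrized closure of the relator set of the presentation of
`G(𝒜)` satisfies the `C'(1/20)` small cancellation condition: for every relator `r` in the
symmetrized set and every piece `u` which is an initial segment of `r`, the word length of
`u` is less than `1/20` times the word length of `r`. -/
theorem stmt_9 (S : IndexedStructure) (p₁ p₂ : ℕ)
    (hp₁ : p₁.Prime) (hp₂ : p₂.Prime) (hne : p₁ ≠ p₂)
    (hbig₁ : 10 ^ 10 < p₁) (hbig₂ : 10 ^ 10 < p₂) :
    ∀ r ∈ symmClosure (grpRels S p₁ p₂), ∀ u : List (GenSym S.A × Bool),
      IsPiece (symmClosure (grpRels S p₁ p₂)) u → u <+: r →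
        20 * u.length < r.length := by
  exact stmt_9_general S p₁ p₂ (by omega) (by omega)
end

section
/- For all elements a₁, a₂ of the tree structure 𝒜, either a₁ belongs to the substructure of 𝒜 generated by {a₂}, or a₂ belongs to the substructure of 𝒜 generated by {a₁}. In particular, 𝒜 is generated by the single element (0,⟨⟩). -/
open FirstOrder FirstOrder.Language

/-- The domain of the tree structure `𝒜`: pairs `(n,τ)` with `n ∈ ℕ` and `τ ∈ ℤ^{<ω}` a
finite sequence of integers. -/
abbrev TreeDom : Type := ℕ × List ℤ

/-- The function symbols of the language `L₀`: a unary symbol `p` and a unary symbol `c i`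
for each integer `i ∈ ℤ`. -/
inductive TreeFn : ℕ → Type
  | p : TreeFn 1
  | c : ℤ → TreeFn 1

/-- The language `L₀`, with unary function symbols `p` and `c_i` (`i ∈ ℤ`) and no relation
symbols. -/
def L0 : Language := ⟨TreeFn, fun _ => Empty⟩

/-- The parent function: `p^𝒜(n,τ) = (n,τ⁻)` if `τ` is nonempty (`τ⁻` being `τ` with its
last entry removed), and `p^𝒜(n,⟨⟩) = (n+1,⟨⟩)`. -/
def pInterp (x : TreeDom) : TreeDom :=
  if x.2 = [] then (x.1 + 1, []) else (x.1, x.2.dropLast)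

/-- The `i`-th child function: `c_i^𝒜(n,τ) = (n, τ⌢i)`, the sequence `τ` with `i`
appended. -/
def cInterp (i : ℤ) (x : TreeDom) : TreeDom := (x.1, x.2 ++ [i])

/-- The tree `L₀`-structure `𝒜` on `TreeDom`. -/
instance treeStructure : L0.Structure TreeDom where
  funMap {_n} f x :=
    match f with
    | TreeFn.p => pInterp (x 0)
    | TreeFn.c i => cInterp i (x 0)
  RelMap {_n} r _ := r.elim

/-! The function `p` undoes every `c i` and sends the root of the `n`-th tree to the root of the
next one. Hence a substructure meeting the `n`-th tree contains all of it, and with it every later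
tree: membership of `(m, σ)` in a substructure containing `(n, τ)` only requires `n ≤ m`.
Comparability of singly generated substructures is then the totality of `≤` on `ℕ`. -/

namespace TreeDom

theorem pInterp_nil (n : ℕ) : pInterp (n, []) = (n + 1, []) := rfl

theorem pInterp_append_singleton (n : ℕ) (τ : List ℤ) (i : ℤ) :
    pInterp (n, τ ++ [i]) = (n, τ) := by
  simp [pInterp]

section Substructure

variable {S : L0.Substructure TreeDom}

theorem pInterp_mem {x : TreeDom} (hx : x ∈ S) : pInterp x ∈ S :=
  S.fun_mem (n := 1) TreeFn.p (fun _ => x) (fun _ => hx)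

theorem cInterp_mem (i : ℤ) {x : TreeDom} (hx : x ∈ S) : cInterp i x ∈ S :=
  S.fun_mem (n := 1) (TreeFn.c i) (fun _ => x) (fun _ => hx)

theorem append_singleton_mem_iff {n : ℕ} {τ : List ℤ} {i : ℤ} :
    (n, τ ++ [i]) ∈ S ↔ (n, τ) ∈ S :=
  ⟨fun h => pInterp_append_singleton n τ i ▸ pInterp_mem h, cInterp_mem i⟩

theorem mem_iff_root_mem {n : ℕ} {τ : List ℤ} : (n, τ) ∈ S ↔ (n, []) ∈ S := by
  induction τ using List.reverseRecOn with
  | nil => rfl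
  | append_singleton τ i ih => exact append_singleton_mem_iff.trans ih

theorem root_mem_of_le {n m : ℕ} (hn : (n, []) ∈ S) (hnm : n ≤ m) : (m, []) ∈ S := by
  induction m, hnm using Nat.le_induction with
  | base => exact hn
  | succ k _ hk => exact pInterp_nil k ▸ pInterp_mem hk

theorem mem_of_fst_le {x y : TreeDom} (hx : x ∈ S) (hxy : x.1 ≤ y.1) : y ∈ S :=
  mem_iff_root_mem.2 (root_mem_of_le (mem_iff_root_mem.1 hx) hxy)

end Substructure

theorem mem_closure_singleton_of_fst_le {x y : TreeDom} (hxy : x.1 ≤ y.1) :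
    y ∈ Substructure.closure L0 ({x} : Set TreeDom) :=
  mem_of_fst_le (Substructure.subset_closure (Set.mem_singleton x)) hxy

end TreeDom

/-- for all elements `a₁, a₂` of the tree structure `𝒜`, either `a₁`
belongs to the substructure generated by `{a₂}`, or `a₂` belongs to the substructure
generated by `{a₁}`.  In particular, `𝒜` is generated by the single element `(0,⟨⟩)`. -/
theorem stmt_10 :
    (∀ a₁ a₂ : TreeDom,
      a₁ ∈ Substructure.closure L0 ({a₂} : Set TreeDom) ∨
      a₂ ∈ Substructure.closure L0 ({a₁} : Set TreeDom)) ∧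
    Substructure.closure L0 ({((0 : ℕ), ([] : List ℤ))} : Set TreeDom) = ⊤ := by
  refine ⟨fun a₁ a₂ => ?_, eq_top_iff.2 fun x _ => ?_⟩
  · exact (le_total a₂.1 a₁.1).imp TreeDom.mem_closure_singleton_of_fst_le
      TreeDom.mem_closure_singleton_of_fst_le
  · exact TreeDom.mem_closure_singleton_of_fst_le (Nat.zero_le x.1)
end

section
/- For every element x of the tree structure 𝒜, either x = c_i^𝒜(y) for some integer i and some element y of 𝒜, or the substructure of 𝒜 generated by {x} is isomorphic (as an L₀-structure) to 𝒜 itself. -/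
open FirstOrder FirstOrder.Language

/-!
If `x = (n, τ)` is not a child of anything, then `τ = ⟨⟩`. The root `(0, ⟨⟩)` generates `𝒜`, since
iterating `p` reaches every `(m, ⟨⟩)` and the `c i` then reach everything below it. The operations
see the first coordinate only through `+ 1`, so `(m, τ) ↦ (m + n, τ)` is an embedding; it sends the
root to `(n, ⟨⟩)`, and hence its range is the substructure generated by `(n, ⟨⟩)`.
-/

theorem range_eq_closure_image {L : Language} {M N : Type*} [L.Structure M] [L.Structure N]
    (f : M →[L] N) {s : Set M} (hs : Substructure.closure L s = ⊤) :
    f.range = Substructure.closure L (f '' s) := by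
  rw [Substructure.closure_image, hs, Hom.range_eq_map]

theorem pInterp_mem {S : L0.Substructure TreeDom} {x : TreeDom} (hx : x ∈ S) : pInterp x ∈ S :=
  S.fun_mem TreeFn.p (fun _ => x) fun _ => hx

theorem cInterp_mem {S : L0.Substructure TreeDom} (i : ℤ) {x : TreeDom} (hx : x ∈ S) :
    cInterp i x ∈ S :=
  S.fun_mem (TreeFn.c i) (fun _ => x) fun _ => hx

theorem closure_root_eq_top : Substructure.closure L0 {((0, []) : TreeDom)} = ⊤ := by
  rw [eq_top_iff]
  rintro ⟨n, τ⟩ -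
  induction τ using List.reverseRecOn with
  | nil =>
    induction n with
    | zero => exact Substructure.subset_closure rfl
    | succ n ih => exact pInterp_mem ih
  | append_singleton τ i ih => exact cInterp_mem i ih

theorem pInterp_add_right (n m : ℕ) (τ : List ℤ) :
    pInterp (m + n, τ) = ((pInterp (m, τ)).1 + n, (pInterp (m, τ)).2) := by
  cases τ with
  | nil => simp [pInterp, Nat.add_right_comm]
  | cons => simp [pInterp]

/-- The embedding `(m, τ) ↦ (m + n, τ)` of `𝒜` into itself. -/
def treeShift (n : ℕ) : TreeDom ↪[L0] TreeDom where
  toFun := Prod.map (· + n) id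
  inj' := (add_left_injective n).prodMap Function.injective_id
  map_fun'
    | TreeFn.p, x => (pInterp_add_right n (x 0).1 (x 0).2).symm
    | TreeFn.c _, _ => rfl
  map_rel' := Empty.rec

theorem treeShift_root (n : ℕ) : treeShift n (0, []) = (n, []) :=
  Prod.ext (Nat.zero_add n) rfl

theorem range_treeShift (n : ℕ) :
    (treeShift n).toHom.range = Substructure.closure L0 {((n, []) : TreeDom)} := by
  rw [range_eq_closure_image _ closure_root_eq_top, Set.image_singleton, Embedding.coe_toHom,
    treeShift_root]

/-- every element `x` of the tree structure `𝒜` either is `c_i^𝒜(y)` for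
some integer `i` and some element `y`, or generates a substructure isomorphic (as an
`L₀`-structure) to `𝒜` itself. -/
theorem stmt_11 (x : TreeDom) :
    (∃ (i : ℤ) (y : TreeDom), cInterp i y = x) ∨
    Nonempty ((Substructure.closure L0 ({x} : Set TreeDom)) ≃[L0] TreeDom) := by
  obtain ⟨n, τ⟩ := x
  rcases List.eq_nil_or_concat' τ with rfl | ⟨σ, i, rfl⟩
  · right
    rw [← range_treeShift]
    exact ⟨(treeShift n).equivRange.symm⟩
  · exact Or.inl ⟨i, (n, σ), rfl⟩
end
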